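/- arXiv:1909.04085 — 2 statements merged into one kernel-verified Lean document; each statement's English description precedes it below -/
import Mathlib

section
/- For every t with √3/2 ≤ t < 1 and every δ > 0, the polynomially convex hull of S_t ∩ B̄(0;δ) contains a one-parameter family of analytic discs with boundary in S_t passing through the origin: there is a continuous map F : (0,1) × 𝔻̄ → ℂ² such that, for each s ∈ (0,1), φ_s := F(s,·) is a nonconstant analytic disc, φ_s(∂𝔻) ⊆ S_t ∩ B̄(0;δ), 0 ∈ φ_s(∂𝔻), φ_s(𝔻̄) is contained in the polynomially convex hull of S_t ∩ B̄(0;δ), and the images φ_s(𝔻̄) for distinct s are distinct. -/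
open Complex ComplexConjugate

/-- The polynomially convex hull of a set `K ⊆ ℂ²`. -/
def polyHull2 (K : Set (ℂ × ℂ)) : Set (ℂ × ℂ) :=
  { z | ∀ p : MvPolynomial (Fin 2) ℂ,
      ‖MvPolynomial.eval (fun i => if i = 0 then z.1 else z.2) p‖ ≤
        sSup ((fun w : ℂ × ℂ =>
          ‖MvPolynomial.eval (fun i => if i = 0 then w.1 else w.2) p‖) '' K) }

/-- A set `K ⊆ ℂ²` is polynomially convex if it equals its polynomially convex hull. -/
def PolyConvex2 (K : Set (ℂ × ℂ)) : Prop := polyHull2 K = K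

/-- The closed Euclidean ball of radius `r` centred at the origin in `ℂ²`. -/
def eClosedBall (r : ℝ) : Set (ℂ × ℂ) := { z | ‖z.1‖ ^ 2 + ‖z.2‖ ^ 2 ≤ r ^ 2 }

/-- The open Euclidean ball of radius `r` centred at the origin in `ℂ²`. -/
def eOpenBall (r : ℝ) : Set (ℂ × ℂ) := { z | ‖z.1‖ ^ 2 + ‖z.2‖ ^ 2 < r ^ 2 }

/-- The surface `S_t = {(z, z²z̄ + t z z̄² + (t²/3) z̄³) : z ∈ ℂ}`. -/
def Sset (t : ℝ) : Set (ℂ × ℂ) :=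
  { zw | ∃ z : ℂ, zw = (z, z ^ 2 * conj z + (t : ℂ) * z * (conj z) ^ 2
      + ((t : ℂ) ^ 2 / 3) * (conj z) ^ 3) }

/-!
Write `S_t` as the graph of `((z + t z̄)³ - z³) / (3 t)`. If `z = i (u + t ū)`, then
`z + t z̄ = i (1 - t²) u`, so a disc with boundary in `S_t` arises from a holomorphic `f` whose
boundary values have the form `u + t ū` with `u³` the boundary values of a holomorphic function.

Such an `f` comes from the hypergeometric equation with parameters `e`, `e + ν`, `1 - ν`, where
`ν = 1 / 3`. Multiplied by `(1 - x) ^ e`, its two Frobenius solutions at the origin extend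
continuously to the closed disc and vanish at `1`, and on the unit circle, after the twist by
`(-x) ^ μ` with `μ` the exponent, both satisfy the same linear differential system, with real
coefficients. Hence the branch of exponent `0` is a real combination `p Ψ + q Ψ̄` of the twisted
branch `Ψ` of exponent `ν` and its conjugate, and `Ψ³` is again holomorphic. Comparing the phases at
the singular point `1` gives `p sin (ν π) = q sin ((e + ν) π)`; for `sin (ν π) = √3 / 2 ≤ t < 1` the
parameter `e` can be chosen such that `q = t p`.

The surface is invariant under the dilations `(z, w) ↦ (σ z, σ³ w)`, whose action on one disc
produces the family, and the maximum principle puts the discs in the polynomial hull of their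
boundaries.
-/

open Set Filter Topology Metric Asymptotics
open FormalMultilinearSeries (ofScalarsSum ofScalarsSum_eq_tsum ofScalars_sum_eq ofScalars_norm
  summable_norm_mul_pow)
open scoped Real

section PowerSeries

variable {α : ℕ → ℝ} {r s : ℝ} {x : ℂ}

lemma norm_smul_pow_le_of_norm_le (hx : ‖x‖ ≤ r) (n : ℕ) : ‖α n • x ^ n‖ ≤ ‖α n‖ * r ^ n := by
  rw [norm_smul, norm_pow]
  gcongr

lemma hasSum_ofScalarsSum (hα : Summable fun n ↦ ‖α n‖ * r ^ n) (hx : ‖x‖ ≤ r) :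
    HasSum (fun n ↦ α n • x ^ n) (ofScalarsSum α x) := by
  rw [ofScalars_sum_eq]
  exact (hα.of_norm_bounded (norm_smul_pow_le_of_norm_le hx)).hasSum

lemma continuousOn_ofScalarsSum (hα : Summable fun n ↦ ‖α n‖ * r ^ n) :
    ContinuousOn (ofScalarsSum (E := ℂ) α) (closedBall 0 r) := by
  rw [ofScalarsSum_eq_tsum]
  exact continuousOn_tsum (fun n ↦ by fun_prop) hα
    fun n w hw ↦ norm_smul_pow_le_of_norm_le (mem_closedBall_zero_iff.1 hw) n

lemma differentiableOn_ofScalarsSum (hα : Summable fun n ↦ ‖α n‖ * r ^ n) :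
    DifferentiableOn ℂ (ofScalarsSum (E := ℂ) α) (ball 0 r) := by
  rw [ofScalarsSum_eq_tsum]
  exact differentiableOn_tsum_of_summable_norm hα (fun n ↦ by fun_prop) isOpen_ball
    fun n w hw ↦ norm_smul_pow_le_of_norm_le (mem_ball_zero_iff.1 hw).le n

lemma hasSum_deriv_ofScalarsSum (hα : Summable fun n ↦ ‖α n‖ * r ^ n) (hx : ‖x‖ < r) :
    HasSum (fun n : ℕ ↦ ((n + 1) * α (n + 1)) • x ^ n) (deriv (ofScalarsSum α) x) := by
  have h := hasSum_deriv_of_summable_norm hα (F := fun n w ↦ α n • w ^ n) (fun n ↦ by fun_prop)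
    isOpen_ball (fun n w hw ↦ norm_smul_pow_le_of_norm_le (mem_ball_zero_iff.1 hw).le n)
    (mem_ball_zero_iff.2 hx)
  rw [← ofScalarsSum_eq_tsum, ← hasSum_nat_add_iff' 1, Finset.sum_range_one] at h
  simp only [pow_zero, deriv_const, sub_zero] at h
  refine h.congr_fun fun n ↦ ?_
  rw [deriv_fun_const_smul _ (by fun_prop), deriv_pow_field, add_tsub_cancel_right, real_smul,
    real_smul]
  push_cast
  ring

lemma hasSum_mul_deriv_ofScalarsSum (hα : Summable fun n ↦ ‖α n‖ * r ^ n) (hx : ‖x‖ < r) :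
    HasSum (fun n : ℕ ↦ (n * α n) • x ^ n) (x * deriv (ofScalarsSum α) x) := by
  rw [← hasSum_nat_add_iff' 1, Finset.sum_range_one, Nat.cast_zero, zero_mul, zero_smul, sub_zero]
  refine ((hasSum_deriv_ofScalarsSum hα hx).mul_left x).congr_fun fun n ↦ ?_
  simp only [real_smul, pow_succ]
  push_cast
  ring

lemma ofScalarsSum_ofReal (α : ℕ → ℝ) (x : ℝ) :
    ofScalarsSum α (x : ℂ) = (ofScalarsSum α x : ℝ) := by
  simp [ofScalars_sum_eq, ofReal_tsum]

/-- The sequence `α 0, α 1 - α 0, α 2 - α 1, …` of coefficients of `(1 - x) ∑ αₙ xⁿ`. -/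
def backwardDiff (α : ℕ → ℝ) : ℕ → ℝ
  | 0 => α 0
  | n + 1 => α (n + 1) - α n

lemma sum_range_succ_backwardDiff (α : ℕ → ℝ) (n : ℕ) :
    ∑ k ∈ Finset.range (n + 1), backwardDiff α k = α n := by
  rw [Finset.sum_range_succ']
  simp only [backwardDiff, Finset.sum_range_sub, sub_add_cancel]

lemma hasSum_backwardDiff (hα : Tendsto α atTop (𝓝 0))
    (hsum : Summable (backwardDiff α)) : HasSum (backwardDiff α) 0 := by
  rw [hsum.hasSum_iff_tendsto_nat, ← tendsto_add_atTop_iff_nat 1]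
  simpa only [sum_range_succ_backwardDiff] using hα

lemma one_sub_mul_ofScalarsSum (hα : Summable fun n ↦ ‖α n‖ * r ^ n) (hx : ‖x‖ ≤ r) :
    (1 - x) * ofScalarsSum α x = ofScalarsSum (backwardDiff α) x := by
  have hsum := hasSum_ofScalarsSum hα hx
  have hshift := (hasSum_nat_add_iff' 1).2 hsum
  rw [ofScalars_sum_eq (backwardDiff α)]
  refine (HasSum.tsum_eq ((hasSum_nat_add_iff' 1).1 ?_)).symm
  convert (hshift.sub (hsum.mul_left x)).congr_fun fun n ↦ ?_ using 1
  · simp only [Finset.sum_range_one, backwardDiff]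
    ring
  · simp only [backwardDiff, real_smul, pow_succ]
    push_cast
    ring

lemma norm_pow_sub_one_le_mul_rpow (hx : ‖x‖ ≤ 1) (hs₀ : 0 ≤ s) (hs₁ : s ≤ 1) (n : ℕ) :
    ‖x ^ n - 1‖ ≤ 2 * ((n : ℝ) ^ s * ‖x - 1‖ ^ s) := by
  have htwo : ‖x ^ n - 1‖ ≤ 2 := by
    have := norm_sub_le (x ^ n) 1
    have := pow_le_one₀ (n := n) (norm_nonneg x) hx
    rw [norm_one, norm_pow] at *
    linarith
  have hlip : ‖x ^ n - 1‖ ≤ n * ‖x - 1‖ := by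
    rw [← mul_geom_sum, norm_mul, mul_comm]
    gcongr
    calc ‖∑ i ∈ Finset.range n, x ^ i‖ ≤ ∑ _i ∈ Finset.range n, (1 : ℝ) :=
          norm_sum_le_of_le _ fun i _ ↦ by
            rw [norm_pow]
            exact pow_le_one₀ (norm_nonneg x) hx
      _ = n := by simp
  rw [← Real.mul_rpow n.cast_nonneg (norm_nonneg _)]
  rcases le_total 1 (n * ‖x - 1‖) with h | h
  · linarith [Real.one_le_rpow h hs₀]
  · have hy : 0 ≤ n * ‖x - 1‖ := by positivity
    have := Real.rpow_le_rpow_of_exponent_ge' hy h hs₀ hs₁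
    rw [Real.rpow_one] at this
    linarith

lemma norm_ofScalarsSum_le_rpow (hα : Summable fun n ↦ ‖α n‖ * (n : ℝ) ^ s)
    (hα₀ : HasSum α 0) (hx : ‖x‖ ≤ 1) (hs₀ : 0 ≤ s) (hs₁ : s ≤ 1) :
    ‖ofScalarsSum α x‖ ≤ 2 * (∑' n, ‖α n‖ * (n : ℝ) ^ s) * ‖x - 1‖ ^ s := by
  have hval : HasSum (fun n ↦ α n • (x ^ n - 1)) (ofScalarsSum α x) := by
    have hsum := hasSum_ofScalarsSum (r := 1) (by simpa using hα₀.summable.abs) hx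
    simpa [smul_sub] using hsum.sub (hasSum_ofReal.2 hα₀)
  have hbound : HasSum (fun n ↦ ‖α n‖ * (n : ℝ) ^ s * (2 * ‖x - 1‖ ^ s))
      (2 * (∑' n, ‖α n‖ * (n : ℝ) ^ s) * ‖x - 1‖ ^ s) := by
    convert hα.hasSum.mul_right (2 * ‖x - 1‖ ^ s) using 1
    · rfl
    · ring
  rw [← hval.tsum_eq]
  refine tsum_of_norm_bounded hbound fun n ↦ ?_
  rw [norm_smul]
  calc ‖α n‖ * ‖x ^ n - 1‖ ≤ ‖α n‖ * (2 * ((n : ℝ) ^ s * ‖x - 1‖ ^ s)) := by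
        gcongr
        exact norm_pow_sub_one_le_mul_rpow hx hs₀ hs₁ n
    _ = _ := by ring

end PowerSeries

section Hypergeometric

variable {a b c r : ℝ} {x : ℂ}

lemma ordinaryHypergeometricCoefficient_zero (a b c : ℝ) :
    ordinaryHypergeometricCoefficient a b c 0 = 1 := by
  simp [ordinaryHypergeometricCoefficient]

lemma ordinaryHypergeometricCoefficient_succ (a b c : ℝ) (n : ℕ) :
    ordinaryHypergeometricCoefficient a b c (n + 1) =
      ordinaryHypergeometricCoefficient a b c n * ((a + n) * (b + n) / ((c + n) * (n + 1))) := by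
  simp only [ordinaryHypergeometricCoefficient, ascPochhammer_succ_eval, Nat.factorial_succ,
    Nat.cast_mul, Nat.cast_succ, mul_inv, div_eq_mul_inv]
  ring

lemma ordinaryHypergeometricCoefficient_pos (ha : 0 < a) (hb : 0 < b) (hc : 0 < c) (n : ℕ) :
    0 < ordinaryHypergeometricCoefficient a b c n := by
  have := ascPochhammer_pos n a ha
  have := ascPochhammer_pos n b hb
  have := ascPochhammer_pos n c hc
  positivity

lemma ordinaryHypergeometricCoefficient_add_one (hc : 0 < c) (a b : ℝ) (n : ℕ) :
    ordinaryHypergeometricCoefficient a b (c + 1) n =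
      c / (c + n) * ordinaryHypergeometricCoefficient a b c n := by
  have h : c * (ascPochhammer ℝ n).eval (c + 1) = (ascPochhammer ℝ n).eval c * (c + n) := by
    rw [← ascPochhammer_succ_eval, ascPochhammer_succ_left]
    simp
  have := ascPochhammer_pos n c hc
  have := ascPochhammer_pos n (c + 1) (by positivity)
  simp only [ordinaryHypergeometricCoefficient]
  field_simp
  linear_combination -(ascPochhammer ℝ n).eval a * (ascPochhammer ℝ n).eval b * h

lemma summable_norm_ordinaryHypergeometricCoefficient (ha : 0 < a) (hb : 0 < b) (hc : 0 < c)
    (hr₀ : 0 ≤ r) (hr : r < 1) :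
    Summable fun n ↦ ‖ordinaryHypergeometricCoefficient a b c n‖ * r ^ n := by
  lift r to NNReal using hr₀
  have hrad : (r : ENNReal) < (ordinaryHypergeometricSeries ℂ a b c).radius := by
    rw [ordinaryHypergeometricSeries_radius_eq_one ℂ a b c fun n ↦ ?_]
    · exact_mod_cast hr
    · have : (0 : ℝ) ≤ n := n.cast_nonneg
      refine ⟨?_, ?_, ?_⟩ <;> linarith
  simpa [ordinaryHypergeometricSeries, ofScalars_norm] using
    summable_norm_mul_pow _ hrad

lemma GammaSeq_eq_div_ascPochhammer (s : ℝ) (n : ℕ) :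
    Real.GammaSeq s n = (n : ℝ) ^ s * n.factorial / ((ascPochhammer ℝ n).eval s * (s + n)) := by
  have hprod : ∀ m : ℕ, ∏ j ∈ Finset.range m, (s + j) = (ascPochhammer ℝ m).eval s := by
    intro m
    induction m with
    | zero => simp
    | succ m ih => rw [Finset.prod_range_succ, ih, ascPochhammer_succ_eval]
  rw [Real.GammaSeq, hprod, ascPochhammer_succ_eval]

lemma tendsto_ordinaryHypergeometricCoefficient_mul_rpow (ha : 0 < a) (hb : 0 < b) (hc : 0 < c) :
    Tendsto (fun n : ℕ ↦ ordinaryHypergeometricCoefficient a b c n * (n : ℝ) ^ (1 + c - a - b))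
      atTop (𝓝 (Real.Gamma c / (Real.Gamma a * Real.Gamma b))) := by
  have hratio (s : ℝ) : Tendsto (fun n : ℕ ↦ (n : ℝ) / (n + s)) atTop (𝓝 1) :=
    tendsto_natCast_div_add_atTop s
  have hlim := ((Real.GammaSeq_tendsto_Gamma c).div ((Real.GammaSeq_tendsto_Gamma a).mul
    (Real.GammaSeq_tendsto_Gamma b)) (mul_pos (Real.Gamma_pos_of_pos ha)
      (Real.Gamma_pos_of_pos hb)).ne').mul (((hratio a).mul (hratio b)).div (hratio c) one_ne_zero)
  rw [mul_one, div_one, mul_one] at hlim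
  refine hlim.congr' ?_
  filter_upwards [eventually_gt_atTop 0] with n hn
  have hn' : (0 : ℝ) < n := by exact_mod_cast hn
  have := ascPochhammer_pos n a ha
  have := ascPochhammer_pos n b hb
  have := ascPochhammer_pos n c hc
  have hpow : (n : ℝ) ^ (1 + c - a - b) = n * (n : ℝ) ^ c / ((n : ℝ) ^ a * (n : ℝ) ^ b) := by
    rw [Real.rpow_sub hn', Real.rpow_sub hn', Real.rpow_one_add' hn'.le (by positivity), div_div]
  simp only [Pi.div_apply, GammaSeq_eq_div_ascPochhammer, hpow, ordinaryHypergeometricCoefficient]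
  field_simp
  ring

lemma ordinaryHypergeometricCoefficient_isBigO (ha : 0 < a) (hb : 0 < b) (hc : 0 < c) :
    ordinaryHypergeometricCoefficient a b c =O[atTop] fun n : ℕ ↦ (n : ℝ) ^ (a + b - c - 1) := by
  have h := ((tendsto_ordinaryHypergeometricCoefficient_mul_rpow ha hb hc).isBigO_one ℝ).mul
    (isBigO_refl (fun n : ℕ ↦ (n : ℝ) ^ (a + b - c - 1)) atTop)
  refine h.congr' ?_ (by simp)
  filter_upwards [eventually_gt_atTop 0] with n hn
  rw [mul_assoc, ← Real.rpow_add (by exact_mod_cast hn)]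
  rw [show 1 + c - a - b + (a + b - c - 1) = 0 by ring, Real.rpow_zero, mul_one]

lemma tendsto_ordinaryHypergeometricCoefficient_zero (ha : 0 < a) (hb : 0 < b) (hc : 0 < c)
    (h : a + b < c + 1) :
    Tendsto (ordinaryHypergeometricCoefficient a b c) atTop (𝓝 0) := by
  refine (ordinaryHypergeometricCoefficient_isBigO ha hb hc).trans_tendsto ?_
  rw [← neg_sub, sub_sub_eq_add_sub]
  exact (tendsto_rpow_neg_atTop (by linarith)).comp tendsto_natCast_atTop_atTop

lemma summable_ordinaryHypergeometricCoefficient (ha : 0 < a) (hb : 0 < b) (hc : 0 < c)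
    (h : a + b < c) :
    Summable (ordinaryHypergeometricCoefficient a b c) :=
  summable_of_isBigO_nat (Real.summable_nat_rpow.2 (by linarith))
    (ordinaryHypergeometricCoefficient_isBigO ha hb hc)

lemma backwardDiff_ordinaryHypergeometricCoefficient_succ (hc : 0 < c) (a b : ℝ) (n : ℕ) :
    backwardDiff (ordinaryHypergeometricCoefficient a b c) (n + 1) =
      ordinaryHypergeometricCoefficient a b (c + 1) n *
        (((1 - a) * (1 - b) * (1 / (n + 1)) - (1 + c - a - b)) / c) := by
  rw [backwardDiff, ordinaryHypergeometricCoefficient_succ,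
    ordinaryHypergeometricCoefficient_add_one hc]
  field_simp
  ring

lemma summable_norm_backwardDiff_ordinaryHypergeometricCoefficient (ha : 0 < a) (hb : 0 < b)
    (hc : 0 < c) {s : ℝ} (hs : 0 ≤ s) (h : a + b + s < c + 1) :
    Summable fun n : ℕ ↦
      ‖backwardDiff (ordinaryHypergeometricCoefficient a b c) n‖ * (n : ℝ) ^ s := by
  rw [← summable_nat_add_iff 1]
  have hfactor : (fun n : ℕ ↦ ((1 - a) * (1 - b) * (1 / ((n : ℝ) + 1)) - (1 + c - a - b)) / c)
      =O[atTop] fun _ : ℕ ↦ (1 : ℝ) :=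
    (((tendsto_one_div_add_atTop_nhds_zero_nat.const_mul _).sub_const _).div_const c).isBigO_one ℝ
  have hshift : (fun n : ℕ ↦ ((n + 1 : ℕ) : ℝ) ^ s) =O[atTop] fun n : ℕ ↦ (n : ℝ) ^ s := by
    refine IsBigO.rpow hs (.of_forall fun n ↦ n.cast_nonneg) (.of_bound 2 ?_)
    filter_upwards [eventually_ge_atTop 1] with n hn
    rw [Real.norm_natCast, Real.norm_natCast]
    exact_mod_cast (by lia : n + 1 ≤ 2 * n)
  refine summable_of_isBigO_nat (Real.summable_nat_rpow (p := a + b - (c + 1) - 1 + s).2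
    (by linarith)) ?_
  have := ((ordinaryHypergeometricCoefficient_isBigO ha hb (c := c + 1) (by positivity)).mul
    hfactor).norm_left.mul hshift
  refine this.congr' ?_ ?_
  · exact .of_forall fun n ↦ by
      simp only [backwardDiff_ordinaryHypergeometricCoefficient_succ hc]
  · filter_upwards [eventually_gt_atTop 0] with n hn
    rw [mul_one, ← Real.rpow_add (by exact_mod_cast hn)]

lemma one_sub_mul_deriv_ordinaryHypergeometric (ha : 0 < a) (hb : 0 < b) (hc : 0 < c)
    (hx : ‖x‖ < 1) :
    (1 - x) * deriv (₂F₁ a b c) x =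
      (a + b - c) * ₂F₁ a b c x + (c - a) * (c - b) / c * ₂F₁ a b (c + 1) x := by
  obtain ⟨r, hxr, hr⟩ := exists_between hx
  have hr₀ := (norm_nonneg x).trans hxr.le
  have hF := summable_norm_ordinaryHypergeometricCoefficient ha hb hc hr₀ hr
  have hM := summable_norm_ordinaryHypergeometricCoefficient ha hb (add_pos hc one_pos) hr₀ hr
  have hleft := (hasSum_deriv_ofScalarsSum hF hxr).sub (hasSum_mul_deriv_ofScalarsSum hF hxr)
  have hright := ((hasSum_ofScalarsSum hF hxr.le).mul_left ((a : ℂ) + b - c)).add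
    ((hasSum_ofScalarsSum hM hxr.le).mul_left (((c : ℂ) - a) * (c - b) / c))
  rw [sub_mul, one_mul]
  refine hleft.unique (hright.congr_fun fun n ↦ ?_)
  rw [ordinaryHypergeometricCoefficient_add_one hc, ordinaryHypergeometricCoefficient_succ]
  have hc' : (c : ℂ) ≠ 0 := by exact_mod_cast hc.ne'
  have hcn : (c : ℂ) + n ≠ 0 := by exact_mod_cast (by positivity : c + n ≠ 0)
  have hn : (n : ℂ) + 1 ≠ 0 := by exact_mod_cast n.succ_ne_zero
  simp only [real_smul]
  push_cast
  field_simp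
  ring

lemma mul_deriv_ordinaryHypergeometric_add_one (ha : 0 < a) (hb : 0 < b) (hc : 0 < c)
    (hx : ‖x‖ < 1) :
    x * deriv (₂F₁ a b (c + 1)) x = c * (₂F₁ a b c x - ₂F₁ a b (c + 1) x) := by
  obtain ⟨r, hxr, hr⟩ := exists_between hx
  have hr₀ := (norm_nonneg x).trans hxr.le
  have hF := summable_norm_ordinaryHypergeometricCoefficient ha hb hc hr₀ hr
  have hM := summable_norm_ordinaryHypergeometricCoefficient ha hb (add_pos hc one_pos) hr₀ hr
  have hright := ((hasSum_ofScalarsSum hF hxr.le).sub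
    (hasSum_ofScalarsSum hM hxr.le)).mul_left (c : ℂ)
  refine (hasSum_mul_deriv_ofScalarsSum hM hxr).unique (hright.congr_fun fun n ↦ ?_)
  rw [ordinaryHypergeometricCoefficient_add_one hc]
  have hcn : (c : ℂ) + n ≠ 0 := by exact_mod_cast (by positivity : c + n ≠ 0)
  simp only [real_smul]
  push_cast
  field_simp
  ring

end Hypergeometric

section BoundaryDerivative

variable {E : Type*} [NormedAddCommGroup E] [NormedSpace ℂ E] {f : ℂ → E} {x : ℂ}

lemma hasDerivWithinAt_closure_of_tendsto_deriv {s : Set ℂ} {d : E} (hf : DifferentiableOn ℂ f s)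
    (hs : Convex ℝ s) (ho : IsOpen s) (hc : ∀ y ∈ closure s, ContinuousWithinAt f s y)
    (hd : Tendsto (deriv f) (𝓝[s] x) (𝓝 d)) : HasDerivWithinAt f d (closure s) x := by
  have hrestrict : Continuous fun w : E ↦
      (ContinuousLinearMap.toSpanSingleton ℂ w).restrictScalars ℝ :=
    (ContinuousLinearMap.continuous_restrictScalars (𝕜 := ℂ) (𝕜' := ℝ)).comp
      (ContinuousLinearMap.toSpanSingletonCLE (𝕜 := ℂ) (E := E)).continuous
  have h := hasFDerivWithinAt_closure_of_tendsto_fderiv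
    (hf.restrictScalars ℝ) hs ho hc (((hrestrict.tendsto d).comp hd).congr' ?_)
  · exact h.of_restrictScalars ℝ rfl
  · filter_upwards [self_mem_nhdsWithin] with y hy
    exact (((hf.differentiableAt (ho.mem_nhds hy)).hasDerivAt.hasFDerivAt).restrictScalars
      ℝ).fderiv.symm

lemma hasDerivWithinAt_closedBall_of_continuousWithinAt {f' : ℂ → E} {r : ℝ}
    (hf : ContinuousOn f (closedBall 0 r)) (hd : DifferentiableOn ℂ f (ball 0 r))
    (hr : r ≠ 0) (hf' : ∀ᶠ y in 𝓝[ball 0 r] x, HasDerivAt f (f' y) y)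
    (hc : ContinuousWithinAt f' (closedBall 0 r) x) :
    HasDerivWithinAt f (f' x) (closedBall 0 r) x := by
  rw [← closure_ball _ hr] at hf ⊢
  refine hasDerivWithinAt_closure_of_tendsto_deriv hd (convex_ball 0 r) isOpen_ball
    (fun y hy ↦ (hf y hy).mono subset_closure) ?_
  exact ((hc.mono ball_subset_closedBall).tendsto).congr' (hf'.mono fun y hy ↦ hy.deriv.symm)

end BoundaryDerivative

section DampedHypergeometric

variable {a b c e : ℝ} {x : ℂ}

lemma one_sub_mem_slitPlane (hx : ‖x‖ ≤ 1) (hx₁ : x ≠ 1) : 1 - x ∈ slitPlane := by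
  by_contra h
  obtain ⟨hre, him⟩ : 1 ≤ x.re ∧ x.im = 0 := by simpa [mem_slitPlane_iff, not_or] using h
  exact hx₁ (Complex.ext (le_antisymm ((re_le_norm x).trans hx) hre) him)

/-- The damped hypergeometric function `(1 - x) ^ e ₂F₁(a, b; c; x)`. It is written as
`(1 - x) ^ (e - 1)` times the power series of `(1 - x) ₂F₁(a, b; c; x)`, which converges absolutely
on the closed unit disc even where the series of `₂F₁` does not. -/
noncomputable def dampedHypergeometric (e a b c : ℝ) (x : ℂ) : ℂ :=
  (1 - x) ^ ((e - 1 : ℝ) : ℂ) *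
    ofScalarsSum (backwardDiff (ordinaryHypergeometricCoefficient a b c)) x

lemma dampedHypergeometric_zero (e a b c : ℝ) : dampedHypergeometric e a b c 0 = 1 := by
  simp [dampedHypergeometric, backwardDiff, ordinaryHypergeometricCoefficient_zero]

lemma dampedHypergeometric_one (he : e ≠ 1) (a b c : ℝ) : dampedHypergeometric e a b c 1 = 0 := by
  have : ((e - 1 : ℝ) : ℂ) ≠ 0 := by exact_mod_cast sub_ne_zero.2 he
  rw [dampedHypergeometric, sub_self, zero_cpow this, zero_mul]

lemma dampedHypergeometric_ofReal_im (e a b c : ℝ) {x : ℝ} (hx : x ≤ 1) :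
    (dampedHypergeometric e a b c x).im = 0 := by
  rw [dampedHypergeometric, ofScalarsSum_ofReal, ← ofReal_one, ← ofReal_sub,
    ← ofReal_cpow (sub_nonneg.2 hx), ← ofReal_mul, ofReal_im]

lemma cpow_sub_one_mul_ofScalarsSum_backwardDiff {α : ℕ → ℝ} {r : ℝ}
    (hα : Summable fun n ↦ ‖α n‖ * r ^ n) (hx : ‖x‖ ≤ r) (hx₁ : x ≠ 1) (e : ℝ) :
    (1 - x) ^ ((e - 1 : ℝ) : ℂ) * ofScalarsSum (backwardDiff α) x =
      (1 - x) ^ (e : ℂ) * ofScalarsSum α x := by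
  have h : 1 - x ≠ 0 := sub_ne_zero.2 hx₁.symm
  rw [← one_sub_mul_ofScalarsSum hα hx, ofReal_sub, ofReal_one, cpow_sub _ _ h, cpow_one,
    ← mul_assoc, div_mul_cancel₀ _ h]

lemma dampedHypergeometric_eq_of_norm_lt_one (ha : 0 < a) (hb : 0 < b) (hc : 0 < c)
    (hx : ‖x‖ < 1) (e : ℝ) :
    dampedHypergeometric e a b c x = (1 - x) ^ (e : ℂ) * ₂F₁ a b c x := by
  obtain ⟨r, hxr, hr⟩ := exists_between hx
  exact cpow_sub_one_mul_ofScalarsSum_backwardDiff (summable_norm_ordinaryHypergeometricCoefficient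
    ha hb hc ((norm_nonneg x).trans hxr.le) hr) hxr.le (by rintro rfl; simp at hx) e

lemma summable_norm_ordinaryHypergeometricCoefficient_mul_one_pow (ha : 0 < a) (hb : 0 < b)
    (hc : 0 < c) (h : a + b < c) :
    Summable fun n ↦ ‖ordinaryHypergeometricCoefficient a b c n‖ * 1 ^ n := by
  simpa using (summable_ordinaryHypergeometricCoefficient ha hb hc h).abs

lemma dampedHypergeometric_eq_of_norm_le_one (ha : 0 < a) (hb : 0 < b) (hc : 0 < c)
    (h : a + b < c) (hx : ‖x‖ ≤ 1) (hx₁ : x ≠ 1) (e : ℝ) :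
    dampedHypergeometric e a b c x = (1 - x) ^ (e : ℂ) * ₂F₁ a b c x :=
  cpow_sub_one_mul_ofScalarsSum_backwardDiff
    (summable_norm_ordinaryHypergeometricCoefficient_mul_one_pow ha hb hc h) hx hx₁ e

lemma exists_norm_dampedHypergeometric_le_rpow (ha : 0 < a) (hb : 0 < b) (hc : 0 < c)
    (h : a + b ≤ c) (he₀ : 0 < e) (he₁ : e < 1) :
    ∃ C, ∀ x : ℂ, ‖x‖ ≤ 1 → ‖dampedHypergeometric e a b c x‖ ≤ C * ‖1 - x‖ ^ (e / 2) := by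
  have hsum := summable_norm_backwardDiff_ordinaryHypergeometricCoefficient ha hb hc
    (s := 1 - e / 2) (by linarith) (by linarith)
  have hzero : HasSum (backwardDiff (ordinaryHypergeometricCoefficient a b c)) 0 :=
    hasSum_backwardDiff (tendsto_ordinaryHypergeometricCoefficient_zero ha hb hc (by linarith))
      (Summable.of_norm (by simpa using
        summable_norm_backwardDiff_ordinaryHypergeometricCoefficient ha hb hc le_rfl (by linarith)))
  refine ⟨2 * ∑' n : ℕ, ‖backwardDiff (ordinaryHypergeometricCoefficient a b c) n‖ *
    (n : ℝ) ^ (1 - e / 2), fun x hx ↦ ?_⟩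
  rcases eq_or_ne x 1 with rfl | hx₁
  · rw [dampedHypergeometric_one he₁.ne, norm_zero]
    positivity
  · have hpos : 0 < ‖1 - x‖ := norm_pos_iff.2 (sub_ne_zero.2 hx₁.symm)
    rw [dampedHypergeometric, norm_mul, norm_cpow_real]
    refine (mul_le_mul_of_nonneg_left
      (norm_ofScalarsSum_le_rpow hsum hzero hx (by linarith) (by linarith))
      (by positivity)).trans_eq ?_
    rw [norm_sub_rev x 1, mul_left_comm, ← Real.rpow_add hpos]
    ring_nf

lemma continuousOn_dampedHypergeometric (ha : 0 < a) (hb : 0 < b) (hc : 0 < c)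
    (h : a + b ≤ c) (he₀ : 0 < e) (he₁ : e < 1) :
    ContinuousOn (dampedHypergeometric e a b c) (closedBall 0 1) := by
  intro x hx
  rcases eq_or_ne x 1 with rfl | hx₁
  · obtain ⟨C, hC⟩ := exists_norm_dampedHypergeometric_le_rpow ha hb hc h he₀ he₁
    rw [ContinuousWithinAt, dampedHypergeometric_one he₁.ne]
    refine squeeze_zero_norm' (a := fun x : ℂ ↦ C * ‖1 - x‖ ^ (e / 2)) ?_ ?_
    · filter_upwards [self_mem_nhdsWithin] with y hy using hC y (mem_closedBall_zero_iff.1 hy)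
    · have : Continuous fun x : ℂ ↦ C * ‖1 - x‖ ^ (e / 2) := by
        have : 0 ≤ e / 2 := by positivity
        fun_prop (disch := assumption)
      convert (this.tendsto 1).mono_left nhdsWithin_le_nhds
      simp [Real.zero_rpow (by positivity : e / 2 ≠ 0)]
  · have hsum : Summable fun n ↦
        ‖backwardDiff (ordinaryHypergeometricCoefficient a b c) n‖ * 1 ^ n := by
      simpa using summable_norm_backwardDiff_ordinaryHypergeometricCoefficient ha hb hc le_rfl
        (by linarith)
    have hslit := one_sub_mem_slitPlane (mem_closedBall_zero_iff.1 hx) hx₁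
    have hcpow : ContinuousAt (fun x : ℂ ↦ (1 - x) ^ ((e - 1 : ℝ) : ℂ)) x :=
      (continuous_const.sub continuous_id).continuousAt.cpow continuousAt_const hslit
    exact hcpow.continuousWithinAt.mul (continuousOn_ofScalarsSum hsum x hx)

lemma hasDerivAt_ordinaryHypergeometric (ha : 0 < a) (hb : 0 < b) (hc : 0 < c) (hx : ‖x‖ < 1) :
    HasDerivAt (₂F₁ a b c) (deriv (₂F₁ a b c) x) x := by
  obtain ⟨r, hxr, hr⟩ := exists_between hx
  have hsum := summable_norm_ordinaryHypergeometricCoefficient ha hb hc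
    ((norm_nonneg x).trans hxr.le) hr
  exact ((differentiableOn_ofScalarsSum hsum).differentiableAt
    (isOpen_ball.mem_nhds (mem_ball_zero_iff.2 hxr))).hasDerivAt

lemma hasDerivAt_dampedHypergeometric_cpow_mul_deriv (ha : 0 < a) (hb : 0 < b) (hc : 0 < c) (e : ℝ)
    (hx : ‖x‖ < 1) :
    HasDerivAt (dampedHypergeometric e a b c)
      (-(e / (1 - x)) * dampedHypergeometric e a b c x +
        (1 - x) ^ (e : ℂ) * deriv (₂F₁ a b c) x) x := by
  have hx₁ : x ≠ 1 := by rintro rfl; simp at hx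
  have hslit := one_sub_mem_slitPlane hx.le hx₁
  have hcpow := ((hasDerivAt_id x).const_sub 1).cpow_const (c := e) hslit
  have heq : dampedHypergeometric e a b c =ᶠ[𝓝 x] fun y ↦ (1 - y) ^ (e : ℂ) * ₂F₁ a b c y := by
    filter_upwards [isOpen_ball.mem_nhds (mem_ball_zero_iff.2 hx)] with y hy
    exact dampedHypergeometric_eq_of_norm_lt_one ha hb hc (mem_ball_zero_iff.1 hy) e
  refine ((hcpow.mul (hasDerivAt_ordinaryHypergeometric ha hb hc hx)).congr_of_eventuallyEq
    heq).congr_deriv ?_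
  simp only [id]
  rw [dampedHypergeometric_eq_of_norm_lt_one ha hb hc hx, cpow_sub _ _ (slitPlane_ne_zero hslit),
    cpow_one]
  ring

lemma hasDerivAt_dampedHypergeometric (ha : 0 < a) (hb : 0 < b) (hc : 0 < c) (e : ℝ)
    (hx : ‖x‖ < 1) :
    HasDerivAt (dampedHypergeometric e a b c)
      (((a + b - c - e) * dampedHypergeometric e a b c x +
        (c - a) * (c - b) / c * dampedHypergeometric e a b (c + 1) x) / (1 - x)) x := by
  have hx₁ : 1 - x ≠ 0 := by rw [sub_ne_zero]; rintro rfl; simp at hx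
  refine (hasDerivAt_dampedHypergeometric_cpow_mul_deriv ha hb hc e hx).congr_deriv ?_
  rw [dampedHypergeometric_eq_of_norm_lt_one ha hb hc hx,
    dampedHypergeometric_eq_of_norm_lt_one ha hb (add_pos hc one_pos) hx, eq_div_iff hx₁, add_mul,
    mul_assoc (_ ^ _), mul_comm (deriv _ x), one_sub_mul_deriv_ordinaryHypergeometric ha hb hc hx]
  field_simp
  ring

lemma differentiableOn_dampedHypergeometric (ha : 0 < a) (hb : 0 < b) (hc : 0 < c) (e : ℝ) :
    DifferentiableOn ℂ (dampedHypergeometric e a b c) (ball 0 1) := fun _ hx ↦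
  (hasDerivAt_dampedHypergeometric ha hb hc e
    (mem_ball_zero_iff.1 hx)).differentiableAt.differentiableWithinAt

lemma hasDerivAt_dampedHypergeometric_add_one (ha : 0 < a) (hb : 0 < b) (hc : 0 < c) (e : ℝ)
    (hx₀ : x ≠ 0) (hx : ‖x‖ < 1) :
    HasDerivAt (dampedHypergeometric e a b (c + 1))
      (-(e / (1 - x)) * dampedHypergeometric e a b (c + 1) x +
        c / x * (dampedHypergeometric e a b c x - dampedHypergeometric e a b (c + 1) x)) x := by
  have hc₁ : 0 < c + 1 := add_pos hc one_pos
  refine (hasDerivAt_dampedHypergeometric_cpow_mul_deriv ha hb hc₁ e hx).congr_deriv ?_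
  rw [dampedHypergeometric_eq_of_norm_lt_one ha hb hc hx,
    dampedHypergeometric_eq_of_norm_lt_one ha hb hc₁ hx,
    ← mul_div_cancel_left₀ (deriv _ x) hx₀, mul_deriv_ordinaryHypergeometric_add_one ha hb hc hx]
  ring

lemma hasDerivWithinAt_dampedHypergeometric (ha : 0 < a) (hb : 0 < b) (hc : 0 < c)
    (h : a + b ≤ c) (he₀ : 0 < e) (he₁ : e < 1) (hx : ‖x‖ ≤ 1) (hx₁ : x ≠ 1) :
    HasDerivWithinAt (dampedHypergeometric e a b c)
      (((a + b - c - e) * dampedHypergeometric e a b c x +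
        (c - a) * (c - b) / c * dampedHypergeometric e a b (c + 1) x) / (1 - x))
      (closedBall 0 1) x := by
  have hf := continuousOn_dampedHypergeometric ha hb hc h he₀ he₁
  have hN := continuousOn_dampedHypergeometric ha hb (add_pos hc one_pos) (by linarith) he₀ he₁
  refine hasDerivWithinAt_closedBall_of_continuousWithinAt hf
    (differentiableOn_dampedHypergeometric ha hb hc e) one_ne_zero (eventually_mem_nhdsWithin.mono
    fun y hy ↦ hasDerivAt_dampedHypergeometric ha hb hc e (mem_ball_zero_iff.1 hy)) ?_
  have hx' := mem_closedBall_zero_iff.2 hx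
  have := hf x hx'
  have := hN x hx'
  exact ContinuousWithinAt.div (by fun_prop) (by fun_prop) (sub_ne_zero.2 hx₁.symm)

lemma hasDerivWithinAt_dampedHypergeometric_add_one (ha : 0 < a) (hb : 0 < b) (hc : 0 < c)
    (h : a + b ≤ c) (he₀ : 0 < e) (he₁ : e < 1) (hx : ‖x‖ ≤ 1) (hx₀ : x ≠ 0) (hx₁ : x ≠ 1) :
    HasDerivWithinAt (dampedHypergeometric e a b (c + 1))
      (-(e / (1 - x)) * dampedHypergeometric e a b (c + 1) x +
        c / x * (dampedHypergeometric e a b c x - dampedHypergeometric e a b (c + 1) x))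
      (closedBall 0 1) x := by
  have hf := continuousOn_dampedHypergeometric ha hb hc h he₀ he₁
  have hc₁ := add_pos hc one_pos
  have hN := continuousOn_dampedHypergeometric ha hb hc₁ (by linarith) he₀ he₁
  refine hasDerivWithinAt_closedBall_of_continuousWithinAt hN
    (differentiableOn_dampedHypergeometric ha hb hc₁ e) one_ne_zero (eventually_mem_nhdsWithin.mp <|
    (eventually_nhdsWithin_of_eventually_nhds (isOpen_ne.mem_nhds hx₀)).mono fun y hy₀ hy ↦
      hasDerivAt_dampedHypergeometric_add_one ha hb hc e hy₀ (mem_ball_zero_iff.1 hy)) ?_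
  have hx' := mem_closedBall_zero_iff.2 hx
  have := hf x hx'
  have := hN x hx'
  have : 1 - x ≠ 0 := sub_ne_zero.2 hx₁.symm
  fun_prop (disch := assumption)

end DampedHypergeometric

section LinearODE

lemma eqOn_zero_of_hasDerivAt_clm {E : Type*} [NormedAddCommGroup E] [NormedSpace ℝ E]
    {A : ℝ → E →L[ℝ] E} {X : ℝ → E} {a b t₀ : ℝ} (hA : ContinuousOn A (Ioo a b))
    (ht₀ : t₀ ∈ Ioo a b) (hX : ∀ t ∈ Ioo a b, HasDerivAt X (A t (X t)) t) (h₀ : X t₀ = 0) :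
    EqOn X 0 (Ioo a b) := by
  intro t ht
  obtain ⟨l, hal, hl⟩ := exists_between (lt_min ht₀.1 ht.1)
  obtain ⟨u, hu, hub⟩ := exists_between (max_lt ht₀.2 ht.2)
  rw [lt_min_iff] at hl
  rw [max_lt_iff] at hu
  have hsub : Icc l u ⊆ Ioo a b := Icc_subset_Ioo hal hub
  obtain ⟨C, hC⟩ := isCompact_Icc.exists_bound_of_continuousOn (hA.mono hsub)
  refine ODE_solution_unique_of_mem_Ioo (v := fun s ↦ A s) (s := fun _ ↦ univ) (K := C.toNNReal)
    (fun s hs ↦ ((A s).lipschitz.weaken ?_).lipschitzOnWith) ⟨hl.1, hu.1⟩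
    (fun s hs ↦ ⟨hX s (hsub (Ioo_subset_Icc_self hs)), mem_univ _⟩)
    (fun s _ ↦ ⟨by simp, mem_univ _⟩) h₀ ⟨hl.2, hu.2⟩
  exact NNReal.le_toNNReal_of_coe_le (hC s (Ioo_subset_Icc_self hs))

variable {A : ℝ → ℂ × ℂ →L[ℝ] ℂ × ℂ} {X₀ X₁ : ℝ → ℂ × ℂ} {a b t₀ p q : ℝ} {w : ℝ → ℝ}
  {L₀ L₁ : ℂ} {l : Filter ℝ}

lemma eqOn_smul_add_smul_star_of_hasDerivAt_clm (hA : ContinuousOn A (Ioo a b))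
    (hA_star : ∀ t z, A t (star z) = star (A t z)) (ht₀ : t₀ ∈ Ioo a b)
    (hX₀ : ∀ t ∈ Ioo a b, HasDerivAt X₀ (A t (X₀ t)) t)
    (hX₁ : ∀ t ∈ Ioo a b, HasDerivAt X₁ (A t (X₁ t)) t)
    (h : X₀ t₀ = p • X₁ t₀ + q • star (X₁ t₀)) : EqOn X₀ (p • X₁ + q • star X₁) (Ioo a b) := by
  refine fun t ht ↦ sub_eq_zero.1 <| eqOn_zero_of_hasDerivAt_clm (X := X₀ - (p • X₁ + q • star X₁))
    hA ht₀ (fun t ht ↦ ?_) (sub_eq_zero.2 h) ht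
  refine ((hX₀ t ht).sub (((hX₁ t ht).const_smul p).add
    ((hX₁ t ht).star.const_smul q))).congr_deriv ?_
  simp [hA_star]

lemma limit_eq_add_mul_conj_of_eqOn [l.NeBot] (hl : Ioo a b ∈ l)
    (h : EqOn X₀ (p • X₁ + q • star X₁) (Ioo a b))
    (hL₀ : Tendsto (fun t ↦ w t • (X₀ t).2) l (𝓝 L₀))
    (hL₁ : Tendsto (fun t ↦ w t • (X₁ t).2) l (𝓝 L₁)) : L₀ = p * L₁ + q * conj L₁ := by
  refine tendsto_nhds_unique hL₀ ((((hL₁.const_mul (p : ℂ)).add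
    (((continuous_conj.tendsto L₁).comp hL₁).const_mul (q : ℂ)))).congr' ?_)
  filter_upwards [hl] with t ht
  rw [h ht]
  simp only [real_smul, Function.comp_apply, map_mul, conj_ofReal, Pi.add_apply, Pi.smul_apply,
    Pi.star_apply, Prod.snd_add, Prod.smul_snd, Prod.snd_star, RCLike.star_def, smul_add]
  ring

/-- The nonvanishing real and imaginary parts of `L₁` guarantee that the real part and the
imaginary part of `X₁`, which are themselves solutions, are both nonzero. -/
lemma exists_eqOn_smul_add_smul_star [l.NeBot] (hl : Ioo a b ∈ l) (hA : ContinuousOn A (Ioo a b))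
    (hA_star : ∀ t z, A t (star z) = star (A t z)) (ht₀ : t₀ ∈ Ioo a b)
    (hX₀ : ∀ t ∈ Ioo a b, HasDerivAt X₀ (A t (X₀ t)) t)
    (hX₁ : ∀ t ∈ Ioo a b, HasDerivAt X₁ (A t (X₁ t)) t)
    (him₀ : (X₀ t₀).1.im = 0) (hre₀ : (X₀ t₀).2.re = 0)
    (him₁ : (X₁ t₀).1.im = 0) (hre₁ : (X₁ t₀).2.re = 0)
    (hL₀ : Tendsto (fun t ↦ w t • (X₀ t).2) l (𝓝 L₀))
    (hL₁ : Tendsto (fun t ↦ w t • (X₁ t).2) l (𝓝 L₁)) (hre : L₁.re ≠ 0) (him : L₁.im ≠ 0) :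
    ∃ p q : ℝ, EqOn X₀ (p • X₁ + q • star X₁) (Ioo a b) ∧ L₀ = p * L₁ + q * conj L₁ := by
  have hself {c : ℝ} (h : X₁ t₀ = (0 : ℝ) • X₁ t₀ + c • star (X₁ t₀)) : L₁ = c * conj L₁ := by
    simpa using limit_eq_add_mul_conj_of_eqOn hl
      (eqOn_smul_add_smul_star_of_hasDerivAt_clm hA hA_star ht₀ hX₁ hX₁ h) hL₁ hL₁
  have hfst : (X₁ t₀).1.re ≠ 0 := fun h ↦ hre <| by
    have := congrArg re <| hself (c := -1) <| by
      simp [Prod.ext_iff, Complex.ext_iff, h, him₁, hre₁]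
    rw [re_ofReal_mul, conj_re] at this
    linarith
  have hsnd : (X₁ t₀).2.im ≠ 0 := fun h ↦ him <| by
    have := congrArg im <| hself (c := 1) <| by
      simp [Prod.ext_iff, Complex.ext_iff, h, him₁, hre₁]
    rw [im_ofReal_mul, conj_im] at this
    linarith
  have hinit : X₀ t₀ =
      (((X₀ t₀).1.re / (X₁ t₀).1.re + (X₀ t₀).2.im / (X₁ t₀).2.im) / 2) • X₁ t₀ +
      (((X₀ t₀).1.re / (X₁ t₀).1.re - (X₀ t₀).2.im / (X₁ t₀).2.im) / 2) • star (X₁ t₀) := by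
    refine Prod.ext (Complex.ext ?_ ?_) (Complex.ext ?_ ?_) <;> simp [him₀, hre₀, him₁, hre₁] <;>
      field_simp <;> ring
  have heq := eqOn_smul_add_smul_star_of_hasDerivAt_clm hA hA_star ht₀ hX₀ hX₁ hinit
  exact ⟨_, _, heq, limit_eq_add_mul_conj_of_eqOn hl heq hL₀ hL₁⟩

end LinearODE

section NegCircle

variable {θ : ℝ}

lemma cos_half_pos (hθ : θ ∈ Ioo (-π) π) : 0 < Real.cos (θ / 2) :=
  Real.cos_pos_of_mem_Ioo ⟨by linarith [hθ.1], by linarith [hθ.2]⟩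

lemma one_sub_circleMap_neg_one (θ : ℝ) :
    1 - circleMap 0 (-1) θ = (2 * Real.cos (θ / 2) : ℝ) * exp ((θ / 2 : ℝ) * I) := by
  have hexp : exp (θ * I) = exp ((θ / 2 : ℝ) * I) * exp ((θ / 2 : ℝ) * I) := by
    rw [← Complex.exp_add]
    push_cast
    ring_nf
  have hcos : ((2 * Real.cos (θ / 2) : ℝ) : ℂ) =
      exp ((θ / 2 : ℝ) * I) + exp (-((θ / 2 : ℝ) * I)) := by
    rw [ofReal_mul, ofReal_cos, Complex.cos, ofReal_ofNat, neg_mul]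
    ring
  rw [circleMap_zero, hexp, hcos, add_mul, ← Complex.exp_add (-_), neg_add_cancel, Complex.exp_zero,
    ofReal_neg, ofReal_one]
  ring

lemma circleMap_neg_one_ne_one (hθ : θ ∈ Ioo (-π) π) : circleMap 0 (-1) θ ≠ 1 := fun h ↦ by
  have := one_sub_circleMap_neg_one θ
  rw [h, sub_self, eq_comm, mul_eq_zero, ofReal_eq_zero] at this
  exact this.elim (mul_pos two_pos (cos_half_pos hθ)).ne' (Complex.exp_ne_zero _)

lemma circleMap_neg_one_mul_I_div_one_sub (hθ : θ ∈ Ioo (-π) π) :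
    circleMap 0 (-1) θ * I / (1 - circleMap 0 (-1) θ) = (Real.tan (θ / 2) - I) / 2 := by
  have hcos : (Real.cos (θ / 2) : ℂ) ≠ 0 := by exact_mod_cast (cos_half_pos hθ).ne'
  have hsq : (Real.cos (θ / 2) : ℂ) ^ 2 + (Real.sin (θ / 2) : ℂ) ^ 2 = 1 := by
    exact_mod_cast Real.cos_sq_add_sin_sq (θ / 2)
  have hsub := one_sub_circleMap_neg_one θ
  rw [Complex.exp_mul_I, ← ofReal_cos, ← ofReal_sin, ofReal_mul, ofReal_ofNat] at hsub
  rw [div_eq_iff (sub_ne_zero.2 (circleMap_neg_one_ne_one hθ).symm),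
    ← sub_sub_self 1 (circleMap _ _ _), sub_sub_self 1 (1 - _), hsub,
    Real.tan_eq_sin_div_cos, ofReal_div]
  field_simp
  linear_combination (-I) * hsq -
    (Real.cos (θ / 2) : ℂ) * (Real.sin (θ / 2) : ℂ) * I_sq

lemma one_sub_circleMap_neg_one_cpow (hθ : θ ∈ Ioo (-π) π) (e : ℝ) :
    (1 - circleMap 0 (-1) θ) ^ (e : ℂ) =
      ((2 * Real.cos (θ / 2)) ^ e : ℝ) * exp ((e / 2 * θ : ℝ) * I) := by
  have hcos : 0 < 2 * Real.cos (θ / 2) := mul_pos two_pos (cos_half_pos hθ)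
  have him : (((θ / 2 : ℝ) : ℂ) * I).im = θ / 2 := by rw [im_ofReal_mul, I_im, mul_one]
  rw [one_sub_circleMap_neg_one,
    cpow_def_of_ne_zero (mul_ne_zero (ofReal_ne_zero.2 hcos.ne') (Complex.exp_ne_zero _)),
    log_ofReal_mul hcos (Complex.exp_ne_zero _),
    log_exp (by rw [him]; linarith [hθ.1, Real.pi_pos]) (by rw [him]; linarith [hθ.2, Real.pi_pos]),
    Real.rpow_def_of_pos hcos, ofReal_exp, ← Complex.exp_add]
  push_cast
  ring_nf

lemma exists_circleMap_neg_one_eq {x : ℂ} (hx : ‖x‖ = 1) :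
    ∃ θ ∈ Icc (-π) π, circleMap 0 (-1) θ = x := by
  refine ⟨arg (-x), ⟨(neg_pi_lt_arg _).le, arg_le_pi _⟩, ?_⟩
  have := norm_mul_exp_arg_mul_I (-x)
  rw [norm_neg, hx, ofReal_one, one_mul] at this
  rw [circleMap_zero, this]
  simp

lemma hasDerivAt_comp_circleMap_neg_one {f : ℂ → ℂ} {f' : ℂ}
    (hf : HasDerivWithinAt f f' (closedBall 0 1) (circleMap 0 (-1) θ)) :
    HasDerivAt (fun θ ↦ f (circleMap 0 (-1) θ)) (circleMap 0 (-1) θ * I * f') θ :=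
  hf.scomp_hasDerivAt θ (hasDerivAt_circleMap 0 (-1) θ) fun θ ↦ by simp

lemma continuous_comp_circleMap_neg_one {f : ℂ → ℂ} (hf : ContinuousOn f (closedBall 0 1)) :
    Continuous fun θ ↦ f (circleMap 0 (-1) θ) :=
  hf.comp_continuous (continuous_circleMap 0 (-1)) fun θ ↦ by simp

end NegCircle

section FrobeniusBranches

/-- The parameters for which the hypergeometric equation with parameters `e`, `e + ν`, `1 - ν` is
studied; `μ` is one of its two exponents `0` and `ν` at the origin. -/
structure AdmissibleExponents (e ν μ : ℝ) : Prop where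
  e_pos : 0 < e
  ν_pos : 0 < ν
  add_le : e + ν ≤ 1 / 2
  μ_eq : μ = 0 ∨ μ = ν

variable {e ν μ θ : ℝ} {f : ℂ → ℂ} {f' : ℂ}

/-- The Frobenius solution with exponent `μ` at the origin of the hypergeometric equation with
parameters `e`, `e + ν`, `1 - ν`, divided by `x ^ μ` and multiplied by `(1 - x) ^ e`. -/
noncomputable def frobeniusBranch (e ν μ : ℝ) : ℂ → ℂ :=
  dampedHypergeometric e (e + μ) (e + ν + μ) (1 - ν + 2 * μ)

/-- The contiguous function of `frobeniusBranch e ν μ`, in terms of which its derivative is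
expressed. -/
noncomputable def contiguousBranch (e ν μ : ℝ) : ℂ → ℂ :=
  dampedHypergeometric e (e + μ) (e + ν + μ) (1 - ν + 2 * μ + 1)

/-- The boundary values of `(-x) ^ μ * f x` on the unit circle, as a function of the argument of
`-x`. -/
noncomputable def twistedTrace (μ : ℝ) (f : ℂ → ℂ) (θ : ℝ) : ℂ :=
  exp ((μ * θ : ℝ) * I) * f (circleMap 0 (-1) θ)

/-- The exponent `ρ` for which the boundary values `Ψ` of both Frobenius branches satisfy
`Ψ' = -ρ * tan (θ / 2) * Ψ + K`, with a flux `K` whose derivative is again a real combination of `Ψ`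
and `K`. -/
noncomputable def dampingExponent (e ν : ℝ) : ℝ := (1 - 2 * ν - e) / 2

/-- The factor of the contiguous function in the derivative of the Frobenius branch. -/
noncomputable def contiguousCoeff (e ν μ : ℝ) : ℝ :=
  (1 - ν + μ - e) * (1 - 2 * ν + μ - e) / (1 - ν + 2 * μ)

/-- The unknown `Ψ' + ρ * tan (θ / 2) * Ψ` which, together with the boundary values `Ψ` of a
Frobenius branch, satisfies a real first order linear system. -/
noncomputable def boundaryFlux (e ν μ θ : ℝ) : ℂ :=
  ((μ + dampingExponent e ν : ℝ) : ℂ) * I * twistedTrace μ (frobeniusBranch e ν μ) θ +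
    (Real.tan (θ / 2) - I) * ((contiguousCoeff e ν μ / 2 : ℝ) : ℂ) *
      twistedTrace μ (contiguousBranch e ν μ) θ

namespace AdmissibleExponents

lemma μ_nonneg (h : AdmissibleExponents e ν μ) : 0 ≤ μ := by
  rcases h.μ_eq with hμ | hμ
  · exact hμ.ge
  · exact hμ ▸ h.ν_pos.le

lemma e_lt_one (h : AdmissibleExponents e ν μ) : e < 1 := by linarith [h.ν_pos, h.add_le]

lemma fst_pos (h : AdmissibleExponents e ν μ) : 0 < e + μ := by linarith [h.e_pos, h.μ_nonneg]

lemma snd_pos (h : AdmissibleExponents e ν μ) : 0 < e + ν + μ := by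
  linarith [h.e_pos, h.ν_pos, h.μ_nonneg]

lemma trd_pos (h : AdmissibleExponents e ν μ) : 0 < 1 - ν + 2 * μ := by
  linarith [h.e_pos, h.μ_nonneg, h.add_le]

lemma fst_add_snd_le (h : AdmissibleExponents e ν μ) : e + μ + (e + ν + μ) ≤ 1 - ν + 2 * μ := by
  linarith [h.add_le]

lemma contiguousCoeff_pos (h : AdmissibleExponents e ν μ) : 0 < contiguousCoeff e ν μ :=
  div_pos (mul_pos (by linarith [h.e_pos, h.μ_nonneg, h.add_le])
    (by linarith [h.e_pos, h.μ_nonneg, h.add_le])) h.trd_pos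

lemma continuousOn_frobeniusBranch (h : AdmissibleExponents e ν μ) :
    ContinuousOn (frobeniusBranch e ν μ) (closedBall 0 1) :=
  continuousOn_dampedHypergeometric h.fst_pos h.snd_pos h.trd_pos h.fst_add_snd_le h.e_pos
    h.e_lt_one

end AdmissibleExponents

lemma hasDerivAt_twistedTrace (μ : ℝ)
    (hf : HasDerivWithinAt f f' (closedBall 0 1) (circleMap 0 (-1) θ)) :
    HasDerivAt (twistedTrace μ f) (μ * I * twistedTrace μ f θ +
      exp ((μ * θ : ℝ) * I) * (circleMap 0 (-1) θ * I * f')) θ := by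
  have hphase : HasDerivAt (fun θ : ℝ ↦ ((μ * θ : ℝ) : ℂ) * I) (μ * I) θ := by
    simpa using (((hasDerivAt_id θ).const_mul μ).ofReal_comp).mul_const I
  refine (hphase.cexp.mul (hasDerivAt_comp_circleMap_neg_one hf)).congr_deriv ?_
  rw [twistedTrace]
  ring

lemma continuous_twistedTrace (μ : ℝ) (hf : ContinuousOn f (closedBall 0 1)) :
    Continuous (twistedTrace μ f) :=
  .mul (by fun_prop) (continuous_comp_circleMap_neg_one hf)

lemma hasDerivAt_tan_half (hθ : θ ∈ Ioo (-π) π) :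
    HasDerivAt (fun θ ↦ Real.tan (θ / 2)) ((1 + Real.tan (θ / 2) ^ 2) / 2) θ := by
  refine ((Real.hasDerivAt_tan (cos_half_pos hθ).ne').comp θ
    ((hasDerivAt_id θ).div_const 2)).congr_deriv ?_
  rw [one_div, ← Real.inv_one_add_tan_sq (cos_half_pos hθ).ne', inv_inv, mul_one_div]

lemma AdmissibleExponents.hasDerivAt_twistedTrace_frobeniusBranch
    (h : AdmissibleExponents e ν μ) (hθ : θ ∈ Ioo (-π) π) :
    HasDerivAt (twistedTrace μ (frobeniusBranch e ν μ))
      (-(dampingExponent e ν * Real.tan (θ / 2) : ℝ) * twistedTrace μ (frobeniusBranch e ν μ) θ +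
        boundaryFlux e ν μ θ) θ := by
  refine (hasDerivAt_twistedTrace μ (hasDerivWithinAt_dampedHypergeometric h.fst_pos h.snd_pos
    h.trd_pos h.fst_add_snd_le h.e_pos h.e_lt_one (by simp)
    (circleMap_neg_one_ne_one hθ))).congr_deriv ?_
  rw [mul_div_left_comm, circleMap_neg_one_mul_I_div_one_sub hθ, boundaryFlux]
  simp only [twistedTrace, frobeniusBranch, contiguousBranch, contiguousCoeff, dampingExponent]
  push_cast
  ring

lemma AdmissibleExponents.hasDerivAt_twistedTrace_contiguousBranch
    (h : AdmissibleExponents e ν μ) (hθ : θ ∈ Ioo (-π) π) :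
    HasDerivAt (twistedTrace μ (contiguousBranch e ν μ))
      ((μ * I - e * ((Real.tan (θ / 2) - I) / 2)) * twistedTrace μ (contiguousBranch e ν μ) θ +
        ((1 - ν + 2 * μ : ℝ) : ℂ) * I * (twistedTrace μ (frobeniusBranch e ν μ) θ -
          twistedTrace μ (contiguousBranch e ν μ) θ)) θ := by
  have h₀ : circleMap 0 (-1) θ ≠ 0 := circleMap_ne_center (by norm_num)
  refine (hasDerivAt_twistedTrace μ (hasDerivWithinAt_dampedHypergeometric_add_one h.fst_pos
    h.snd_pos h.trd_pos h.fst_add_snd_le h.e_pos h.e_lt_one (by simp) h₀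
    (circleMap_neg_one_ne_one hθ))).congr_deriv ?_
  rw [← circleMap_neg_one_mul_I_div_one_sub hθ]
  simp only [twistedTrace, frobeniusBranch, contiguousBranch]
  field_simp
  ring

lemma AdmissibleExponents.hasDerivAt_boundaryFlux
    (h : AdmissibleExponents e ν μ) (hθ : θ ∈ Ioo (-π) π) :
    HasDerivAt (boundaryFlux e ν μ)
      ((((ν + dampingExponent e ν) * Real.tan (θ / 2) : ℝ) : ℂ) * boundaryFlux e ν μ θ +
        ((dampingExponent e ν * (ν + dampingExponent e ν) : ℝ) : ℂ) *
          twistedTrace μ (frobeniusBranch e ν μ) θ) θ := by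
  have hcoeff : contiguousCoeff e ν μ * (1 - ν + 2 * μ) =
      2 * (μ + dampingExponent e ν) * (ν + 2 * dampingExponent e ν) := by
    rw [contiguousCoeff, div_mul_cancel₀ _ h.trd_pos.ne']
    rcases h.μ_eq with rfl | rfl <;> rw [dampingExponent] <;> ring
  refine ((((h.hasDerivAt_twistedTrace_frobeniusBranch hθ).const_mul
    (((μ + dampingExponent e ν : ℝ) : ℂ) * I)).add
    ((((hasDerivAt_tan_half hθ).ofReal_comp.sub_const I).mul_const _).mul
      (h.hasDerivAt_twistedTrace_contiguousBranch hθ)))).congr_deriv ?_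
  rw [boundaryFlux]
  generalize twistedTrace μ (frobeniusBranch e ν μ) θ = Ψ
  generalize twistedTrace μ (contiguousBranch e ν μ) θ = N
  generalize Real.tan (θ / 2) = T
  have hρ : e + 2 * ν + 2 * dampingExponent e ν = 1 := by rw [dampingExponent]; ring
  -- The indicial equation at the origin: this is why the resulting system does not involve `μ`.
  have hμ : μ * (μ - ν) = 0 := by simpa [sub_eq_zero] using h.μ_eq
  replace hcoeff := congrArg ((↑) : ℝ → ℂ) hcoeff
  replace hρ := congrArg ((↑) : ℝ → ℂ) hρ
  replace hμ := congrArg ((↑) : ℝ → ℂ) hμ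
  push_cast at hcoeff hρ hμ ⊢
  linear_combination (I * T - I ^ 2) / 2 * Ψ * hcoeff + I ^ 2 * Ψ * hμ +
    contiguousCoeff e ν μ * N * (I * T / 2 - I ^ 2 / 4 - T ^ 2 / 4) * hρ +
    (contiguousCoeff e ν μ * N / 4 - dampingExponent e ν * (ν + dampingExponent e ν) * Ψ) * I_sq

end FrobeniusBranches

section BoundarySystem

variable {e ν μ θ : ℝ}

lemma ordinaryHypergeometric_one_pos {a b c : ℝ} (ha : 0 < a) (hb : 0 < b) (hc : 0 < c)
    (h : a + b < c) : 0 < ₂F₁ a b c (1 : ℝ) := by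
  have hpos := ordinaryHypergeometricCoefficient_pos ha hb hc
  have hsum := summable_ordinaryHypergeometricCoefficient ha hb hc h
  change 0 < ofScalarsSum (ordinaryHypergeometricCoefficient a b c) 1
  simpa [ofScalars_sum_eq] using hsum.tsum_pos (fun n ↦ (hpos n).le) 0 (hpos 0)

lemma ordinaryHypergeometric_ofReal (a b c x : ℝ) : ₂F₁ a b c (x : ℂ) = (₂F₁ a b c x : ℝ) :=
  ofScalarsSum_ofReal _ x

/-- The first order system in `(Ψ, K)`, where `K` is the flux, satisfied by the boundary values of
both Frobenius branches. Its coefficients are real and do not involve the exponent `μ`. -/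
noncomputable def boundarySystem (e ν θ : ℝ) : ℂ × ℂ →L[ℝ] ℂ × ℂ :=
  Real.tan (θ / 2) • ((-dampingExponent e ν) • ContinuousLinearMap.fst ℝ ℂ ℂ).prod
      ((ν + dampingExponent e ν) • ContinuousLinearMap.snd ℝ ℂ ℂ) +
    (ContinuousLinearMap.snd ℝ ℂ ℂ).prod
      ((dampingExponent e ν * (ν + dampingExponent e ν)) • ContinuousLinearMap.fst ℝ ℂ ℂ)

lemma continuousOn_boundarySystem (e ν : ℝ) :
    ContinuousOn (boundarySystem e ν) (Ioo (-π) π) := by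
  refine .add (.fun_smul (fun θ hθ ↦ ?_) continuousOn_const) continuousOn_const
  exact (hasDerivAt_tan_half hθ).continuousAt.continuousWithinAt

lemma boundarySystem_star (e ν θ : ℝ) (z : ℂ × ℂ) :
    boundarySystem e ν θ (star z) = star (boundarySystem e ν θ z) := by
  ext <;> simp [boundarySystem, -ofReal_tan]

/-- The boundary values of a Frobenius branch together with their flux. -/
noncomputable def boundaryState (e ν μ θ : ℝ) : ℂ × ℂ :=
  (twistedTrace μ (frobeniusBranch e ν μ) θ, boundaryFlux e ν μ θ)

lemma AdmissibleExponents.hasDerivAt_boundaryState (h : AdmissibleExponents e ν μ)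
    (hθ : θ ∈ Ioo (-π) π) :
    HasDerivAt (boundaryState e ν μ) (boundarySystem e ν θ (boundaryState e ν μ θ)) θ := by
  refine ((h.hasDerivAt_twistedTrace_frobeniusBranch hθ).prodMk
    (h.hasDerivAt_boundaryFlux hθ)).congr_deriv (Prod.ext ?_ ?_) <;>
  simp [boundarySystem, boundaryState] <;> ring

lemma twistedTrace_dampedHypergeometric_zero_im (e a b c μ : ℝ) :
    (twistedTrace μ (dampedHypergeometric e a b c) 0).im = 0 := by
  have := dampedHypergeometric_ofReal_im e a b c (x := -1) (by norm_num)
  simpa [twistedTrace, circleMap_zero] using this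

lemma boundaryState_zero_fst_im (e ν μ : ℝ) : (boundaryState e ν μ 0).1.im = 0 :=
  twistedTrace_dampedHypergeometric_zero_im ..

lemma boundaryState_zero_snd_re (e ν μ : ℝ) : (boundaryState e ν μ 0).2.re = 0 := by
  have hf := boundaryState_zero_fst_im e ν μ
  have hN : (twistedTrace μ (contiguousBranch e ν μ) 0).im = 0 :=
    twistedTrace_dampedHypergeometric_zero_im ..
  simp only [boundaryState] at hf
  simp [boundaryState, boundaryFlux, hf, hN]

lemma AdmissibleExponents.twistedTrace_contiguousBranch_eq (h : AdmissibleExponents e ν μ)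
    (hθ : θ ∈ Ioo (-π) π) :
    twistedTrace μ (contiguousBranch e ν μ) θ =
      ((2 * Real.cos (θ / 2)) ^ e : ℝ) * exp (((e / 2 + μ) * θ : ℝ) * I) *
        ₂F₁ (e + μ) (e + ν + μ) (1 - ν + 2 * μ + 1) (circleMap 0 (-1) θ) := by
  have hexp : exp (((e / 2 + μ) * θ : ℝ) * I) =
      exp ((μ * θ : ℝ) * I) * exp ((e / 2 * θ : ℝ) * I) := by
    rw [← Complex.exp_add]
    push_cast
    ring_nf
  rw [twistedTrace, contiguousBranch, dampedHypergeometric_eq_of_norm_le_one h.fst_pos h.snd_pos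
    (by linarith [h.trd_pos]) (by linarith [h.fst_add_snd_le]) (by simp)
    (circleMap_neg_one_ne_one hθ), one_sub_circleMap_neg_one_cpow hθ, hexp]
  ring

lemma AdmissibleExponents.cos_rpow_smul_boundaryFlux (h : AdmissibleExponents e ν μ)
    (hθ : θ ∈ Ioo (-π) π) :
    Real.cos (θ / 2) ^ (1 - e) • boundaryFlux e ν μ θ =
      (Real.cos (θ / 2) ^ (1 - e) : ℝ) * (((μ + dampingExponent e ν : ℝ) : ℂ) * I *
        twistedTrace μ (frobeniusBranch e ν μ) θ) +
      (Real.sin (θ / 2) - Real.cos (θ / 2) * I) * ((contiguousCoeff e ν μ / 2 * 2 ^ e : ℝ) : ℂ) *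
        exp (((e / 2 + μ) * θ : ℝ) * I) *
        ₂F₁ (e + μ) (e + ν + μ) (1 - ν + 2 * μ + 1) (circleMap 0 (-1) θ) := by
  have hcos := cos_half_pos hθ
  have hcos₀ : (Real.cos (θ / 2) : ℂ) ≠ 0 := ofReal_ne_zero.2 hcos.ne'
  have hrpow : ((Real.cos (θ / 2) ^ e : ℝ) : ℂ) ≠ 0 :=
    ofReal_ne_zero.2 (Real.rpow_pos_of_pos hcos e).ne'
  rw [boundaryFlux, h.twistedTrace_contiguousBranch_eq hθ, Real.mul_rpow zero_le_two hcos.le,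
    Real.tan_eq_sin_div_cos, Real.rpow_sub hcos, Real.rpow_one, real_smul]
  simp only [ofReal_mul, ofReal_div]
  generalize ((Real.cos (θ / 2) ^ e : ℝ) : ℂ) = X at *
  field_simp

lemma AdmissibleExponents.tendsto_cos_rpow_smul_boundaryState (h : AdmissibleExponents e ν μ) :
    ∃ C : ℝ, 0 < C ∧ Tendsto (fun θ ↦ Real.cos (θ / 2) ^ (1 - e) • (boundaryState e ν μ θ).2)
      (𝓝[<] π) (𝓝 (C * exp (((e / 2 + μ) * π : ℝ) * I))) := by
  have hc₁ : 0 < 1 - ν + 2 * μ + 1 := by linarith [h.trd_pos]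
  have hlt : e + μ + (e + ν + μ) < 1 - ν + 2 * μ + 1 := by linarith [h.fst_add_snd_le]
  have he : 0 < 1 - e := sub_pos.2 h.e_lt_one
  refine ⟨contiguousCoeff e ν μ / 2 * 2 ^ e * ₂F₁ (e + μ) (e + ν + μ) (1 - ν + 2 * μ + 1) (1 : ℝ),
    mul_pos (mul_pos (half_pos h.contiguousCoeff_pos) (by positivity))
      (ordinaryHypergeometric_one_pos h.fst_pos h.snd_pos hc₁ hlt), ?_⟩
  have hM : Continuous fun θ : ℝ ↦
      ₂F₁ (e + μ) (e + ν + μ) (1 - ν + 2 * μ + 1) (circleMap 0 (-1) θ) :=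
    continuous_comp_circleMap_neg_one (continuousOn_ofScalarsSum
      (summable_norm_ordinaryHypergeometricCoefficient_mul_one_pow h.fst_pos h.snd_pos hc₁ hlt))
  have hΨ := continuous_twistedTrace μ h.continuousOn_frobeniusBranch
  have hcos : Continuous fun θ : ℝ ↦ ((Real.cos (θ / 2) ^ (1 - e) : ℝ) : ℂ) :=
    continuous_ofReal.comp (.rpow_const (by fun_prop) fun _ ↦ .inr he.le)
  have hlim := ((hcos.mul (hΨ.const_mul (((μ + dampingExponent e ν : ℝ) : ℂ) * I))).add
    ((by fun_prop : Continuous fun θ : ℝ ↦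
      ((Real.sin (θ / 2) - Real.cos (θ / 2) * I) * ((contiguousCoeff e ν μ / 2 * 2 ^ e : ℝ) : ℂ) *
        exp (((e / 2 + μ) * θ : ℝ) * I))).mul hM)).continuousWithinAt (s := Iio π) (x := π)
  refine (hlim.tendsto.congr' ?_).trans (le_of_eq ?_)
  · filter_upwards [Ioo_mem_nhdsLT (by linarith [Real.pi_pos] : -π < π)] with θ hθ
    exact (h.cos_rpow_smul_boundaryFlux hθ).symm
  · have h1 : circleMap 0 (-1) π = ((1 : ℝ) : ℂ) := by simp [circleMap_zero, exp_pi_mul_I]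
    simp only [h1, ordinaryHypergeometric_ofReal, Real.cos_pi_div_two, Real.sin_pi_div_two,
      Real.zero_rpow he.ne', Pi.add_apply, Pi.mul_apply]
    push_cast
    ring_nf

end BoundarySystem

section BoundaryRelation

variable {e ν t : ℝ} {n : ℕ}

lemma AdmissibleExponents.diffContOnCl_frobeniusBranch {μ : ℝ} (h : AdmissibleExponents e ν μ) :
    DiffContOnCl ℂ (frobeniusBranch e ν μ) (ball 0 1) :=
  .mk_ball (differentiableOn_dampedHypergeometric h.fst_pos h.snd_pos h.trd_pos e)
    h.continuousOn_frobeniusBranch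

lemma mul_sin_sub_eq_mul_sin_add {C₀ C₁ p q α β : ℝ} (hC₁ : C₁ ≠ 0)
    (h : C₀ * exp (α * I) = p * (C₁ * exp (β * I)) + q * conj (C₁ * exp (β * I))) :
    p * Real.sin (β - α) = q * Real.sin (β + α) := by
  have hre := congrArg re h
  have him := congrArg im h
  simp only [add_re, add_im, re_ofReal_mul, im_ofReal_mul, conj_re, conj_im, exp_ofReal_mul_I_re,
    exp_ofReal_mul_I_im] at hre him
  rw [Real.sin_sub, Real.sin_add]
  refine mul_left_cancel₀ hC₁ ?_
  linear_combination Real.sin α * hre - Real.cos α * him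

lemma exists_eqOn_twistedTrace_frobeniusBranch (he : 0 < e) (hν : 0 < ν) (h : e + ν ≤ 1 / 2) :
    ∃ p q : ℝ, p * Real.sin (ν * π) = q * Real.sin ((e + ν) * π) ∧
      EqOn (twistedTrace 0 (frobeniusBranch e ν 0))
        (p • twistedTrace ν (frobeniusBranch e ν ν) +
          q • star (twistedTrace ν (frobeniusBranch e ν ν))) (Icc (-π) π) := by
  have h₀ : AdmissibleExponents e ν 0 := ⟨he, hν, h, .inl rfl⟩
  have h₁ : AdmissibleExponents e ν ν := ⟨he, hν, h, .inr rfl⟩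
  have hπ := Real.pi_pos
  obtain ⟨C₀, -, hL₀⟩ := h₀.tendsto_cos_rpow_smul_boundaryState
  obtain ⟨C₁, hC₁, hL₁⟩ := h₁.tendsto_cos_rpow_smul_boundaryState
  obtain ⟨p, q, heq, hL⟩ := exists_eqOn_smul_add_smul_star
    (Ioo_mem_nhdsLT (by linarith : -π < π)) (continuousOn_boundarySystem e ν)
    (boundarySystem_star e ν) ⟨neg_lt_zero.2 hπ, hπ⟩
    (fun θ hθ ↦ h₀.hasDerivAt_boundaryState hθ) (fun θ hθ ↦ h₁.hasDerivAt_boundaryState hθ)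
    (boundaryState_zero_fst_im e ν 0) (boundaryState_zero_snd_re e ν 0)
    (boundaryState_zero_fst_im e ν ν) (boundaryState_zero_snd_re e ν ν) hL₀ hL₁
    (by
      rw [re_ofReal_mul, exp_ofReal_mul_I_re]
      exact (mul_pos hC₁ (Real.cos_pos_of_mem_Ioo ⟨by nlinarith, by nlinarith⟩)).ne')
    (by
      rw [im_ofReal_mul, exp_ofReal_mul_I_im]
      exact (mul_pos hC₁ (Real.sin_pos_of_pos_of_lt_pi (by positivity) (by nlinarith))).ne')
  refine ⟨p, q, ?_, ?_⟩
  · convert mul_sin_sub_eq_mul_sin_add hC₁.ne' hL using 3 <;> ring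
  · have hΨ₀ := continuous_twistedTrace 0 h₀.continuousOn_frobeniusBranch
    have hΨ₁ := continuous_twistedTrace ν h₁.continuousOn_frobeniusBranch
    rw [← closure_Ioo (by linarith)]
    exact EqOn.closure (fun θ hθ ↦ congrArg Prod.fst (heq hθ)) hΨ₀
      ((hΨ₁.const_smul p).add (hΨ₁.star.const_smul q))

lemma exists_mul_sin_add_mul_pi_eq_sin (hν : 0 < ν) (hν₂ : ν ≤ 1 / 2) (ht : Real.sin (ν * π) ≤ t)
    (ht₁ : t < 1) : ∃ e, 0 < e ∧ e + ν ≤ 1 / 2 ∧ t * Real.sin ((e + ν) * π) = Real.sin (ν * π) := by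
  have hsin : 0 < Real.sin (ν * π) :=
    Real.sin_pos_of_pos_of_lt_pi (by positivity) (by nlinarith [Real.pi_pos])
  obtain ⟨e, he, heq⟩ := intermediate_value_Ioc (sub_nonneg.2 hν₂)
    (f := fun e ↦ t * Real.sin ((e + ν) * π)) (by fun_prop) (show Real.sin (ν * π) ∈ _ by
      rw [zero_add, sub_add_cancel, one_div_mul_eq_div, Real.sin_pi_div_two, mul_one]
      exact ⟨mul_lt_of_lt_one_left hsin ht₁, ht⟩)
  exact ⟨e, he.1, by linarith [he.2], heq⟩

lemma twistedTrace_zero (f : ℂ → ℂ) (θ : ℝ) : twistedTrace 0 f θ = f (circleMap 0 (-1) θ) := by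
  simp [twistedTrace]

lemma twistedTrace_one_div_pow (hn : n ≠ 0) (f : ℂ → ℂ) (θ : ℝ) :
    twistedTrace (1 / n) f θ ^ n = -circleMap 0 (-1) θ * f (circleMap 0 (-1) θ) ^ n := by
  have hn' : (n : ℂ) ≠ 0 := Nat.cast_ne_zero.2 hn
  rw [twistedTrace, mul_pow, ← Complex.exp_nat_mul, circleMap_zero]
  push_cast
  field_simp

lemma exists_boundary_eq_add_mul_conj (hn : 2 ≤ n) (ht : Real.sin (π / n) ≤ t) (ht₁ : t < 1) :
    ∃ f h : ℂ → ℂ, DiffContOnCl ℂ f (ball 0 1) ∧ DiffContOnCl ℂ h (ball 0 1) ∧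
      f 0 = 1 ∧ f 1 = 0 ∧ h 1 = 0 ∧
      ∀ x : ℂ, ‖x‖ = 1 → ∃ u, f x = u + t * conj u ∧ h x = u ^ n := by
  have hn₀ : n ≠ 0 := by lia
  have hν : 0 < 1 / (n : ℝ) := by positivity
  have hν₂ : 1 / (n : ℝ) ≤ 1 / 2 := one_div_le_one_div_of_le two_pos (by exact_mod_cast hn)
  obtain ⟨e, he, hle, hsin⟩ :=
    exists_mul_sin_add_mul_pi_eq_sin hν hν₂ (by rwa [one_div_mul_eq_div]) ht₁
  obtain ⟨p, q, hpq, heq⟩ := exists_eqOn_twistedTrace_frobeniusBranch he hν hle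
  have hq : q = t * p := by
    have hpos : 0 < Real.sin ((e + 1 / n) * π) :=
      Real.sin_pos_of_pos_of_lt_pi (by positivity) (by nlinarith [Real.pi_pos])
    refine mul_right_cancel₀ hpos.ne' ?_
    rw [← hpq, ← hsin]
    ring
  have he₁ : e ≠ 1 := by linarith
  have h₀ : AdmissibleExponents e (1 / n) 0 := ⟨he, hν, hle, .inl rfl⟩
  have h₁ : AdmissibleExponents e (1 / n) (1 / n) := ⟨he, hν, hle, .inr rfl⟩
  refine ⟨frobeniusBranch e (1 / n) 0,
    fun x ↦ -(p : ℂ) ^ n * (x * frobeniusBranch e (1 / n) (1 / n) x ^ n),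
    h₀.diffContOnCl_frobeniusBranch, ?_, dampedHypergeometric_zero ..,
    dampedHypergeometric_one he₁ .., ?_, fun x hx ↦ ?_⟩
  · have hd := h₁.diffContOnCl_frobeniusBranch
    exact ⟨(differentiableOn_id.mul (hd.differentiableOn.pow n)).const_mul _,
      (continuousOn_id.mul (hd.continuousOn.pow n)).const_mul _⟩
  · simp [frobeniusBranch, dampedHypergeometric_one he₁, hn₀]
  · obtain ⟨θ, hθ, rfl⟩ := exists_circleMap_neg_one_eq hx
    refine ⟨p * twistedTrace (1 / n) (frobeniusBranch e (1 / n) (1 / n)) θ, ?_, ?_⟩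
    · have htrace := heq hθ
      simp only [hq, Pi.add_apply, Pi.smul_apply, Pi.star_apply, real_smul, RCLike.star_def,
        ofReal_mul] at htrace
      rw [← twistedTrace_zero (frobeniusBranch e (1 / n) 0), htrace, map_mul, conj_ofReal]
      ring
    · rw [mul_pow, twistedTrace_one_div_pow hn₀]
      ring

end BoundaryRelation

section AnalyticDisc

variable {t : ℝ}

lemma mem_Sset_iff (ht : t ≠ 0) {zw : ℂ × ℂ} :
    zw ∈ Sset t ↔ zw.2 = ((zw.1 + t * conj zw.1) ^ 3 - zw.1 ^ 3) / (3 * t) := by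
  have ht' : (t : ℂ) ≠ 0 := ofReal_ne_zero.2 ht
  have hcube (z : ℂ) : z ^ 2 * conj z + t * z * conj z ^ 2 + t ^ 2 / 3 * conj z ^ 3 =
      ((z + t * conj z) ^ 3 - z ^ 3) / (3 * t) := by
    field_simp
    ring
  constructor
  · rintro ⟨z, rfl⟩
    exact hcube z
  · exact fun h ↦ ⟨zw.1, Prod.ext rfl (h.trans (hcube zw.1).symm)⟩

lemma exists_analyticDisc (ht₀ : √3 / 2 ≤ t) (ht₁ : t < 1) :
    ∃ φ : ℂ → ℂ × ℂ, DiffContOnCl ℂ φ (ball 0 1) ∧ φ 1 = 0 ∧ (φ 0).1 ≠ 0 ∧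
      ∀ x, ‖x‖ = 1 → φ x ∈ Sset t := by
  obtain ⟨f, h, hf, hh, hf₀, hf₁, hh₁, hbd⟩ := exists_boundary_eq_add_mul_conj (n := 3)
    (by norm_num) (by exact_mod_cast Real.sin_pi_div_three.trans_le ht₀) ht₁
  have ht : t ≠ 0 := (lt_of_lt_of_le (by positivity) ht₀).ne'
  refine ⟨fun x ↦ (I * f x, (f x ^ 3 - (1 - t ^ 2) ^ 3 * h x) * (I / (3 * t))),
    ⟨?_, ?_⟩, ?_, ?_, fun x hx ↦ ?_⟩
  · exact (hf.differentiableOn.const_mul I).prodMk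
      (((hf.differentiableOn.pow 3).sub (hh.differentiableOn.const_mul _)).mul_const _)
  · exact (hf.continuousOn.const_mul I).prodMk
      (((hf.continuousOn.pow 3).sub (hh.continuousOn.const_mul _)).mul_const _)
  · simp [hf₁, hh₁]
  · simp [hf₀]
  · obtain ⟨u, hfu, hhu⟩ := hbd x hx
    have hsum : I * f x + t * conj (I * f x) = I * ((1 - t ^ 2) * u) := by
      simp only [hfu, map_mul, map_add, conj_I, conj_ofReal, conj_conj]
      ring
    have hI : I ^ 3 = -I := I_pow_three
    rw [mem_Sset_iff ht]
    simp only [hsum, hhu, mul_pow, hI]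
    ring

end AnalyticDisc

section PolynomialHull

lemma differentiable_eval_mvPolynomial (p : MvPolynomial (Fin 2) ℂ) :
    Differentiable ℂ fun w : ℂ × ℂ ↦ p.eval fun i ↦ if i = 0 then w.1 else w.2 := by
  induction p using MvPolynomial.induction_on with
  | C a => simp only [MvPolynomial.eval_C, differentiable_const]
  | add p q hp hq =>
    simp only [map_add]
    exact hp.add hq
  | mul_X p i hp =>
    simp only [map_mul, MvPolynomial.eval_X]
    exact hp.mul (by split_ifs <;> fun_prop)

lemma mem_polyHull2_of_diffContOnCl {E : Type*} [NormedAddCommGroup E] [NormedSpace ℂ E]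
    [Nontrivial E] {K : Set (ℂ × ℂ)} (hK : Bornology.IsBounded K) {U : Set E}
    (hU : Bornology.IsBounded U) {φ : E → ℂ × ℂ} (hφ : DiffContOnCl ℂ φ U)
    (hφK : MapsTo φ (frontier U) K) {x : E} (hx : x ∈ closure U) : φ x ∈ polyHull2 K := by
  intro p
  have hp := differentiable_eval_mvPolynomial p
  have hbdd : BddAbove ((fun w : ℂ × ℂ ↦ ‖p.eval fun i ↦ if i = 0 then w.1 else w.2‖) '' K) :=
    (hK.isCompact_closure.bddAbove_image hp.continuous.norm.continuousOn).mono
      (image_mono subset_closure)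
  exact norm_le_of_forall_mem_frontier_norm_le hU (hp.comp_diffContOnCl hφ)
    (fun y hy ↦ le_csSup hbdd ⟨φ y, hφK hy, rfl⟩) hx

lemma isBounded_eClosedBall (r : ℝ) : Bornology.IsBounded (eClosedBall r) := by
  refine isBounded_iff_forall_norm_le.2 ⟨|r|, fun w (hw : ‖w.1‖ ^ 2 + ‖w.2‖ ^ 2 ≤ r ^ 2) ↦ ?_⟩
  exact max_le (abs_norm w.1 ▸ sq_le_sq.1 (by linarith [sq_nonneg ‖w.2‖]))
    (abs_norm w.2 ▸ sq_le_sq.1 (by linarith [sq_nonneg ‖w.1‖]))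

end PolynomialHull

section WeightedDilation

/-- The dilation of `ℂ²` with weights `(1, 3)`. The surface `S_t` is the graph of a homogeneous
cubic, so it is invariant under real weighted dilations. -/
def weightedDilation (σ : ℝ) (w : ℂ × ℂ) : ℂ × ℂ := (σ * w.1, σ ^ 3 * w.2)

lemma continuous_weightedDilation_uncurry :
    Continuous fun p : ℝ × (ℂ × ℂ) ↦ weightedDilation p.1 p.2 := by
  unfold weightedDilation
  fun_prop

lemma differentiable_weightedDilation (σ : ℝ) : Differentiable ℂ (weightedDilation σ) := by
  unfold weightedDilation
  fun_prop

lemma weightedDilation_mem_Sset {t : ℝ} (σ : ℝ) {w : ℂ × ℂ} (hw : w ∈ Sset t) :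
    weightedDilation σ w ∈ Sset t := by
  obtain ⟨z, rfl⟩ := hw
  refine ⟨σ * z, Prod.ext rfl ?_⟩
  simp only [weightedDilation, map_mul, conj_ofReal]
  ring

lemma exists_forall_weightedDilation_mem_eClosedBall {K : Set (ℂ × ℂ)} (hK : IsCompact K)
    {δ : ℝ} (hδ : 0 < δ) :
    ∃ ε > 0, ∀ σ, |σ| < ε → ∀ w ∈ K, weightedDilation σ w ∈ eClosedBall δ := by
  have hev : ∀ᶠ σ in 𝓝 (0 : ℝ), ∀ w ∈ K,
      ‖(weightedDilation σ w).1‖ ^ 2 + ‖(weightedDilation σ w).2‖ ^ 2 < δ ^ 2 := by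
    refine hK.eventually_forall_of_forall_eventually fun w _ ↦ ?_
    have hc : Continuous fun p : ℝ × (ℂ × ℂ) ↦
        ‖(weightedDilation p.1 p.2).1‖ ^ 2 + ‖(weightedDilation p.1 p.2).2‖ ^ 2 :=
      (continuous_weightedDilation_uncurry.fst.norm.pow 2).add
        (continuous_weightedDilation_uncurry.snd.norm.pow 2)
    exact hc.tendsto (0, w) |>.eventually_lt_const (by simpa [weightedDilation] using pow_pos hδ 2)
  obtain ⟨ε, hε, h⟩ := Metric.eventually_nhds_iff.1 hev
  exact ⟨ε, hε, fun σ hσ w hw ↦ (h (by simpa using hσ) w hw).le⟩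

lemma injOn_image_weightedDilation {K : Set (ℂ × ℂ)} (hK : Bornology.IsBounded K)
    {w : ℂ × ℂ} (hw : w ∈ K) (hw₁ : w.1 ≠ 0) :
    InjOn (fun σ ↦ weightedDilation σ '' K) (Ioi 0) := by
  set R := sSup ((fun w : ℂ × ℂ ↦ ‖w.1‖) '' K)
  have hbdd : BddAbove ((fun w : ℂ × ℂ ↦ ‖w.1‖) '' K) :=
    (hK.isCompact_closure.bddAbove_image continuous_fst.norm.continuousOn).mono
      (image_mono subset_closure)
  have hR : 0 < R := (norm_pos_iff.2 hw₁).trans_le (le_csSup hbdd ⟨w, hw, rfl⟩)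
  have hsup (σ : ℝ) (hσ : 0 < σ) :
      sSup ((fun w : ℂ × ℂ ↦ ‖w.1‖) '' (weightedDilation σ '' K)) = σ * R := by
    rw [← smul_eq_mul, ← Real.sSup_smul_of_nonneg hσ.le, ← image_smul, image_image, image_image]
    simp [weightedDilation, abs_of_pos hσ]
  intro σ₁ h₁ σ₂ h₂ h
  refine mul_right_cancel₀ hR.ne' ?_
  rw [← hsup σ₁ h₁, ← hsup σ₂ h₂]
  exact congrArg (fun L ↦ sSup ((fun w : ℂ × ℂ ↦ ‖w.1‖) '' L)) h

end WeightedDilation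

/-- for `√3/2 ≤ t < 1` and every `δ > 0`, the polynomially convex hull of
`S_t ∩ B̄(0;δ)` contains a one-parameter family of analytic discs with boundary in `S_t`
passing through the origin. -/
theorem stmt_9 (t : ℝ) (ht0 : Real.sqrt 3 / 2 ≤ t) (ht1 : t < 1) (δ : ℝ) (hδ : 0 < δ) :
    ∃ F : ℝ × ℂ → ℂ × ℂ,
      ContinuousOn F (Set.Ioo (0 : ℝ) 1 ×ˢ Metric.closedBall (0 : ℂ) 1) ∧
      (∀ s ∈ Set.Ioo (0 : ℝ) 1,
        -- `φ_s` is holomorphic on the open unit disc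
        DifferentiableOn ℂ (fun ζ => F (s, ζ)) (Metric.ball (0 : ℂ) 1) ∧
        -- `φ_s` is nonconstant
        (¬ ∀ ζ₁ ∈ Metric.closedBall (0 : ℂ) 1, ∀ ζ₂ ∈ Metric.closedBall (0 : ℂ) 1,
            F (s, ζ₁) = F (s, ζ₂)) ∧
        -- `φ_s(∂𝔻) ⊆ S_t ∩ B̄(0;δ)`
        (∀ ζ : ℂ, ‖ζ‖ = 1 → F (s, ζ) ∈ Sset t ∩ eClosedBall δ) ∧
        -- `0 ∈ φ_s(∂𝔻)`
        (∃ ζ : ℂ, ‖ζ‖ = 1 ∧ F (s, ζ) = 0) ∧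
        -- `φ_s(𝔻̄)` lies in the polynomially convex hull of `S_t ∩ B̄(0;δ)`
        (∀ ζ ∈ Metric.closedBall (0 : ℂ) 1, F (s, ζ) ∈ polyHull2 (Sset t ∩ eClosedBall δ))) ∧
      -- the images for distinct parameters are distinct
      (∀ s₁ ∈ Set.Ioo (0 : ℝ) 1, ∀ s₂ ∈ Set.Ioo (0 : ℝ) 1, s₁ ≠ s₂ →
        (fun ζ => F (s₁, ζ)) '' Metric.closedBall (0 : ℂ) 1 ≠
          (fun ζ => F (s₂, ζ)) '' Metric.closedBall (0 : ℂ) 1) := by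
  obtain ⟨φ, hφ, hφ₁, hφ₀, hφS⟩ := exists_analyticDisc ht0 ht1
  have hφc : ContinuousOn φ (closedBall 0 1) := hφ.continuousOn_ball
  have hK := (isCompact_closedBall (0 : ℂ) 1).image_of_continuousOn hφc
  have h₀ : (0 : ℂ) ∈ closedBall (0 : ℂ) 1 := mem_closedBall_self zero_le_one
  obtain ⟨ε, hε, hball⟩ := exists_forall_weightedDilation_mem_eClosedBall hK hδ
  have hdisc (s) (hs : s ∈ Ioo (0 : ℝ) 1) (ζ : ℂ) (hζ : ‖ζ‖ = 1) :
      weightedDilation (s * ε) (φ ζ) ∈ Sset t ∩ eClosedBall δ :=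
    ⟨weightedDilation_mem_Sset _ (hφS ζ hζ), hball (s * ε)
      (by simpa [abs_of_pos, hs.1, hε] using hs.2) _ ⟨ζ, by simp [hζ], rfl⟩⟩
  refine ⟨fun p ↦ weightedDilation (p.1 * ε) (φ p.2), ?_, fun s hs ↦ ⟨?_, fun h ↦ ?_, hdisc s hs,
    ⟨1, norm_one, by simp [hφ₁, weightedDilation]⟩, fun ζ hζ ↦ ?_⟩,
    fun s₁ h₁ s₂ h₂ hne h ↦ hne ?_⟩
  · exact continuous_weightedDilation_uncurry.comp_continuousOn
      ((continuous_fst.mul_const ε).continuousOn.prodMk (hφc.comp continuousOn_snd fun _ hp ↦ hp.2))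
  · exact (differentiable_weightedDilation (s * ε)).comp_differentiableOn hφ.differentiableOn
  · have hfst := congrArg Prod.fst (h 0 h₀ 1 (by simp))
    simp [weightedDilation, hφ₁, hφ₀, hs.1.ne', hε.ne'] at hfst
  · rw [← closure_ball (0 : ℂ) one_ne_zero] at hζ
    refine mem_polyHull2_of_diffContOnCl ((isBounded_eClosedBall δ).subset inter_subset_right)
      isBounded_ball ((differentiable_weightedDilation _).comp_diffContOnCl hφ) (fun x hx ↦ ?_) hζ
    exact hdisc s hs x (by simpa [frontier_ball (0 : ℂ) one_ne_zero] using hx)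
  · refine mul_right_cancel₀ hε.ne' (injOn_image_weightedDilation hK.isBounded ⟨0, h₀, rfl⟩ hφ₀
      (mul_pos h₁.1 hε) (mul_pos h₂.1 hε) ?_)
    simpa only [image_image] using h
end

section
/- Let t > √(15 − √33)/(2√2), let F be a C^∞-smooth complex-valued function on an open neighbourhood U of 0 in ℂ whose partial derivatives of all orders ≤ 3 vanish at 0 (so F(z) = o(|z|³) as z → 0), and let M_t = {(z, p_t(z,z̄) + F(z)) : z ∈ U} with p_t(z,z̄) = z²z̄ + t z z̄² + (t²/3) z̄³. Then M_t is locally polynomially convex at the origin: there exists r > 0 such that M_t ∩ B̄(0;r) is polynomially convex. -/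
open Complex ComplexConjugate

/-- The surface `M_t = {(z, z²z̄ + t z z̄² + (t²/3) z̄³ + F(z)) : z ∈ U}`. -/
def Mset (t : ℝ) (U : Set ℂ) (F : ℂ → ℂ) : Set (ℂ × ℂ) :=
  { zw | ∃ z ∈ U, zw = (z, z ^ 2 * conj z + (t : ℂ) * z * (conj z) ^ 2
      + ((t : ℂ) ^ 2 / 3) * (conj z) ^ 3 + F z) }

/-!
On `M_t` the polynomial `z ^ 3 + 3 * t * w` equals `(z + t * z̄) ^ 3 + 3 * t * F z`, so over a small
compact piece `K` of `M_t` it has a continuous cube root `ζ = z + t * z̄ + o(z)`, strictly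
differentiable at the origin. With `ω` a primitive cube root of unity, a suitable form
`x * y + α * x ^ 2 + β * y ^ 2` takes values in a sector `|arg| < θ` at `(z, ζ)` and off that sector
at `(z, ω * ζ)` and `(z, ω ^ 2 * ζ)`; this is where the bound on `t` enters. Let `A` be the uniform
closure of the polynomials on `K`. In the algebra generated by `A` and the cube roots on the
three-sheeted cover of `K`, a square root cut along the edges of the sector isolates the sheet of
`ζ`, and summing over the sheets gives `ζ ∈ A`.

Now `G = ζ - z` is a small perturbation of `t * z̄`, so `Re ((a - b) * (G a - G b))` is at least a
multiple of `‖a - b‖ ^ 2`. This keeps `(a - b) * (G a - G b) + ε` away from zero, so `A` contains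
regularizations of the Cauchy kernels `a ↦ (a - b)⁻¹`, whose integral over `b` is `π * ā`. Thus
`z̄ ∈ A`, the Stone–Weierstrass theorem gives `A = C(K)`, and `K` is polynomially convex.
-/

section FunctionalCalculus

variable {X : Type*} [TopologicalSpace X] [CompactSpace X] {A : Subalgebra ℂ C(X, ℂ)}

theorem isUnit_of_forall_mem_slitPlane (hA : IsClosed (A : Set C(X, ℂ))) (f : A)
    (hf : ∀ p, (f : C(X, ℂ)) p ∈ slitPlane) : IsUnit f := by
  rw [← spectrum.zero_notMem_iff ℂ]
  intro h0
  have hbdd := Subalgebra.spectrum_isBounded_connectedComponentIn A f h0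
  have hsub : ((↑) : ℝ → ℂ) '' Set.Iic 0 ⊆
      connectedComponentIn (spectrum ℂ (f : C(X, ℂ)))ᶜ 0 := by
    refine (isPreconnected_Iic.image _ continuous_ofReal.continuousOn).subset_connectedComponentIn
      ⟨0, by simp, by simp⟩ ?_
    rintro _ ⟨x, hx, rfl⟩
    rw [ContinuousMap.spectrum_eq_range]
    rintro ⟨p, hp⟩
    exact absurd (ofReal_mem_slitPlane.1 (hp ▸ hf p)) (not_lt.2 hx)
  obtain ⟨C, hC⟩ := (hbdd.subset hsub).exists_norm_le
  have h := hC _ ⟨-(|C| + 1), Set.mem_Iic.2 (by linarith [abs_nonneg C]), rfl⟩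
  rw [norm_real, norm_neg, Real.norm_eq_abs, abs_of_pos (by positivity)] at h
  linarith [le_abs_self C]

theorem exists_mem_eq_inv (hA : IsClosed (A : Set C(X, ℂ))) {f : C(X, ℂ)} (hfA : f ∈ A)
    (hf : ∀ p, f p ∈ slitPlane) : ∃ g ∈ A, ∀ p, g p = (f p)⁻¹ := by
  obtain ⟨g, hg⟩ := (isUnit_of_forall_mem_slitPlane hA ⟨f, hfA⟩ hf).exists_right_inv
  exact ⟨g, g.2, fun p ↦
    eq_inv_of_mul_eq_one_right (congrArg (fun u : A ↦ (u : C(X, ℂ)) p) hg)⟩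

theorem exists_mem_eq_exp (hA : IsClosed (A : Set C(X, ℂ))) {f : C(X, ℂ)} (hfA : f ∈ A) :
    ∃ g ∈ A, ∀ p, g p = exp (f p) := by
  refine ⟨NormedSpace.exp f, NormedSpace.exp_mem (R := ℂ) hA hfA, fun p ↦ ?_⟩
  let _ : NormedAlgebra ℚ C(X, ℂ) := .restrictScalars ℚ ℂ _
  rw [exp_eq_exp_ℂ]
  exact NormedSpace.map_exp (ContinuousMap.evalAlgHom ℂ ℂ p) (continuous_eval_const p) f

theorem exists_mem_eq_log (hA : IsClosed (A : Set C(X, ℂ))) {f : C(X, ℂ)} (hfA : f ∈ A)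
    (hf : ∀ p, f p ∈ slitPlane) : ∃ g ∈ A, ∀ p, g p = log (f p) := by
  have := hA.completeSpace_coe
  let h : A := ⟨f, hfA⟩ - 1
  have h_apply (p : X) : 1 + (h : C(X, ℂ)) p = f p := add_sub_cancel 1 (f p)
  have isUnit_segment {s : ℝ} (hs : s ∈ Set.Icc (0 : ℝ) 1) : IsUnit (1 + s • h) :=
    isUnit_of_forall_mem_slitPlane hA _ fun p ↦
      StarConvex.add_smul_mem starConvex_one_slitPlane (by rw [h_apply]; exact hf p) hs.1 hs.2
  have continuous_inverse :
      ContinuousOn (fun s : ℝ ↦ Ring.inverse (1 + s • h)) (Set.uIcc 0 1) := fun s hs ↦ by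
    rw [Set.uIcc_of_le zero_le_one] at hs
    obtain ⟨u, hu⟩ := isUnit_segment hs
    have : ContinuousAt (fun s : ℝ ↦ 1 + s • h) s := by fun_prop
    exact (ContinuousAt.comp (g := Ring.inverse) (hu ▸ NormedRing.inverse_continuousAt u)
      this).continuousWithinAt
  let g : A := h * ∫ s in (0 : ℝ)..1, Ring.inverse (1 + s • h)
  refine ⟨g, g.2, fun p ↦ ?_⟩
  let evalAt : A →L[ℂ] ℂ := (ContinuousMap.evalCLM ℂ p).comp A.toSubmodule.subtypeL
  rw [← h_apply, log_eq_integral (by rw [h_apply]; exact hf p)]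
  change (h : C(X, ℂ)) p * evalAt (∫ s in (0 : ℝ)..1, Ring.inverse (1 + s • h)) = _
  rw [← evalAt.intervalIntegral_comp_comm continuous_inverse.intervalIntegrable]
  congr 1
  refine intervalIntegral.integral_congr fun s hs ↦ ?_
  rw [Set.uIcc_of_le zero_le_one] at hs
  refine eq_inv_of_mul_eq_one_right ?_
  exact congrArg (fun u : A ↦ (u : C(X, ℂ)) p) (Ring.mul_inverse_cancel _ (isUnit_segment hs))

theorem exists_mem_eq_cpow (hA : IsClosed (A : Set C(X, ℂ))) {f : C(X, ℂ)} (hfA : f ∈ A)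
    (hf : ∀ p, f p ∈ slitPlane) (c : ℂ) : ∃ g ∈ A, ∀ p, g p = f p ^ c := by
  obtain ⟨k, hkA, hk⟩ := exists_mem_eq_log hA hfA hf
  obtain ⟨g, hgA, hg⟩ := exists_mem_eq_exp hA (A.smul_mem hkA c)
  refine ⟨g, hgA, fun p ↦ ?_⟩
  rw [hg, cpow_def_of_ne_zero (slitPlane_ne_zero (hf p)), ← hk, mul_comm]
  rfl

theorem exists_mem_eq_cpow_of_re_pos (hA : IsClosed (A : Set C(X, ℂ))) {f : C(X, ℂ)}
    (hfA : f ∈ A) (hf : ∀ p, 0 ≤ (f p).re ∨ (f p).im ≠ 0) {c : ℂ} (hc : 0 < c.re) :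
    ∃ g ∈ A, ∀ p, g p = f p ^ c := by
  have continuous_translate : Continuous fun q : NNReal × X ↦ (f q.2 + (q.1 : ℝ)) ^ c :=
    continuous_iff_continuousAt.2 fun q ↦ ContinuousAt.comp
      (g := fun x : ℂ ↦ x ^ c) (f := fun q : NNReal × X ↦ f q.2 + (q.1 : ℝ))
      (continuousAt_cpow_const_of_re_pos
        (by simpa using (hf q.2).imp_left fun h ↦ add_nonneg h q.1.2) hc)
      (by fun_prop)
  let translate : C(NNReal, C(X, ℂ)) := ContinuousMap.curry ⟨_, continuous_translate⟩
  have translate_mem (ε : NNReal) (hε : 0 < ε) : translate ε ∈ A := by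
    obtain ⟨g, hgA, hg⟩ := exists_mem_eq_cpow hA
      (add_mem hfA (A.algebraMap_mem ((ε : ℝ) : ℂ)))
      (fun p ↦ by
        simpa [mem_slitPlane_iff] using
          (hf p).imp_left fun h ↦ add_pos_of_nonneg_of_pos h (NNReal.coe_pos.2 hε)) c
    rwa [show translate ε = g from ContinuousMap.ext fun p ↦ (hg p).symm]
  refine ⟨translate 0, ?_, fun p ↦ by simp [translate]⟩
  have h0 : (0 : NNReal) ∈ closure (Set.Ioi 0) := by simp [closure_Ioi]
  exact hA.closure_subset_iff.2 (Set.image_subset_iff.2 translate_mem)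
    (image_closure_subset_closure_image translate.continuous ⟨0, h0, rfl⟩)

end FunctionalCalculus

section Sector

/-- The quantity `‖x‖ * sin (θ - |arg x|)`, which measures the position of `x` relative to the
sector `|arg x| < θ`: positive inside, negative outside. It is written in Cartesian coordinates so
that it is visibly Lipschitz in `x`. -/
noncomputable def sectorGap (θ : ℝ) (x : ℂ) : ℝ := Real.sin θ * x.re - Real.cos θ * |x.im|

/-- The principal square root of `x` on the sector `|arg x| < θ`, and `0` off the sector. -/
noncomputable def sectorSqrt (θ : ℝ) (x : ℂ) : ℂ := if |arg x| < θ then x.sqrt else 0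

variable {θ : ℝ} {x : ℂ}

theorem sectorGap_eq_norm_mul_sin (θ : ℝ) (x : ℂ) :
    sectorGap θ x = ‖x‖ * Real.sin (θ - |arg x|) := by
  have him : |x.im| = ‖x‖ * Real.sin |arg x| := by
    rw [← norm_mul_sin_arg x, abs_mul, abs_norm, ← Real.abs_sin_eq_sin_abs_of_abs_le_pi
      (abs_arg_le_pi x)]
  rw [sectorGap, Real.sin_sub, Real.cos_abs, him, ← norm_mul_cos_arg x]
  ring

theorem abs_arg_lt_of_sectorGap_pos (hθ : 0 ≤ θ) (hx : 0 < sectorGap θ x) : |arg x| < θ := by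
  rw [sectorGap_eq_norm_mul_sin] at hx
  by_contra! h
  exact (pos_of_mul_pos_right hx (norm_nonneg x)).not_ge <|
    Real.sin_nonpos_of_nonpos_of_neg_pi_le (sub_nonpos.2 h) (by linarith [abs_arg_le_pi x])

theorem lt_abs_arg_of_sectorGap_neg (hθ : θ ≤ Real.pi) (hx : sectorGap θ x < 0) : θ < |arg x| := by
  rw [sectorGap_eq_norm_mul_sin] at hx
  by_contra! h
  exact (neg_of_mul_neg_right hx (norm_nonneg x)).not_ge <|
    Real.sin_nonneg_of_nonneg_of_le_pi (sub_nonneg.2 h) (by linarith [abs_nonneg (arg x)])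

theorem abs_sectorGap_sub_le (θ : ℝ) (x y : ℂ) :
    |sectorGap θ x - sectorGap θ y| ≤ 2 * ‖x - y‖ := by
  have h1 : |Real.sin θ * (x - y).re| ≤ ‖x - y‖ := by
    rw [abs_mul]
    exact (mul_le_of_le_one_left (abs_nonneg _) (Real.abs_sin_le_one θ)).trans (abs_re_le_norm _)
  have h2 : |Real.cos θ * (|x.im| - |y.im|)| ≤ ‖x - y‖ := by
    rw [abs_mul]
    refine (mul_le_of_le_one_left (abs_nonneg _) (Real.abs_cos_le_one θ)).trans ?_
    exact (abs_abs_sub_abs_le_abs_sub _ _).trans (abs_im_le_norm (x - y))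
  calc |sectorGap θ x - sectorGap θ y|
      = |Real.sin θ * (x - y).re - Real.cos θ * (|x.im| - |y.im|)| := by
        rw [sectorGap, sectorGap, sub_re]; ring_nf
    _ ≤ ‖x - y‖ + ‖x - y‖ := (abs_sub _ _).trans (add_le_add h1 h2)
    _ = 2 * ‖x - y‖ := (two_mul _).symm

theorem sectorSqrt_re_nonneg (θ : ℝ) (x : ℂ) : 0 ≤ (sectorSqrt θ x).re := by
  unfold sectorSqrt
  split_ifs
  · rw [Complex.sqrt, cpow_inv_two_re]
    exact Real.sqrt_nonneg _
  · exact le_rfl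

theorem norm_sectorSqrt_sq (hx : |arg x| < θ) : ‖sectorSqrt θ x‖ ^ 2 = ‖x‖ := by
  rw [sectorSqrt, if_pos hx, ← norm_pow, Complex.sqrt, cpow_ofNat_inv_pow]

theorem sectorSqrt_eq_zero (hx : x = 0 ∨ θ < |arg x|) : sectorSqrt θ x = 0 := by
  rcases hx with rfl | hx
  · simp [sectorSqrt]
  · exact if_neg hx.not_gt

theorem sqrt_exp {w : ℂ} (h₁ : -Real.pi < w.im) (h₂ : w.im ≤ Real.pi) :
    (exp w).sqrt = exp (w / 2) := by
  rw [Complex.sqrt, cpow_def_of_ne_zero (exp_ne_zero w), log_exp h₁ h₂, ← div_eq_mul_inv]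

theorem sqrt_neg_exp_of_im_neg {w : ℂ} (h₁ : -(2 * Real.pi) < w.im) (h₂ : w.im < 0) :
    (-exp w).sqrt = I * exp (w / 2) := by
  have him : (w + Real.pi * I).im = w.im + Real.pi := by simp
  rw [← exp_add_pi_mul_I, sqrt_exp (by linarith) (by linarith), add_div,
    mul_div_right_comm, exp_add, exp_pi_div_two_mul_I, mul_comm]

theorem sqrt_neg_exp_of_im_pos {w : ℂ} (h₁ : 0 < w.im) (h₂ : w.im ≤ 2 * Real.pi) :
    (-exp w).sqrt = -I * exp (w / 2) := by
  have him : (w - Real.pi * I).im = w.im - Real.pi := by simp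
  rw [← exp_sub_pi_mul_I, sqrt_exp (by linarith) (by linarith), sub_div,
    mul_div_right_comm, exp_sub, exp_pi_div_two_mul_I, div_I, neg_mul, mul_comm]

-- The two square roots have their cuts along the two edges of the sector `|arg x| < θ`, so across
-- each edge exactly one of them changes sign: they agree on the sector and cancel off it.
theorem sectorSqrt_eq (hθ₀ : 0 ≤ θ) (hθ : θ < Real.pi) (hx : x = 0 ∨ |arg x| ≠ θ) :
    sectorSqrt θ x = 2⁻¹ *
      (-I * exp (θ * I / 2) * (-(exp (-(θ * I)) * x)).sqrt +
        I * exp (-(θ * I) / 2) * (-(exp (θ * I) * x)).sqrt) := by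
  rcases eq_or_ne x 0 with rfl | hx₀
  · simp [sectorSqrt]
  replace hx := hx.resolve_left hx₀
  obtain ⟨w, rfl, hw₁, hw₂⟩ : ∃ w, exp w = x ∧ -Real.pi < w.im ∧ w.im ≤ Real.pi :=
    ⟨log x, exp_log hx₀, neg_pi_lt_log_im x, log_im_le_pi x⟩
  have arg_exp : arg (exp w) = w.im := by rw [← log_im, log_exp hw₁ hw₂]
  have lower : -I * exp (θ * I / 2) * (I * exp ((-(θ * I) + w) / 2)) = exp (w / 2) := by
    rw [mul_mul_mul_comm, ← exp_add, neg_mul, I_mul_I]; ring_nf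
  have upper : I * exp (-(θ * I) / 2) * (-I * exp ((θ * I + w) / 2)) = exp (w / 2) := by
    rw [mul_mul_mul_comm, ← exp_add, mul_neg, I_mul_I]; ring_nf
  have im_lower : (-(θ * I) + w).im = w.im - θ := by simp [sub_eq_neg_add]
  have im_upper : (θ * I + w).im = w.im + θ := by simp [add_comm]
  rw [arg_exp] at hx
  rw [sectorSqrt, arg_exp, ← exp_add, ← exp_add]
  rcases hx.lt_or_gt with h | h
  · have ⟨h₁, h₂⟩ := abs_lt.1 h
    rw [if_pos h, sqrt_exp hw₁ hw₂, sqrt_neg_exp_of_im_neg (by linarith) (by linarith),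
      sqrt_neg_exp_of_im_pos (by linarith) (by linarith)]
    linear_combination -2⁻¹ * lower - 2⁻¹ * upper
  rw [if_neg h.not_gt]
  rcases lt_abs.1 h with h | h
  · rw [sqrt_neg_exp_of_im_pos (by linarith) (by linarith),
      sqrt_neg_exp_of_im_pos (by linarith) (by linarith)]
    linear_combination 2⁻¹ * lower - 2⁻¹ * upper
  · rw [sqrt_neg_exp_of_im_neg (by linarith) (by linarith),
      sqrt_neg_exp_of_im_neg (by linarith) (by linarith)]
    linear_combination -2⁻¹ * lower + 2⁻¹ * upper

theorem re_nonneg_or_im_ne_zero_of_arg_ne {φ : ℝ} (hφ : φ ∈ Set.Ioc (-Real.pi) Real.pi)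
    (hx : x = 0 ∨ arg x ≠ φ) :
    0 ≤ (-(exp (-(φ * I)) * x)).re ∨ (-(exp (-(φ * I)) * x)).im ≠ 0 := by
  by_contra! ⟨hre, him⟩
  set y := exp (-(φ * I)) * x with hy
  have hy_pos : 0 < y.re := by simpa using hre
  have hy_real : y = (y.re : ℂ) := Complex.ext rfl (by simpa using him)
  have hx_eq : x = y.re * (cos φ + sin φ * I) := by
    rw [← hy_real, ← exp_mul_I, hy, mul_right_comm, ← exp_add, neg_add_cancel, exp_zero, one_mul]
  rcases hx with rfl | hx
  · simp [y] at hy_pos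
  · exact hx (hx_eq ▸ arg_mul_cos_add_sin_mul_I hy_pos hφ)

theorem exists_mem_eq_sectorSqrt {X : Type*} [TopologicalSpace X] [CompactSpace X]
    {A : Subalgebra ℂ C(X, ℂ)} (hA : IsClosed (A : Set C(X, ℂ))) {f : C(X, ℂ)} (hfA : f ∈ A)
    (hθ₀ : 0 ≤ θ) (hθ : θ < Real.pi) (hf : ∀ p, f p = 0 ∨ |arg (f p)| ≠ θ) :
    ∃ v ∈ A, ∀ p, v p = sectorSqrt θ (f p) := by
  have exists_sqrt (φ : ℝ) (hφ : φ ∈ Set.Ioc (-Real.pi) Real.pi) (hφθ : |φ| = θ) :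
      ∃ g ∈ A, ∀ p, g p = (-(exp (-(φ * I)) * f p)).sqrt :=
    exists_mem_eq_cpow_of_re_pos hA (f := -(exp (-(φ * I)) • f)) (neg_mem (A.smul_mem hfA _))
      (fun p ↦ re_nonneg_or_im_ne_zero_of_arg_ne hφ
        ((hf p).imp_right fun h h' ↦ h (by rw [h', hφθ]))) (by norm_num)
  obtain ⟨g₁, hg₁A, hg₁⟩ := exists_sqrt θ ⟨by linarith [Real.pi_pos], hθ.le⟩ (abs_of_nonneg hθ₀)
  obtain ⟨g₂, hg₂A, hg₂⟩ := exists_sqrt (-θ) ⟨by linarith, by linarith [Real.pi_pos]⟩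
    (by rw [abs_neg, abs_of_nonneg hθ₀])
  refine ⟨(2 : ℂ)⁻¹ • ((-I * exp (θ * I / 2)) • g₁ + (I * exp (-(θ * I) / 2)) • g₂),
    A.smul_mem (add_mem (A.smul_mem hg₁A _) (A.smul_mem hg₂A _)) _, fun p ↦ ?_⟩
  rw [sectorSqrt_eq hθ₀ hθ (hf p)]
  simp only [ContinuousMap.smul_apply, ContinuousMap.add_apply, smul_eq_mul, hg₁, hg₂, ofReal_neg,
    neg_mul, neg_neg]

theorem norm_le_norm_add_ofReal {x : ℂ} (hx : 0 ≤ x.re) {ε : ℝ} (hε : 0 ≤ ε) : ‖x‖ ≤ ‖x + ε‖ := by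
  rw [norm_def, norm_def]
  refine Real.sqrt_le_sqrt ?_
  rw [normSq_apply, normSq_apply, add_re, add_im, ofReal_re, ofReal_im]
  nlinarith [mul_nonneg hx hε]

-- `W * v / (v + ε)` converges to `V` uniformly as `ε → 0⁺`.
theorem mem_of_forall_eq_or_eq_zero {X : Type*} [TopologicalSpace X] [CompactSpace X]
    {A : Subalgebra ℂ C(X, ℂ)} (hA : IsClosed (A : Set C(X, ℂ))) {v W V : C(X, ℂ)}
    (hvA : v ∈ A) (hWA : W ∈ A) (hv : ∀ p, 0 ≤ (v p).re) {C : ℝ} (hC : 0 ≤ C)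
    (hV : ∀ p, V p = W p ∧ ‖W p‖ ≤ C * ‖v p‖ ∨ V p = 0 ∧ v p = 0) : V ∈ A := by
  refine hA.closure_subset (Metric.mem_closure_iff.2 fun ε hε ↦ ?_)
  set δ : ℝ := ε / (C + 1) with hδ
  have hδ₀ : 0 < δ := by positivity
  have re_pos (p : X) : 0 < (v p + (δ : ℂ)).re := by
    rw [add_re, ofReal_re]; exact add_pos_of_nonneg_of_pos (hv p) hδ₀
  obtain ⟨g, hgA, hg⟩ := exists_mem_eq_inv hA (add_mem hvA (A.algebraMap_mem (δ : ℂ)))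
    fun p ↦ Or.inl (re_pos p)
  refine ⟨W * v * g, mul_mem (mul_mem hWA hvA) hgA, (ContinuousMap.dist_lt_iff hε).2 fun p ↦ ?_⟩
  rw [dist_eq_norm, ContinuousMap.mul_apply, ContinuousMap.mul_apply, hg]
  change ‖V p - W p * v p * (v p + (δ : ℂ))⁻¹‖ < ε
  rcases hV p with ⟨hVW, hW⟩ | ⟨hV₀, hv₀⟩
  · have hne : v p + (δ : ℂ) ≠ 0 := fun h ↦ (re_pos p).ne' (by rw [h, zero_re])
    have hsub : V p - W p * v p * (v p + (δ : ℂ))⁻¹ = W p * δ / (v p + δ) := by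
      rw [hVW]; field_simp; ring
    rw [hsub, norm_div, norm_mul, norm_real, Real.norm_of_nonneg hδ₀.le,
      div_lt_iff₀ (norm_pos_iff.2 hne)]
    calc ‖W p‖ * δ ≤ C * ‖v p + δ‖ * δ := by
          gcongr
          exact hW.trans (by gcongr; exact norm_le_norm_add_ofReal (hv p) hδ₀.le)
      _ < (C + 1) * ‖v p + δ‖ * δ := by gcongr; linarith
      _ = ε * ‖v p + δ‖ := by rw [hδ]; field_simp
  · rw [hV₀, hv₀]; simpa using hε

end Sector

section Cover

open Polynomial

variable {Z : Type*} [TopologicalSpace Z]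

/-- The function `(p, k) ↦ ω ^ k * ζ p`. For `ω` a primitive `n`-th root of unity, its sheets are
the `n`-th roots of `ζ ^ n`. -/
noncomputable def coverRoot (n : ℕ) (ω : ℂ) (ζ : C(Z, ℂ)) : C(Z × Fin n, ℂ) where
  toFun q := ω ^ (q.2 : ℕ) * ζ q.1

/-- The map sending a polynomial with coefficients in `A` to its value at `coverRoot n ω ζ`, the
coefficients being pulled back to the cover `Z × Fin n`. -/
noncomputable def coverEval (A : Subalgebra ℂ C(Z, ℂ)) (n : ℕ) (ω : ℂ) (ζ : C(Z, ℂ)) :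
    A[X] →ₐ[ℂ] C(Z × Fin n, ℂ) :=
  ((aeval (coverRoot n ω ζ)).restrictScalars ℂ).comp <|
    mapAlgHom ((ContinuousMap.compRightAlgHom ℂ ℂ (ContinuousMap.fst : C(Z × Fin n, Z))).comp A.val)

variable {A : Subalgebra ℂ C(Z, ℂ)} {n : ℕ} {ω : ℂ} {ζ : C(Z, ℂ)}

theorem coverEval_C (a : A) (q : Z × Fin n) :
    coverEval A n ω ζ (Polynomial.C a) q = (a : C(Z, ℂ)) q.1 := by
  simp [coverEval]

theorem coverEval_X : coverEval A n ω ζ X = coverRoot n ω ζ := by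
  simp [coverEval]

/-- Summation over the sheets of the cover `Z × Fin n`. -/
noncomputable def coverTrace (Z : Type*) [TopologicalSpace Z] (n : ℕ) :
    C(Z × Fin n, ℂ) →L[ℂ] C(Z, ℂ) :=
  ∑ k : Fin n, ContinuousMap.compCLM ℂ ℂ ⟨fun p ↦ (p, k), by fun_prop⟩

theorem coverTrace_apply (f : C(Z × Fin n, ℂ)) (p : Z) : coverTrace Z n f p = ∑ k, f (p, k) := by
  simp [coverTrace]

theorem sum_primitiveRoot_pow_pow (hω : IsPrimitiveRoot ω n) (j : ℕ) :
    ∑ k : Fin n, (ω ^ (k : ℕ)) ^ j = if n ∣ j then (n : ℂ) else 0 := by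
  simp_rw [← pow_mul, mul_comm _ j, pow_mul]
  rw [Fin.sum_univ_eq_sum_range (fun k ↦ (ω ^ j) ^ k)]
  split_ifs with h
  · simp [(hω.pow_eq_one_iff_dvd j).2 h]
  · refine (mul_eq_zero.1 ?_).resolve_left (sub_ne_zero.2 fun h' ↦ h (hω.dvd_of_pow_eq_one j h'))
    rw [mul_geom_sum, ← pow_mul, mul_comm, pow_mul, hω.pow_eq_one, one_pow, sub_self]

theorem coverTrace_coverEval_mem (hω : IsPrimitiveRoot ω n) (hζ : ζ ^ n ∈ A) (P : A[X]) :
    coverTrace Z n (coverEval A n ω ζ P) ∈ A := by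
  induction P using Polynomial.induction_on' with
  | add P Q hP hQ => rw [map_add, map_add]; exact add_mem hP hQ
  | monomial j a =>
    have trace_eq : coverTrace Z n (coverEval A n ω ζ (monomial j a)) =
        (if n ∣ j then (n : ℂ) else 0) • (a * ζ ^ j : C(Z, ℂ)) := by
      ext p
      rw [coverTrace_apply, ← sum_primitiveRoot_pow_pow hω, ← C_mul_X_pow_eq_monomial]
      simp only [map_mul, map_pow, ContinuousMap.mul_apply, ContinuousMap.pow_apply, coverEval_C,
        coverEval_X, ContinuousMap.smul_apply, smul_eq_mul, Finset.sum_mul]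
      exact Finset.sum_congr rfl fun k _ ↦ by simp only [coverRoot, ContinuousMap.coe_mk]; ring
    rw [trace_eq]
    split_ifs with h
    · obtain ⟨i, rfl⟩ := h
      exact A.smul_mem (mul_mem a.2 (pow_mul ζ n i ▸ pow_mem hζ i)) _
    · exact (zero_smul ℂ (a * ζ ^ j : C(Z, ℂ))).symm ▸ zero_mem A

variable [CompactSpace Z]

/-- The closed algebra of functions on the cover `Z × Fin n` generated by `coverRoot n ω ζ` and the
pullbacks of the elements of `A`. -/
noncomputable def coverAlgebra (A : Subalgebra ℂ C(Z, ℂ)) (n : ℕ) (ω : ℂ) (ζ : C(Z, ℂ)) :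
    Subalgebra ℂ C(Z × Fin n, ℂ) :=
  (coverEval A n ω ζ).range.topologicalClosure

theorem coverRoot_mem_coverAlgebra : coverRoot n ω ζ ∈ coverAlgebra A n ω ζ :=
  Subalgebra.le_topologicalClosure _ ⟨X, coverEval_X⟩

theorem comp_fst_mem_coverAlgebra {a : C(Z, ℂ)} (ha : a ∈ A) :
    a.comp ContinuousMap.fst ∈ coverAlgebra A n ω ζ :=
  Subalgebra.le_topologicalClosure _
    ⟨Polynomial.C ⟨a, ha⟩, ContinuousMap.ext fun q ↦ coverEval_C ⟨a, ha⟩ q⟩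

theorem coverTrace_mem (hA : IsClosed (A : Set C(Z, ℂ))) (hω : IsPrimitiveRoot ω n)
    (hζ : ζ ^ n ∈ A) {f : C(Z × Fin n, ℂ)} (hf : f ∈ coverAlgebra A n ω ζ) :
    coverTrace Z n f ∈ A := by
  refine hA.closure_subset (map_mem_closure (coverTrace Z n).continuous hf ?_)
  rintro _ ⟨P, rfl⟩
  exact coverTrace_coverEval_mem hω hζ P

-- The function equal to `ζ` on the sheet `0` and vanishing on the others lies in `coverAlgebra`,
-- and its trace is `ζ`.
theorem mem_of_sector_separates_sheets [NeZero n] (hA : IsClosed (A : Set C(Z, ℂ)))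
    (hω : IsPrimitiveRoot ω n) (hζ : ζ ^ n ∈ A) {f : C(Z × Fin n, ℂ)}
    (hf : f ∈ coverAlgebra A n ω ζ) {θ : ℝ} (hθ₀ : 0 ≤ θ) (hθ : θ < Real.pi) {C : ℝ}
    (hin : ∀ p, |arg (f (p, 0))| < θ ∧ ‖ζ p‖ ^ 2 ≤ C * ‖f (p, 0)‖)
    (hout : ∀ p, ∀ k ≠ 0, f (p, k) = 0 ∨ θ < |arg (f (p, k))|) : ζ ∈ A := by
  have hclosed : IsClosed (coverAlgebra A n ω ζ : Set C(Z × Fin n, ℂ)) :=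
    Subalgebra.isClosed_topologicalClosure _
  obtain ⟨v, hvA, hv⟩ := exists_mem_eq_sectorSqrt hclosed hf hθ₀ hθ fun ⟨p, k⟩ ↦ by
    rcases eq_or_ne k 0 with rfl | hk
    · exact Or.inr (hin p).1.ne
    · exact (hout p k hk).imp_right ne_of_gt
  let V : C(Z × Fin n, ℂ) :=
    ⟨fun q ↦ if q.2 = 0 then ζ q.1 else 0, by
      refine continuous_prod_of_discrete_right.2 fun k ↦ ?_
      by_cases hk : k = 0 <;> simp only [hk, if_true, if_false] <;> fun_prop⟩
  have hVA : V ∈ coverAlgebra A n ω ζ := by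
    refine mem_of_forall_eq_or_eq_zero hclosed hvA coverRoot_mem_coverAlgebra
      (fun q ↦ hv q ▸ sectorSqrt_re_nonneg θ _) (Real.sqrt_nonneg C) fun ⟨p, k⟩ ↦ ?_
    rcases eq_or_ne k 0 with rfl | hk
    · have hroot : coverRoot n ω ζ (p, 0) = ζ p := by simp [coverRoot]
      refine Or.inl ⟨by simp [V, hroot], ?_⟩
      calc ‖coverRoot n ω ζ (p, 0)‖ ≤ √(C * ‖f (p, 0)‖) := by
            rw [hroot]; exact Real.le_sqrt_of_sq_le (hin p).2
        _ = √C * ‖v (p, 0)‖ := by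
            rw [hv, Real.sqrt_mul' _ (norm_nonneg _), ← norm_sectorSqrt_sq (hin p).1,
              Real.sqrt_sq (norm_nonneg _)]
    · exact Or.inr ⟨if_neg hk, by rw [hv, sectorSqrt_eq_zero (hout p k hk)]⟩
  have htrace : coverTrace Z n V = ζ := by
    ext p
    simp [coverTrace_apply, V]
  exact htrace ▸ coverTrace_mem hA hω hζ hVA

end Cover

section CauchyTransform

open MeasureTheory

theorem integrableOn_polarCoord_target {E : Type*} [NormedAddCommGroup E] [NormedSpace ℝ E]
    {f : ℂ → E} (hf : Integrable f) :
    IntegrableOn (fun p : ℝ × ℝ ↦ p.1 • f (Complex.polarCoord.symm p)) polarCoord.target := by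
  have hf' : IntegrableOn (f ∘ measurableEquivRealProd.symm)
      (polarCoord.symm '' polarCoord.target) :=
    (((volume_preserving_equiv_real_prod.symm).integrable_comp_emb
      measurableEquivRealProd.symm.measurableEmbedding).2 hf).integrableOn
  rw [integrableOn_image_iff_integrableOn_abs_det_fderiv_smul volume
    polarCoord.open_target.measurableSet
    (fun p _ ↦ (hasFDerivAt_polarCoord_symm p).hasFDerivWithinAt) polarCoord.symm.injOn] at hf'
  refine hf'.congr_fun (fun p hp ↦ ?_) polarCoord.open_target.measurableSet
  simp only [det_fderivPolarCoordSymm, abs_of_pos (show 0 < p.1 from hp.1), Function.comp_apply,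
    measurableEquivRealProd_symm_polarCoord_symm_apply]

theorem integral_eq_integral_circleAverage {E : Type*} [NormedAddCommGroup E] [NormedSpace ℝ E]
    {f : ℂ → E} (hf : Integrable f) :
    ∫ b, f b = ∫ s in Set.Ioi (0 : ℝ), (2 * Real.pi * s) • Real.circleAverage f 0 s := by
  have hpolar := integrableOn_polarCoord_target hf
  rw [polarCoord_target, Measure.volume_eq_prod] at hpolar
  rw [← Complex.integral_comp_polarCoord_symm, polarCoord_target, Measure.volume_eq_prod,
    setIntegral_prod _ hpolar]
  refine setIntegral_congr_fun measurableSet_Ioi fun s _ ↦ ?_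
  have hcircle (θ : ℝ) : f (Complex.polarCoord.symm (s, θ)) = f (circleMap 0 s θ) := by
    rw [Complex.polarCoord_symm_apply, circleMap, exp_mul_I, ofReal_cos, ofReal_sin, zero_add]
  have hπ : 2 * Real.pi * s * (2 * Real.pi)⁻¹ = s := by
    field_simp
  simp only [hcircle]
  rw [integral_smul, ← integral_Ioc_eq_integral_Ioo,
    ← intervalIntegral.integral_of_le (by linarith [Real.pi_pos]),
    Real.circleAverage_eq_integral_add (-Real.pi),
    intervalIntegral.integral_comp_add_right (fun θ ↦ f (circleMap 0 s θ)), smul_smul, hπ,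
    zero_add, show 2 * Real.pi + -Real.pi = Real.pi by ring]

theorem circleAverage_sub_inv_of_lt_norm {z : ℂ} {s : ℝ} (h : |s| < ‖z‖) :
    Real.circleAverage (fun b ↦ (z - b)⁻¹) 0 s = z⁻¹ := by
  have hne (b : ℂ) (hb : b ∈ closure (Metric.ball 0 |s|)) : z - b ≠ 0 := fun h0 ↦ by
    have := mem_closedBall_zero_iff.1 (Metric.closure_ball_subset_closedBall hb)
    rw [sub_eq_zero.1 h0] at h
    exact h.not_ge this
  have hd : DifferentiableOn ℂ (fun b ↦ (z - b)⁻¹) (closure (Metric.ball 0 |s|)) := by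
    fun_prop (disch := assumption)
  simpa only [sub_zero] using hd.diffContOnCl.circleAverage

-- On the circle `b * conj b = s²`, the kernel is the conjugate of `b / (conj z * b - s²)`,
-- which is holomorphic on the disc and vanishes at its centre.
theorem circleAverage_sub_inv_of_norm_lt {z : ℂ} {s : ℝ} (h : ‖z‖ < |s|) :
    Real.circleAverage (fun b ↦ (z - b)⁻¹) 0 s = 0 := by
  let g (b : ℂ) : ℂ := b / (conj z * b - (s : ℂ) ^ 2)
  have hne (b : ℂ) (hb : b ∈ closure (Metric.ball 0 |s|)) : conj z * b - (s : ℂ) ^ 2 ≠ 0 := by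
    intro h0
    have hb := mem_closedBall_zero_iff.1 (Metric.closure_ball_subset_closedBall hb)
    have hnorm := congrArg norm (sub_eq_zero.1 h0)
    rw [norm_mul, norm_conj, norm_pow, norm_real, Real.norm_eq_abs] at hnorm
    nlinarith [norm_nonneg b, norm_nonneg z]
  have hd : DifferentiableOn ℂ g (closure (Metric.ball 0 |s|)) := by
    fun_prop (disch := assumption)
  have hg : Real.circleAverage g 0 s = 0 := by
    simpa only [g, zero_div] using hd.diffContOnCl.circleAverage
  have hs : s ≠ 0 := abs_pos.1 ((norm_nonneg z).trans_lt h)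
  have hsphere : Set.EqOn (fun b ↦ (z - b)⁻¹) (conjCLE ∘ g) (Metric.sphere 0 |s|) := fun b hb ↦ by
    have hbb : b * conj b = (s : ℂ) ^ 2 := by
      rw [mul_conj, normSq_eq_norm_sq, mem_sphere_zero_iff_norm.1 hb, sq_abs, ofReal_pow]
    have hb0 : conj b ≠ 0 := right_ne_zero_of_mul (hbb ▸ pow_ne_zero 2 (ofReal_ne_zero.2 hs))
    simp only [g, Function.comp_apply, conjCLE_apply, map_div₀, map_sub, map_mul, conj_conj,
      map_pow, conj_ofReal]
    rw [← hbb, ← sub_mul, div_mul_cancel_right₀ hb0]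
  have hint : CircleIntegrable g 0 s :=
    (hd.continuousOn.mono (by
      rw [closure_ball _ (abs_pos.2 hs).ne']
      exact Metric.sphere_subset_closedBall)).circleIntegrable'
  have hcomm := (conjCLE : ℂ →L[ℝ] ℂ).circleAverage_comp_comm hint
  rw [hg, map_zero] at hcomm
  exact (Real.circleAverage_congr_sphere hsphere).trans hcomm

theorem integrableOn_closedBall_sub_inv (z : ℂ) (ρ : ℝ) :
    IntegrableOn (fun b ↦ (z - b)⁻¹) (Metric.closedBall 0 ρ) := by
  have hinv : LocallyIntegrable (fun b : ℂ ↦ b⁻¹) :=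
    locallyIntegrable_of_norm_le_rpow (C := 1) (α := 1) (by simp) (by simp)
      (.of_forall fun b ↦ by rw [norm_inv, one_mul, Real.rpow_neg_one])
      measurable_inv.aestronglyMeasurable
  have hpre : (z - ·) ⁻¹' Metric.closedBall z ρ = Metric.closedBall 0 ρ := by
    ext b
    simp [dist_eq_norm]
  rw [← hpre]
  exact ((Measure.measurePreserving_sub_left volume z).integrableOn_comp_preimage
    (MeasurableEquiv.subLeft z).measurableEmbedding).2
      (hinv.integrableOn_isCompact (isCompact_closedBall z ρ))

theorem integral_closedBall_sub_inv {z : ℂ} {ρ : ℝ} (hz : ‖z‖ < ρ) :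
    ∫ b in Metric.closedBall (0 : ℂ) ρ, (z - b)⁻¹ = Real.pi * conj z := by
  set f := (Metric.closedBall (0 : ℂ) ρ).indicator fun b ↦ (z - b)⁻¹ with hf
  have haverage (s : ℝ) (hs : 0 < s) (hsz : s ≠ ‖z‖) :
      (2 * Real.pi * s) • Real.circleAverage f 0 s =
        (Set.Ioc 0 ‖z‖).indicator (fun s : ℝ ↦ (2 * Real.pi * s) • z⁻¹) s := by
    have hsphere (b : ℂ) (hb : b ∈ Metric.sphere 0 |s|) : ‖b‖ = s := by
      rw [mem_sphere_zero_iff_norm.1 hb, abs_of_pos hs]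
    rcases le_or_gt s ρ with hsρ | hsρ
    · rw [Real.circleAverage_congr_sphere fun b hb ↦ Set.indicator_of_mem
        (mem_closedBall_zero_iff.2 ((hsphere b hb).trans_le hsρ)) _]
      rcases lt_or_gt_of_ne hsz with h | h
      · rw [circleAverage_sub_inv_of_lt_norm (by rwa [abs_of_pos hs]),
          Set.indicator_of_mem (Set.mem_Ioc.2 ⟨hs, h.le⟩)]
      · rw [circleAverage_sub_inv_of_norm_lt (by rwa [abs_of_pos hs]),
          Set.indicator_of_notMem fun h' ↦ h.not_ge h'.2, smul_zero]
    · rw [Real.circleAverage_const_on_circle fun b hb ↦ Set.indicator_of_notMem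
        (fun h ↦ hsρ.not_ge ((hsphere b hb).ge.trans (mem_closedBall_zero_iff.1 h))) _,
        Set.indicator_of_notMem fun h ↦ (hz.trans hsρ).not_ge h.2, smul_zero]
  rw [← integral_indicator measurableSet_closedBall, integral_eq_integral_circleAverage
    ((integrable_indicator_iff measurableSet_closedBall).2 (integrableOn_closedBall_sub_inv z ρ)),
    setIntegral_congr_ae measurableSet_Ioi
      (by filter_upwards [Measure.ae_ne volume ‖z‖] with s hsz hs using haverage s hs hsz),
    setIntegral_indicator measurableSet_Ioc, Set.inter_eq_right.2 Set.Ioc_subset_Ioi_self,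
    ← intervalIntegral.integral_of_le (norm_nonneg z), intervalIntegral.integral_smul_const,
    intervalIntegral.integral_const_mul, integral_id]
  rcases eq_or_ne z 0 with rfl | hz0
  · simp
  · rw [← mul_inv_cancel_left₀ hz0 (conj z), mul_left_comm z, mul_conj, normSq_eq_norm_sq]
    rw [real_smul]
    push_cast
    ring

end CauchyTransform

section StronglyMonotone

open MeasureTheory

variable {Z : Type*} [TopologicalSpace Z] [CompactSpace Z] {A : Subalgebra ℂ C(Z, ℂ)}

theorem exists_mem_eq_integral (hA : IsClosed (A : Set C(Z, ℂ))) {B : Type*}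
    [TopologicalSpace B] [CompactSpace B] [MeasurableSpace B] [OpensMeasurableSpace B]
    {μ : Measure B} [IsFiniteMeasureOnCompacts μ] {Φ : C(B × Z, ℂ)} (hΦ : ∀ b, Φ.curry b ∈ A) :
    ∃ u ∈ A, ∀ p, u p = ∫ b, Φ (b, p) ∂μ := by
  have := hA.completeSpace_coe
  let Ψ (b : B) : A := ⟨Φ.curry b, hΦ b⟩
  have hΨ : Integrable Ψ μ :=
    (Φ.curry.continuous.subtype_mk hΦ).integrable_of_hasCompactSupport
      (HasCompactSupport.of_compactSpace _)
  refine ⟨(∫ b, Ψ b ∂μ : A), (∫ b, Ψ b ∂μ : A).2, fun p ↦ ?_⟩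
  let evalAt : A →L[ℂ] ℂ := (ContinuousMap.evalCLM ℂ p).comp A.toSubmodule.subtypeL
  exact (evalAt.integral_comp_comm hΨ).symm

theorem integral_inv_norm_mul_inv_one_add_sq {δ : ℝ} (hδ : 0 < δ) :
    Integrable (fun u : ℂ ↦ ‖u‖⁻¹ * (1 + (δ⁻¹ * ‖u‖) ^ 2)⁻¹) ∧
      ∫ u : ℂ, ‖u‖⁻¹ * (1 + (δ⁻¹ * ‖u‖) ^ 2)⁻¹ = Real.pi ^ 2 * δ := by
  have hradial : Set.EqOn (fun y : ℝ ↦ y ^ (Module.finrank ℝ ℂ - 1) •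
      (y⁻¹ * (1 + (δ⁻¹ * y) ^ 2)⁻¹)) (fun y ↦ (1 + (δ⁻¹ * y) ^ 2)⁻¹) (Set.Ioi 0) := fun y hy ↦ by
    simp only [finrank_real_complex, Nat.add_one_sub_one, pow_one, smul_eq_mul]
    exact mul_inv_cancel_left₀ (ne_of_gt (Set.mem_Ioi.1 hy)) _
  constructor
  · rw [integrable_fun_norm_addHaar (E := ℂ) volume
      (f := fun y ↦ y⁻¹ * (1 + (δ⁻¹ * y) ^ 2)⁻¹),
      integrableOn_congr_fun hradial measurableSet_Ioi]
    exact (integrable_inv_one_add_sq.comp_mul_left' (inv_ne_zero hδ.ne')).integrableOn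
  · rw [integral_fun_norm_addHaar (E := ℂ) volume fun y ↦ y⁻¹ * (1 + (δ⁻¹ * y) ^ 2)⁻¹,
      setIntegral_congr_fun measurableSet_Ioi hradial,
      integral_comp_mul_left_Ioi (fun y ↦ (1 + y ^ 2)⁻¹) 0 (inv_pos.2 hδ), mul_zero,
      integral_Ioi_inv_one_add_sq, finrank_real_complex, measureReal_def, volume_ball]
    simp only [ENNReal.ofReal_one, one_pow, one_mul, ENNReal.coe_toReal, NNReal.coe_real_pi,
      inv_inv, Real.arctan_zero, sub_zero, smul_eq_mul, nsmul_eq_mul, Nat.cast_ofNat]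
    ring

theorem norm_div_add_sub_inv_le {u D : ℂ} {c δ : ℝ} (hc : 0 < c) (hδ : 0 < δ) (hu : u ≠ 0)
    (hD : c * ‖u‖ ^ 2 ≤ (u * D).re) :
    ‖D / (u * D + (c * δ ^ 2 : ℝ)) - u⁻¹‖ ≤ ‖u‖⁻¹ * (1 + (δ⁻¹ * ‖u‖) ^ 2)⁻¹ := by
  have hlower : c * δ ^ 2 * (1 + (δ⁻¹ * ‖u‖) ^ 2) ≤ ‖u * D + (c * δ ^ 2 : ℝ)‖ := by
    refine le_trans ?_ (re_le_norm _)
    rw [add_re, ofReal_re]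
    field_simp
    linarith
  have hpos : 0 < c * δ ^ 2 * (1 + (δ⁻¹ * ‖u‖) ^ 2) := by positivity
  have hne := norm_pos_iff.1 (hpos.trans_le hlower)
  have hdiff : D / (u * D + (c * δ ^ 2 : ℝ)) - u⁻¹ =
      -(u⁻¹ * ((c * δ ^ 2 : ℝ) / (u * D + (c * δ ^ 2 : ℝ)))) := by
    generalize hW : u * D + (c * δ ^ 2 : ℝ) = W at hne ⊢
    field_simp
    linear_combination hW
  rw [hdiff, norm_neg, norm_mul, norm_inv, norm_div, norm_real, Real.norm_eq_abs,
    abs_of_pos (by positivity)]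
  gcongr
  rw [div_le_iff₀ (hpos.trans_le hlower), inv_mul_eq_div, le_div_iff₀ (by positivity)]
  exact hlower

theorem exists_mem_eq_integral_div_add (hA : IsClosed (A : Set C(Z, ℂ))) {z g : C(Z, ℂ)}
    (hz : z ∈ A) (hg : g ∈ A) {G : ℂ → ℂ} (hgG : ∀ p, g p = G (z p)) {S : Set ℂ}
    (hS : IsCompact S) (hzS : ∀ p, z p ∈ S) (hG : ContinuousOn G S)
    (hmono : ∀ a ∈ S, ∀ b ∈ S, 0 ≤ ((a - b) * (G a - G b)).re) {ε : ℝ} (hε : 0 < ε) :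
    ∃ u ∈ A, ∀ p, u p = ∫ b in S, (G (z p) - G b) / ((z p - b) * (G (z p) - G b) + ε) := by
  have := isCompact_iff_compactSpace.1 hS
  have hslit (b : S) (p : Z) : (z p - b) * (g p - G b) + ε ∈ slitPlane := by
    refine mem_slitPlane_iff.2 (Or.inl ?_)
    rw [add_re, ofReal_re, hgG]
    exact add_pos_of_nonneg_of_pos (hmono _ (hzS p) _ b.2) hε
  have hGS : Continuous fun q : S × Z ↦ G q.1 :=
    (continuousOn_iff_continuous_domRestrict.1 hG).comp continuous_fst
  have := IsFiniteMeasureOnCompacts.comap' (volume : Measure ℂ) continuous_subtype_val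
    (MeasurableEmbedding.subtype_coe hS.measurableSet)
  have hgG_sub : Continuous fun q : S × Z ↦ g q.2 - G q.1 := .sub (by fun_prop) hGS
  let Φ : C(S × Z, ℂ) :=
    { toFun q := (g q.2 - G q.1) / ((z q.2 - q.1) * (g q.2 - G q.1) + ε)
      continuous_toFun := hgG_sub.div (.add (.mul (by fun_prop) hgG_sub) continuous_const)
        fun q ↦ slitPlane_ne_zero (hslit q.1 q.2) }
  have hΦ (b : S) : Φ.curry b ∈ A := by
    have hsub {f : C(Z, ℂ)} (hf : f ∈ A) (x : ℂ) : f - algebraMap ℂ _ x ∈ A :=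
      sub_mem hf (A.algebraMap_mem x)
    obtain ⟨v, hvA, hv⟩ := exists_mem_eq_inv hA
      (add_mem (mul_mem (hsub hz b) (hsub hg (G b))) (A.algebraMap_mem (ε : ℂ))) (hslit b)
    rw [show Φ.curry b = (g - algebraMap ℂ _ (G b)) * v from
      ContinuousMap.ext fun p ↦ (div_eq_mul_inv _ _).trans (congrArg _ (hv p).symm)]
    exact mul_mem (hsub hg _) hvA
  obtain ⟨u, huA, hu⟩ := exists_mem_eq_integral (μ := volume.comap Subtype.val) hA hΦ
  refine ⟨u, huA, fun p ↦ (hu p).trans ?_⟩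
  simp only [Φ, ContinuousMap.coe_mk, hgG]
  exact integral_subtype_comap hS.measurableSet
    fun b ↦ (G (z p) - G b) / ((z p - b) * (G (z p) - G b) + ε)

theorem norm_integral_div_add_sub_conj_le {G : ℂ → ℂ} {ρ c δ : ℝ} (hc : 0 < c) (hδ : 0 < δ)
    (hG : ContinuousOn G (Metric.closedBall 0 ρ))
    (hmono : ∀ a ∈ Metric.closedBall 0 ρ, ∀ b ∈ Metric.closedBall 0 ρ,
      c * ‖a - b‖ ^ 2 ≤ ((a - b) * (G a - G b)).re) {a : ℂ} (ha : ‖a‖ < ρ) :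
    ‖(∫ b in Metric.closedBall 0 ρ, (G a - G b) / ((a - b) * (G a - G b) + (c * δ ^ 2 : ℝ))) -
      Real.pi * conj a‖ ≤ Real.pi ^ 2 * δ := by
  have ha' : a ∈ Metric.closedBall 0 ρ := mem_closedBall_zero_iff.2 ha.le
  have hne (b : ℂ) (hb : b ∈ Metric.closedBall 0 ρ) :
      (a - b) * (G a - G b) + (c * δ ^ 2 : ℝ) ≠ 0 := fun h ↦ by
    have hre := congrArg re h
    rw [add_re, ofReal_re, zero_re] at hre
    have : 0 ≤ c * ‖a - b‖ ^ 2 := by positivity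
    have : 0 < c * δ ^ 2 := by positivity
    linarith [hmono a ha' b hb]
  have hint : IntegrableOn
      (fun b ↦ (G a - G b) / ((a - b) * (G a - G b) + (c * δ ^ 2 : ℝ))) (Metric.closedBall 0 ρ) :=
    ContinuousOn.integrableOn_compact (isCompact_closedBall 0 ρ)
      (ContinuousOn.div (by fun_prop) (by fun_prop) hne)
  obtain ⟨hkernel, hkernel_integral⟩ := integral_inv_norm_mul_inv_one_add_sq hδ
  have hkernel_sub := hkernel.comp_sub_left a
  rw [← integral_closedBall_sub_inv ha,
    ← integral_sub hint (integrableOn_closedBall_sub_inv a ρ), ← hkernel_integral,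
    ← integral_sub_left_eq_self _ volume a]
  refine (norm_integral_le_of_norm_le hkernel_sub.integrableOn ?_).trans
    (setIntegral_le_integral hkernel_sub (.of_forall fun b ↦ by positivity))
  filter_upwards [ae_restrict_mem Metric.isClosed_closedBall.measurableSet] with b hb
  rcases eq_or_ne a b with rfl | hab
  · simp
  · exact norm_div_add_sub_inv_le hc hδ (sub_ne_zero.2 hab) (hmono a ha' b hb)

-- As `ε → 0` the kernel `(G a - G b) / ((a - b) * (G a - G b) + ε)` tends to `1 / (a - b)`,
-- whose integral over the disc in `b` is `π * conj a`.
theorem star_mem_of_stronglyMonotone (hA : IsClosed (A : Set C(Z, ℂ))) {z g : C(Z, ℂ)}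
    (hz : z ∈ A) (hg : g ∈ A) {G : ℂ → ℂ} (hgG : ∀ p, g p = G (z p)) {ρ c : ℝ}
    (hzρ : ∀ p, ‖z p‖ < ρ) (hG : ContinuousOn G (Metric.closedBall 0 ρ)) (hc : 0 < c)
    (hmono : ∀ a ∈ Metric.closedBall 0 ρ, ∀ b ∈ Metric.closedBall 0 ρ,
      c * ‖a - b‖ ^ 2 ≤ ((a - b) * (G a - G b)).re) :
    star z ∈ A := by
  have hπ : (Real.pi : ℂ) • star z ∈ A := by
    refine hA.closure_subset (Metric.mem_closure_iff.2 fun η hη ↦ ?_)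
    obtain ⟨δ, hδ, hδη⟩ : ∃ δ > 0, Real.pi ^ 2 * δ < η :=
      ⟨η / (2 * Real.pi ^ 2), by positivity, by field_simp; norm_num⟩
    obtain ⟨u, huA, hu⟩ := exists_mem_eq_integral_div_add hA hz hg hgG (isCompact_closedBall 0 ρ)
      (fun p ↦ mem_closedBall_zero_iff.2 (hzρ p).le) hG
      (fun a ha b hb ↦ (by positivity : 0 ≤ c * ‖a - b‖ ^ 2).trans (hmono a ha b hb))
      (by positivity : 0 < c * δ ^ 2)
    refine ⟨u, huA, (ContinuousMap.dist_lt_iff hη).2 fun p ↦ ?_⟩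
    rw [dist_comm, dist_eq_norm, hu]
    exact (norm_integral_div_add_sub_conj_le hc hδ hG hmono (hzρ p)).trans_lt hδη
  simpa only [inv_smul_smul₀ (ofReal_ne_zero.2 Real.pi_ne_zero)] using
    A.smul_mem hπ (Real.pi : ℂ)⁻¹

end StronglyMonotone

section PolynomialConvexity

theorem eq_top_of_star_mem_of_injective {Z : Type*} [TopologicalSpace Z] [CompactSpace Z]
    {A : Subalgebra ℂ C(Z, ℂ)} (hA : IsClosed (A : Set C(Z, ℂ))) {z : C(Z, ℂ)} (hz : z ∈ A)
    (hz_star : star z ∈ A) (hinj : Function.Injective z) : A = ⊤ := by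
  have hadjoin : (StarAlgebra.adjoin ℂ {z}).toSubalgebra ≤ A := by
    rw [StarAlgebra.adjoin_toSubalgebra, Algebra.adjoin_le_iff, Set.star_singleton]
    exact Set.union_subset (Set.singleton_subset_iff.2 hz) (Set.singleton_subset_iff.2 hz_star)
  have hdense := ContinuousMap.starSubalgebra_topologicalClosure_eq_top_of_separatesPoints
    (StarAlgebra.adjoin ℂ {z}) fun p q hpq ↦
      ⟨z, ⟨z, StarAlgebra.self_mem_adjoin_singleton ℂ z, rfl⟩, hinj.ne hpq⟩
  refine eq_top_iff.2 fun f _ ↦ closure_minimal hadjoin hA ?_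
  change f ∈ (StarAlgebra.adjoin ℂ {z}).topologicalClosure
  rw [hdense]
  trivial

/-- Restriction of polynomials on `ℂ²` to continuous functions on `K`. -/
noncomputable def polyRestrict (K : Set (ℂ × ℂ)) : MvPolynomial (Fin 2) ℂ →ₐ[ℂ] C(K, ℂ) :=
  MvPolynomial.aeval fun i ↦
    if i = 0 then ⟨fun p ↦ p.1.1, by fun_prop⟩ else ⟨fun p ↦ p.1.2, by fun_prop⟩

theorem polyRestrict_apply {K : Set (ℂ × ℂ)} (q : MvPolynomial (Fin 2) ℂ) (p : K) :
    polyRestrict K q p = MvPolynomial.eval (fun i ↦ if i = 0 then p.1.1 else p.1.2) q := by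
  induction q using MvPolynomial.induction_on with
  | C a => simp [polyRestrict]
  | add q₁ q₂ h₁ h₂ => simp [h₁, h₂]
  | mul_X q i h =>
    rw [map_mul, map_mul, MvPolynomial.eval_X, ContinuousMap.mul_apply, h]
    fin_cases i <;> simp [polyRestrict]

theorem exists_bezout_of_notMem {K : Set (ℂ × ℂ)} {a : ℂ × ℂ} (ha : a ∉ K) :
    ∃ H₁ H₂ : C(K, ℂ), ∀ p : K, (p.1.1 - a.1) * H₁ p + (p.1.2 - a.2) * H₂ p = 1 := by
  let D (p : K) : ℂ := (p.1.1 - a.1) * conj (p.1.1 - a.1) + (p.1.2 - a.2) * conj (p.1.2 - a.2)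
  have hD : Continuous D := by fun_prop
  have hD0 (p : K) : D p ≠ 0 := fun h ↦ by
    simp only [D, mul_conj, ← ofReal_add, ofReal_eq_zero] at h
    obtain ⟨h₁, h₂⟩ := (add_eq_zero_iff_of_nonneg (normSq_nonneg _) (normSq_nonneg _)).1 h
    rw [normSq_eq_zero, sub_eq_zero] at h₁ h₂
    exact ha (Prod.ext h₁ h₂ ▸ p.2)
  refine ⟨⟨fun p ↦ conj (p.1.1 - a.1) / D p, .div (by fun_prop) hD hD0⟩,
    ⟨fun p ↦ conj (p.1.2 - a.2) / D p, .div (by fun_prop) hD hD0⟩, fun p ↦ ?_⟩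
  simp only [ContinuousMap.coe_mk, mul_div_assoc', ← add_div]
  exact div_self (hD0 p)

/-- The uniform closure `P(K)` of the polynomials in `C(K)`. -/
noncomputable def uniformPolyAlgebra (K : Set (ℂ × ℂ)) [CompactSpace K] : Subalgebra ℂ C(K, ℂ) :=
  (polyRestrict K).range.topologicalClosure

variable {K : Set (ℂ × ℂ)} [CompactSpace K]

theorem isClosed_uniformPolyAlgebra : IsClosed (uniformPolyAlgebra K : Set C(K, ℂ)) :=
  Subalgebra.isClosed_topologicalClosure _

theorem polyRestrict_mem_uniformPolyAlgebra (q : MvPolynomial (Fin 2) ℂ) :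
    polyRestrict K q ∈ uniformPolyAlgebra K :=
  Subalgebra.le_topologicalClosure _ ⟨q, rfl⟩

theorem subset_polyHull2 : K ⊆ polyHull2 K := fun a ha q ↦ by
  have hbdd : BddAbove (Set.range fun p : K ↦ ‖polyRestrict K q p‖) :=
    ⟨_, Set.forall_mem_range.2 (polyRestrict K q).norm_coe_le_norm⟩
  refine le_csSup (hbdd.mono ?_) ⟨a, ha, rfl⟩
  rintro _ ⟨w, hw, rfl⟩
  exact ⟨⟨w, hw⟩, by simp only [polyRestrict_apply]⟩

theorem norm_eval_le_of_mem_polyHull2 {a : ℂ × ℂ} (ha : a ∈ polyHull2 K)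
    (q : MvPolynomial (Fin 2) ℂ) :
    ‖MvPolynomial.eval (fun i ↦ if i = 0 then a.1 else a.2) q‖ ≤ ‖polyRestrict K q‖ := by
  refine (ha q).trans (Real.sSup_le ?_ (norm_nonneg _))
  rintro _ ⟨w, hw, rfl⟩
  simpa only [polyRestrict_apply] using (polyRestrict K q).norm_coe_le_norm ⟨w, hw⟩

theorem polyConvex2_of_uniformPolyAlgebra_eq_top (htop : uniformPolyAlgebra K = ⊤) :
    PolyConvex2 K := by
  refine Set.Subset.antisymm (fun a ha ↦ ?_) subset_polyHull2
  by_contra haK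
  obtain ⟨H₁, H₂, hH⟩ := exists_bezout_of_notMem haK
  have hdense : DenseRange (polyRestrict K) := fun f ↦
    (htop ▸ Algebra.mem_top : f ∈ uniformPolyAlgebra K)
  let u := polyRestrict K (MvPolynomial.X 0 - MvPolynomial.C a.1)
  let v := polyRestrict K (MvPolynomial.X 1 - MvPolynomial.C a.2)
  have hone : u * H₁ + v * H₂ = 1 := ContinuousMap.ext fun p ↦ by
    simpa [u, v, polyRestrict_apply] using hH p
  obtain ⟨⟨q₁, q₂⟩, hq : ‖1 - (u * polyRestrict K q₁ + v * polyRestrict K q₂)‖ < 1⟩ :=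
    (hdense.prodMap hdense).exists_mem_open
      (s := {H : C(K, ℂ) × C(K, ℂ) | ‖1 - (u * H.1 + v * H.2)‖ < 1})
      (isOpen_lt (by fun_prop) continuous_const) ⟨(H₁, H₂), by simp [hone]⟩
  have hle := norm_eval_le_of_mem_polyHull2 ha
    (1 - ((MvPolynomial.X 0 - MvPolynomial.C a.1) * q₁ +
      (MvPolynomial.X 1 - MvPolynomial.C a.2) * q₂))
  refine hq.not_ge ?_
  simpa [u, v] using hle

end PolynomialConvexity

section Taylor

open Asymptotics Topology

theorem isLittleO_pow_succ_of_fderiv_isLittleO {E G : Type*} [NormedAddCommGroup E]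
    [NormedSpace ℝ E] [NormedAddCommGroup G] [NormedSpace ℝ G] {f : E → G} {a : E} {n : ℕ}
    (hf : ∀ᶠ x in 𝓝 a, DifferentiableAt ℝ f x) (ha : f a = 0)
    (hf' : fderiv ℝ f =o[𝓝 a] fun x ↦ ‖x - a‖ ^ n) :
    f =o[𝓝 a] fun x ↦ ‖x - a‖ ^ (n + 1) := by
  refine isLittleO_iff.2 fun c hc ↦ ?_
  obtain ⟨r, hr, hball⟩ :=
    Metric.nhds_basis_closedBall.eventually_iff.1 (hf.and (isLittleO_iff.1 hf' hc))
  filter_upwards [Metric.closedBall_mem_nhds a hr] with x hx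
  have hsub : Metric.closedBall a ‖x - a‖ ⊆ Metric.closedBall a r :=
    Metric.closedBall_subset_closedBall (mem_closedBall_iff_norm.1 hx)
  have hmean := (convex_closedBall a ‖x - a‖).norm_image_sub_le_of_norm_fderiv_le
    (C := c * ‖x - a‖ ^ n) (fun y hy ↦ (hball (hsub hy)).1)
    (fun y hy ↦ (hball (hsub hy)).2.trans (by
      rw [Real.norm_of_nonneg (by positivity)]
      gcongr
      exact mem_closedBall_iff_norm.1 hy))
    (Metric.mem_closedBall_self (norm_nonneg _)) (mem_closedBall_iff_norm.2 le_rfl)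
  rw [ha, sub_zero] at hmean
  rwa [Real.norm_of_nonneg (by positivity), pow_succ, ← mul_assoc]

universe u

theorem eq_zero_of_iteratedFDeriv_zero_eq_zero {E G : Type*} [NormedAddCommGroup E]
    [NormedSpace ℝ E] [NormedAddCommGroup G] [NormedSpace ℝ G] {f : E → G} {a : E}
    (h0 : iteratedFDeriv ℝ 0 f a = 0) : f a = 0 := by
  rw [← norm_eq_zero, ← norm_iteratedFDeriv_zero (𝕜 := ℝ), h0, norm_zero]

theorem iteratedFDeriv_fderiv_eq_zero {E G : Type*} [NormedAddCommGroup E]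
    [NormedSpace ℝ E] [NormedAddCommGroup G] [NormedSpace ℝ G] {f : E → G} {a : E} {k : ℕ}
    (h0 : iteratedFDeriv ℝ (k + 1) f a = 0) : iteratedFDeriv ℝ k (fderiv ℝ f) a = 0 := by
  rw [← norm_eq_zero, norm_iteratedFDeriv_fderiv, h0, norm_zero]

theorem isLittleO_pow_of_iteratedFDeriv_eq_zero {E G : Type u} [NormedAddCommGroup E]
    [NormedSpace ℝ E] [NormedAddCommGroup G] [NormedSpace ℝ G] {f : E → G} {a : E} {n : ℕ}
    (hf : ContDiffAt ℝ n f a) (h0 : ∀ k ≤ n, iteratedFDeriv ℝ k f a = 0) :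
    f =o[𝓝 a] fun x ↦ ‖x - a‖ ^ n := by
  have ha : f a = 0 := eq_zero_of_iteratedFDeriv_zero_eq_zero (h0 0 n.zero_le)
  induction n generalizing G with
  | zero =>
    simpa only [pow_zero, isLittleO_one_iff, ha] using hf.continuousAt.tendsto
  | succ n ih =>
    have hf' : ∀ k ≤ n, iteratedFDeriv ℝ k (fderiv ℝ f) a = 0 := fun k hk ↦
      iteratedFDeriv_fderiv_eq_zero (h0 (k + 1) (by lia))
    refine isLittleO_pow_succ_of_fderiv_isLittleO ?_ ha (ih (hf.fderiv_right le_rfl) hf' ?_)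
    · exact (hf.eventually (by simp)).mono fun x hx ↦ hx.differentiableAt (by simp)
    · exact eq_zero_of_iteratedFDeriv_zero_eq_zero (hf' 0 n.zero_le)

theorem fderiv_isLittleO_pow_of_iteratedFDeriv_eq_zero {E G : Type u} [NormedAddCommGroup E]
    [NormedSpace ℝ E] [NormedAddCommGroup G] [NormedSpace ℝ G] {f : E → G} {a : E} {n : ℕ}
    (hf : ContDiffAt ℝ (n + 1 : ℕ) f a) (h0 : ∀ k ≤ n + 1, iteratedFDeriv ℝ k f a = 0) :
    fderiv ℝ f =o[𝓝 a] fun x ↦ ‖x - a‖ ^ n :=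
  isLittleO_pow_of_iteratedFDeriv_eq_zero (hf.fderiv_right le_rfl) fun k hk ↦
    iteratedFDeriv_fderiv_eq_zero (h0 (k + 1) (by lia))

end Taylor

section Root

open Asymptotics Topology

variable {E : Type*} [NormedAddCommGroup E] [NormedSpace ℝ E]

theorem hasFDerivAt_of_pow_eq {ζ h : E → ℂ} {l : E →L[ℝ] ℂ} {n : ℕ} {z : E}
    (hpow : ∀ z, ζ z ^ (n + 1) = l z ^ (n + 1) + h z) (hζ : DifferentiableAt ℝ ζ z)
    (hh : DifferentiableAt ℝ h z) (hl : l z ≠ 0) (hζ0 : ζ z ≠ 0) :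
    HasFDerivAt ζ (((ζ z / l z) ^ n)⁻¹ • (l + (n + 1 : ℂ)⁻¹ • (l z ^ n)⁻¹ • fderiv ℝ h z)) z := by
  have hpow' : (fun z ↦ ζ z ^ (n + 1)) = (fun z ↦ l z ^ (n + 1)) + h := funext hpow
  have hderiv := hζ.hasFDerivAt.pow (n + 1)
  rw [hpow'] at hderiv
  have heq := hderiv.unique ((l.hasFDerivAt.pow (n + 1)).add hh.hasFDerivAt)
  convert hζ.hasFDerivAt using 1
  ext v
  have hv : (n + 1) * ζ z ^ n * fderiv ℝ ζ z v = (n + 1) * l z ^ n * l v + fderiv ℝ h z v := by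
    simpa using DFunLike.congr_fun heq v
  have hn : (n + 1 : ℂ) ≠ 0 := n.cast_add_one_ne_zero
  have hln := pow_ne_zero n hl
  have hζn := pow_ne_zero n hζ0
  simp only [smul_apply, add_apply, smul_eq_mul, div_pow]
  generalize l z ^ n = L, ζ z ^ n = Z at *
  field_simp
  linear_combination -hv

theorem isBigO_pow_of_antilipschitzWith {l : E →L[ℝ] ℂ} {K : NNReal} (hl : AntilipschitzWith K l)
    (m : ℕ) : (fun z : E ↦ ‖z‖ ^ m) =O[𝓝 0] fun z ↦ l z ^ m := by
  refine (IsBigO.of_bound K (.of_forall fun z ↦ ?_)).pow m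
  simpa using hl.le_mul_dist z 0

theorem tendsto_one_add_div_pow {l : E →L[ℝ] ℂ} {h : E → ℂ} {n : ℕ} {K : NNReal}
    (hl : AntilipschitzWith K l) (hh : ∀ᶠ z in 𝓝 0, DifferentiableAt ℝ h z) (h0 : h 0 = 0)
    (hh' : fderiv ℝ h =o[𝓝 0] fun z ↦ ‖z‖ ^ n) :
    Filter.Tendsto (fun z ↦ 1 + h z / l z ^ (n + 1)) (𝓝 0) (𝓝 1) := by
  have hh_o : h =o[𝓝 0] fun z ↦ ‖z‖ ^ (n + 1) := by
    simpa only [sub_zero] using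
      isLittleO_pow_succ_of_fderiv_isLittleO hh h0 (by simpa only [sub_zero] using hh')
  simpa only [add_zero] using ((hh_o.trans_isBigO
    (isBigO_pow_of_antilipschitzWith hl (n + 1))).tendsto_div_nhds_zero).const_add 1

theorem hasFDerivAt_mul_of_tendsto_one (l : E →L[ℝ] ℂ) {s : E → ℂ}
    (hs : Filter.Tendsto s (𝓝 0) (𝓝 1)) : HasFDerivAt (fun z ↦ l z * s z) l 0 := by
  rw [hasFDerivAt_iff_isLittleO_nhds_zero, ← isLittleO_norm_right]
  have hs1 : (fun z ↦ s z - 1) =o[𝓝 0] fun _ ↦ (1 : ℝ) :=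
    (isLittleO_one_iff ℝ).2 (by simpa only [sub_self] using hs.sub_const 1)
  refine ((l.isBigO_id (𝓝 0)).norm_right.mul_isLittleO hs1).congr (fun z ↦ ?_) fun z ↦ mul_one _
  simp only [map_zero, zero_add, zero_mul, sub_zero, mul_sub, mul_one]

theorem exists_root_hasStrictFDerivAt {l : E →L[ℝ] ℂ} {h : E → ℂ} {n : ℕ} {K : NNReal}
    (hl : AntilipschitzWith K l) (hh : ∀ᶠ z in 𝓝 0, DifferentiableAt ℝ h z) (h0 : h 0 = 0)
    (hh' : fderiv ℝ h =o[𝓝 0] fun z ↦ ‖z‖ ^ n) :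
    ∃ ζ : E → ℂ, ζ 0 = 0 ∧ HasStrictFDerivAt ζ l 0 ∧
      ∀ z, ζ z ^ (n + 1) = l z ^ (n + 1) + h z := by
  have hl0 {z : E} (hz : l z = 0) : z = 0 := hl.injective (hz.trans (map_zero l).symm)
  have hq := tendsto_one_add_div_pow hl hh h0 hh'
  set s : E → ℂ := fun z ↦ (1 + h z / l z ^ (n + 1)) ^ ((n + 1 : ℕ) : ℂ)⁻¹
  have hs : Filter.Tendsto s (𝓝 0) (𝓝 1) := by
    have := (continuousAt_cpow_const (b := ((n + 1 : ℕ) : ℂ)⁻¹) one_mem_slitPlane).tendsto.comp hq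
    rwa [one_cpow] at this
  have hpow (z : E) : (l z * s z) ^ (n + 1) = l z ^ (n + 1) + h z := by
    rw [mul_pow, cpow_nat_inv_pow _ n.succ_ne_zero]
    by_cases hz : l z = 0
    · simp [hl0 hz, h0]
    · field_simp
  refine ⟨fun z ↦ l z * s z, by simp, ?_, hpow⟩
  set ζ' : E → E →L[ℝ] ℂ := fun z ↦
    (s z ^ n)⁻¹ • (l + (n + 1 : ℂ)⁻¹ • (l z ^ n)⁻¹ • fderiv ℝ h z)
  have hζ' : Filter.Tendsto ζ' (𝓝 0) (𝓝 l) := by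
    have hh'0 : Filter.Tendsto (fun z ↦ (l z ^ n)⁻¹ • fderiv ℝ h z) (𝓝 0) (𝓝 0) :=
      (hh'.trans_isBigO (isBigO_pow_of_antilipschitzWith hl n)).tendsto_inv_smul_nhds_zero
    have := ((hs.pow n).inv₀ (by simp)).smul ((hh'0.const_smul (n + 1 : ℂ)⁻¹).const_add l)
    rwa [smul_zero (A := E →L[ℝ] ℂ) (n + 1 : ℂ)⁻¹, add_zero, one_pow, inv_one, one_smul] at this
  have hζ'0 : ζ' 0 = l := eq_of_tendsto_nhds hζ'
  suffices hder : ∀ᶠ z in 𝓝 0, HasFDerivAt (fun z ↦ l z * s z) (ζ' z) z by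
    simpa only [hζ'0] using
      hasStrictFDerivAt_of_hasFDerivAt_of_continuousAt hder (continuousAt_of_tendsto_nhds hζ')
  filter_upwards [hh, hq.eventually (isOpen_slitPlane.mem_nhds one_mem_slitPlane)] with z hhz hqz
  obtain rfl | hz := eq_or_ne z 0
  · rw [hζ'0]
    exact hasFDerivAt_mul_of_tendsto_one l hs
  · have hlz : l z ≠ 0 := mt hl0 hz
    have hsz : s z ≠ 0 := by simp [s, cpow_eq_zero_iff, slitPlane_ne_zero hqz]
    have hsd : DifferentiableAt ℝ s z := by
      refine (((hasStrictDerivAt_cpow_const hqz).hasDerivAt.differentiableAt).restrictScalars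
        ℝ).comp z (f := fun z ↦ 1 + h z / l z ^ (n + 1)) ?_
      simp only [div_eq_mul_inv]
      exact (hhz.mul ((l.differentiableAt.pow (n + 1)).inv (pow_ne_zero _ hlz))).const_add 1
    have := hasFDerivAt_of_pow_eq hpow (l.differentiableAt.mul hsd) hhz hlz (mul_ne_zero hlz hsz)
    simpa only [mul_div_cancel_left₀ _ hlz] using this

end Root

section SheetQuad

/-- The quadratic form `z w + α z² + β w²`, evaluated on the pairs `(z, w)` formed by a point `z`
and a cube root `w` of `z³ + 3t p_t(z, z̄) = (z + t z̄)³`; it is used to tell the three cube roots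
apart. -/
def sheetQuad (α β : ℝ) (z w : ℂ) : ℂ := z * w + α * z ^ 2 + β * w ^ 2

/-- The primitive cube root of unity `e^{2πi/3}`. -/
noncomputable def cubeRootOfUnity : ℂ := exp ((2 * Real.pi / 3 : ℝ) * I)

/-- A constant `c` such that `c * ‖z‖ ^ 2 ≤ Im (u * sheetQuad α β z w)` for every `z`, where
`w = κ * (z + t * conj z)`. On this `w`, the imaginary part is a real quadratic form in `z`; the
first term of the definition is its coefficient of `‖z‖ ^ 2` and the second one bounds its part of
type `Im (a * z ^ 2)`. -/
noncomputable def sheetGap (t α β : ℝ) (u κ : ℂ) : ℝ :=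
  t * (u * (κ + 2 * β * κ ^ 2)).im -
    ‖u * (κ + α + β * κ ^ 2) - conj (u * κ ^ 2) * (β * t ^ 2)‖

variable {t α β θ : ℝ}

theorem isPrimitiveRoot_cubeRootOfUnity : IsPrimitiveRoot cubeRootOfUnity 3 := by
  convert isPrimitiveRoot_exp 3 three_ne_zero using 1
  rw [cubeRootOfUnity]
  push_cast
  ring_nf

theorem conj_cubeRootOfUnity : conj cubeRootOfUnity = cubeRootOfUnity ^ 2 := by
  have hω := isPrimitiveRoot_cubeRootOfUnity
  rw [← inv_eq_conj (hω.norm'_eq_one three_ne_zero)]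
  exact inv_eq_of_mul_eq_one_right (by rw [← pow_succ', hω.pow_eq_one])

theorem conj_sheetQuad (z w : ℂ) : conj (sheetQuad α β z w) = sheetQuad α β (conj z) (conj w) := by
  simp [sheetQuad]

theorem sheetGap_mul_le_im_mul_sheetQuad (u κ z : ℂ) :
    sheetGap t α β u κ * ‖z‖ ^ 2 ≤ (u * sheetQuad α β z (κ * (z + t * conj z))).im := by
  set c := u * (κ + α + β * κ ^ 2) - conj (u * κ ^ 2) * (β * t ^ 2) with hc
  have hz : z * conj z = (‖z‖ ^ 2 : ℝ) := by rw [mul_conj, normSq_eq_norm_sq]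
  have hexpand : (u * sheetQuad α β z (κ * (z + t * conj z))).im =
      t * (u * (κ + 2 * β * κ ^ 2)).im * ‖z‖ ^ 2 + (c * z ^ 2).im := by
    have hv : (u * (κ + 2 * β * κ ^ 2) * (t * ‖z‖ ^ 2 : ℝ)).im =
        t * (u * (κ + 2 * β * κ ^ 2)).im * ‖z‖ ^ 2 := by
      rw [im_mul_ofReal]
      ring
    have hd : u * sheetQuad α β z (κ * (z + t * conj z)) =
        u * (κ + 2 * β * κ ^ 2) * (t * ‖z‖ ^ 2 : ℝ) + c * z ^ 2 +
          (conj (u * κ ^ 2) * (β * t ^ 2) * z ^ 2 +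
            conj (conj (u * κ ^ 2) * (β * t ^ 2) * z ^ 2)) := by
      rw [ofReal_mul, ← hz]
      simp only [sheetQuad, hc, map_mul, map_pow, conj_conj, conj_ofReal]
      ring
    rw [hd, add_im, add_im, hv, add_conj, ofReal_im, add_zero]
  have hcz : -(‖c‖ * ‖z‖ ^ 2) ≤ (c * z ^ 2).im := by
    rw [← norm_pow, ← norm_mul]
    exact neg_le_of_abs_le (abs_im_le_norm _)
  rw [hexpand, sheetGap]
  linarith

theorem conj_exp_ofReal_mul_I (x : ℝ) : conj (exp (x * I)) = exp ((-x : ℝ) * I) := by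
  rw [← exp_conj, map_mul, conj_ofReal, conj_I, ofReal_neg, mul_neg, neg_mul]

theorem exists_sheetGap_pos_of_four_thirds_lt_sq (ht : 0 < t) (ht' : 4 / 3 < t ^ 2) :
    ∃ θ ∈ Set.Ioo 0 (Real.pi / 2), ∃ α β : ℝ,
      0 < sheetGap t α β (-conj (exp (θ * I))) 1 ∧
      0 < sheetGap t α β (conj (exp (θ * I))) cubeRootOfUnity := by
  have hsin : 1 < t * Real.sin (Real.pi / 3) := by
    rw [Real.sin_pi_div_three]
    refine lt_of_pow_lt_pow_left₀ 2 (by positivity) ?_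
    rw [mul_pow, div_pow, Real.sq_sqrt (by norm_num)]
    linarith
  refine ⟨Real.pi / 3, ⟨by positivity, by linarith [Real.pi_pos]⟩, 0, 0, ?_⟩
  set g := exp ((Real.pi / 3 : ℝ) * I) with hg_def
  have hg : ‖g‖ = 1 := norm_exp_ofReal_mul_I _
  have hω : conj g * cubeRootOfUnity = g := by
    rw [hg_def, conj_exp_ofReal_mul_I, cubeRootOfUnity, ← exp_add]
    exact congrArg exp (by push_cast; ring)
  have him : g.im = Real.sin (Real.pi / 3) := exp_ofReal_mul_I_im _
  simpa [sheetGap, hω, hg, him] using hsin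

theorem exp_pi_div_six_mul_I : exp ((Real.pi / 6 : ℝ) * I) = ⟨√3 / 2, 1 / 2⟩ :=
  Complex.ext (by rw [exp_ofReal_mul_I_re, Real.cos_pi_div_six])
    (by rw [exp_ofReal_mul_I_im, Real.sin_pi_div_six])

theorem cubeRootOfUnity_eq : cubeRootOfUnity = I * exp ((Real.pi / 6 : ℝ) * I) := by
  have hadd : cubeRootOfUnity = exp (Real.pi / 2 * I) * exp ((Real.pi / 6 : ℝ) * I) := by
    rw [cubeRootOfUnity, ← exp_add]
    exact congrArg exp (by push_cast; ring)
  rw [hadd, exp_pi_div_two_mul_I]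

theorem sheetGap_one_pos (ht : 0 < t) (ht' : 4 * t ^ 4 - 15 * t ^ 2 + 12 < 0) :
    0 < sheetGap t (1 - t ^ 2) 1 (-conj (exp ((Real.pi / 6 : ℝ) * I))) 1 := by
  have hs : √3 ^ 2 = 3 := Real.sq_sqrt (by norm_num)
  have hnorm : ‖(⟨√3 / 2 * (2 * t ^ 2 - 3), 3 / 2⟩ : ℂ)‖ < t * (3 / 2) := by
    refine lt_of_pow_lt_pow_left₀ 2 (by positivity) ?_
    rw [← normSq_eq_norm_sq, normSq_mk]
    linear_combination (3 / 4) * ht' + (2 * t ^ 2 - 3) ^ 2 / 4 * hs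
  rw [sheetGap, sub_pos, exp_pi_div_six_mul_I]
  convert hnorm using 2
  · apply Complex.ext <;> simp [← ofReal_pow] <;> ring
  · simp only [one_div, ofReal_one, mul_one, one_pow, neg_mul, neg_im, mul_im, conj_re, add_im,
      one_im, im_ofNat, add_zero, mul_zero, conj_im, add_re, one_re, re_ofNat, zero_add, neg_neg]
    ring

theorem sheetGap_cubeRootOfUnity_pos {ε : ℝ} (ht : 1 < t) (hε : 0 < ε) :
    0 < sheetGap t (1 - t ^ 2 + ε * (t ^ 2 - 1 / 2)) (1 - ε)
      (conj (exp ((Real.pi / 6 : ℝ) * I))) cubeRootOfUnity := by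
  set g := exp ((Real.pi / 6 : ℝ) * I) with hg
  have hI : g - conj g = I := by
    rw [sub_conj, hg, exp_pi_div_six_mul_I]
    push_cast
    ring
  have hgg : conj g * g = 1 := by rw [conj_mul', hg, norm_exp_ofReal_mul_I, ofReal_one, one_pow]
  have hκ : conj g * cubeRootOfUnity = I := by
    rw [cubeRootOfUnity_eq, ← hg]
    linear_combination I * hgg
  have hκ' : conj g * cubeRootOfUnity ^ 2 = -g := by
    rw [cubeRootOfUnity_eq, ← hg]
    linear_combination I ^ 2 * g * hgg + g * I_sq
  have hnorm : ‖ε * (g - conj g / 2)‖ < t * ε := by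
    have hvec : g - conj g / 2 = ⟨√3 / 4, 3 / 4⟩ := by
      rw [hg, exp_pi_div_six_mul_I]
      apply Complex.ext
      · norm_num
        ring
      · norm_num
    rw [norm_mul, norm_real, Real.norm_of_nonneg hε.le, mul_comm t, hvec]
    refine mul_lt_mul_of_pos_left (lt_of_pow_lt_pow_left₀ 2 (by positivity) ?_) hε
    rw [← normSq_eq_norm_sq, normSq_mk]
    nlinarith [Real.sq_sqrt (zero_le_three (α := ℝ))]
  rw [sheetGap, sub_pos, hκ']
  convert hnorm using 2
  · rw [map_neg]
    push_cast
    linear_combination hκ + (1 - ε) * hκ' - hI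
  · have hc : conj g * (cubeRootOfUnity + 2 * (1 - ε : ℝ) * cubeRootOfUnity ^ 2) =
        I - (2 * (1 - ε) : ℝ) * g := by
      push_cast
      linear_combination hκ + 2 * (1 - ε) * hκ'
    rw [hc, sub_im, I_im, im_ofReal_mul, hg, exp_pi_div_six_mul_I]
    ring

-- At `β = 1` and `α = 1 - t²` the first gap is positive while the second one vanishes; the
-- perturbation by `ε` makes the second one equal to `(t - √3 / 2) * ε`.
theorem exists_sheetGap_pos_of_quartic_neg (ht : 1 < t) (ht' : 4 * t ^ 4 - 15 * t ^ 2 + 12 < 0) :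
    ∃ θ ∈ Set.Ioo 0 (Real.pi / 2), ∃ α β : ℝ,
      0 < sheetGap t α β (-conj (exp (θ * I))) 1 ∧
      0 < sheetGap t α β (conj (exp (θ * I))) cubeRootOfUnity := by
  refine ⟨Real.pi / 6, ⟨by positivity, by linarith [Real.pi_pos]⟩, ?_⟩
  have hcont : Continuous fun ε : ℝ ↦ sheetGap t (1 - t ^ 2 + ε * (t ^ 2 - 1 / 2)) (1 - ε)
      (-conj (exp ((Real.pi / 6 : ℝ) * I))) 1 := by
    unfold sheetGap
    fun_prop
  have hpos := sheetGap_one_pos (by linarith) ht'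
  obtain ⟨ε, hgap, hε⟩ := ((hcont.tendsto' 0 _ (by simp)).eventually_const_lt hpos |>.filter_mono
    nhdsWithin_le_nhds |>.and (self_mem_nhdsWithin (s := Set.Ioi (0 : ℝ)))).exists
  exact ⟨_, _, hgap, sheetGap_cubeRootOfUnity_pos ht hε⟩

theorem sectorGap_eq_min_im (hθ : 0 ≤ Real.cos θ) (x : ℂ) :
    sectorGap θ x = min (-conj (exp (θ * I)) * x).im (-conj (exp (θ * I)) * conj x).im := by
  have him (y : ℂ) : (-conj (exp (θ * I)) * y).im = Real.sin θ * y.re - Real.cos θ * y.im := by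
    rw [neg_mul, neg_im, mul_im, conj_re, conj_im, exp_ofReal_mul_I_re, exp_ofReal_mul_I_im]
    ring
  rw [him, him, conj_re, conj_im, min_sub_sub_left, ← mul_max_of_nonneg _ _ hθ, ← abs_eq_max_neg,
    sectorGap]

theorem sectorGap_conj (θ : ℝ) (x : ℂ) : sectorGap θ (conj x) = sectorGap θ x := by
  rw [sectorGap, conj_re, conj_im, abs_neg, sectorGap]

theorem sectorGap_sheetQuad_ge (hθ : 0 ≤ Real.cos θ) (z : ℂ) :
    sheetGap t α β (-conj (exp (θ * I))) 1 * ‖z‖ ^ 2 ≤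
      sectorGap θ (sheetQuad α β z (z + t * conj z)) := by
  have him := sheetGap_mul_le_im_mul_sheetQuad (t := t) (α := α) (β := β) (-conj (exp (θ * I))) 1
  simp only [one_mul] at him
  rw [sectorGap_eq_min_im hθ]
  refine le_min (him z) ?_
  simpa [conj_sheetQuad] using him (conj z)

theorem sectorGap_sheetQuad_le (hθ : 0 ≤ Real.cos θ) (z : ℂ) :
    sectorGap θ (sheetQuad α β z (cubeRootOfUnity * (z + t * conj z))) ≤
      -(sheetGap t α β (conj (exp (θ * I))) cubeRootOfUnity * ‖z‖ ^ 2) := by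
  rw [sectorGap_eq_min_im hθ, neg_mul, neg_im]
  exact (min_le_left _ _).trans (neg_le_neg (sheetGap_mul_le_im_mul_sheetQuad _ _ z))

theorem one_lt_and_sq_lt_or_quartic_neg (ht : √(15 - √33) / (2 * √2) < t) :
    1 < t ∧ (4 / 3 < t ^ 2 ∨ 4 * t ^ 4 - 15 * t ^ 2 + 12 < 0) := by
  have h33 : √33 ^ 2 = 33 := Real.sq_sqrt (by norm_num)
  have hlt : √33 < 7 := (Real.sqrt_lt' (by norm_num)).2 (by norm_num)
  have hsq : (√(15 - √33) / (2 * √2)) ^ 2 = (15 - √33) / 8 := by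
    rw [div_pow, mul_pow, Real.sq_sqrt (by linarith), Real.sq_sqrt (by norm_num)]
    norm_num
  have ht₀ : 0 < t := lt_of_le_of_lt (by positivity) ht
  have ht_sq : (15 - √33) / 8 < t ^ 2 := by rw [← hsq]; gcongr
  refine ⟨by nlinarith, or_iff_not_imp_left.2 fun h ↦ ?_⟩
  have hfactor : 0 < (t ^ 2 - (15 - √33) / 8) * ((15 + √33) / 8 - t ^ 2) :=
    mul_pos (by linarith) (by linarith [Real.sqrt_nonneg 33])
  linear_combination 4 * hfactor + h33 / 16

theorem exists_sectorGap_sheetQuad (ht : √(15 - √33) / (2 * √2) < t) :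
    ∃ θ ∈ Set.Ioo 0 (Real.pi / 2), ∃ α β c : ℝ, 0 < c ∧ ∀ z,
      c * ‖z‖ ^ 2 ≤ sectorGap θ (sheetQuad α β z (z + t * conj z)) ∧
      ∀ k : Fin 3, k ≠ 0 →
        sectorGap θ (sheetQuad α β z (cubeRootOfUnity ^ (k : ℕ) * (z + t * conj z))) ≤
          -(c * ‖z‖ ^ 2) := by
  obtain ⟨ht₁, ht₂⟩ := one_lt_and_sq_lt_or_quartic_neg ht
  obtain ⟨θ, hθ, α, β, hin, hout⟩ := ht₂.elim
    (exists_sheetGap_pos_of_four_thirds_lt_sq (by linarith))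
    (exists_sheetGap_pos_of_quartic_neg ht₁)
  have hcos : 0 ≤ Real.cos θ := Real.cos_nonneg_of_mem_Icc ⟨by linarith [hθ.1, hθ.2], hθ.2.le⟩
  refine ⟨θ, hθ, α, β, _, lt_min hin hout, fun z ↦ ⟨?_, fun k hk ↦ ?_⟩⟩
  · exact le_trans (by gcongr; exact min_le_left _ _) (sectorGap_sheetQuad_ge hcos z)
  have hle (y : ℂ) (hy : ‖y‖ = ‖z‖) :
      sectorGap θ (sheetQuad α β y (cubeRootOfUnity * (y + t * conj y))) ≤
        -(min (sheetGap t α β (-conj (exp (θ * I))) 1)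
          (sheetGap t α β (conj (exp (θ * I))) cubeRootOfUnity) * ‖z‖ ^ 2) := by
    refine (sectorGap_sheetQuad_le hcos y).trans (neg_le_neg ?_)
    rw [hy]
    gcongr
    exact min_le_right _ _
  fin_cases k
  · exact absurd rfl hk
  · simpa only [pow_one] using hle z rfl
  · rw [← sectorGap_conj]
    simpa [conj_sheetQuad, ← conj_cubeRootOfUnity] using hle (conj z) (norm_conj z)

end SheetQuad

section RootRecovery

open Metric

variable {α β θ c C : ℝ} {n : ℕ} [NeZero n] {ω : ℂ}

theorem sectorGap_le_norm (θ : ℝ) (x : ℂ) : sectorGap θ x ≤ ‖x‖ := by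
  rw [sectorGap_eq_norm_mul_sin]
  exact mul_le_of_le_one_right (norm_nonneg x) (Real.sin_le_one _)

theorem sheetQuad_zero : sheetQuad α β 0 0 = 0 := by simp [sheetQuad]

theorem mem_of_sectorGap_sheetQuad {Z : Type*} [TopologicalSpace Z] [CompactSpace Z]
    {A : Subalgebra ℂ C(Z, ℂ)} (hA : IsClosed (A : Set C(Z, ℂ))) (hω : IsPrimitiveRoot ω n)
    {z ζ : C(Z, ℂ)} (hz : z ∈ A) (hζ : ζ ^ n ∈ A) (hC : ∀ p, ‖ζ p‖ ≤ C * ‖z p‖)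
    (hθ₀ : 0 < θ) (hθ : θ < Real.pi) (hc : 0 < c)
    (hsheets : ∀ p, c * ‖z p‖ ^ 2 ≤ sectorGap θ (sheetQuad α β (z p) (ζ p)) ∧
      ∀ k : Fin n, k ≠ 0 →
        sectorGap θ (sheetQuad α β (z p) (ω ^ (k : ℕ) * ζ p)) ≤ -(c * ‖z p‖ ^ 2)) : ζ ∈ A := by
  have hz₀ (p : Z) (hp : z p = 0) : ζ p = 0 :=
    norm_le_zero_iff.1 (by simpa [hp] using hC p)
  have hpos (p : Z) (hp : z p ≠ 0) : 0 < c * ‖z p‖ ^ 2 := by positivity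
  set f : C(Z × Fin n, ℂ) := z.comp ContinuousMap.fst * coverRoot n ω ζ +
    (α : ℂ) • z.comp ContinuousMap.fst ^ 2 + (β : ℂ) • coverRoot n ω ζ ^ 2
  have hf (p : Z) (k : Fin n) : f (p, k) = sheetQuad α β (z p) (ω ^ (k : ℕ) * ζ p) := rfl
  have hfst := comp_fst_mem_coverAlgebra (ω := ω) (ζ := ζ) (n := n) hz
  have hroot := coverRoot_mem_coverAlgebra (A := A) (ω := ω) (ζ := ζ) (n := n)
  refine mem_of_sector_separates_sheets hA hω hζ (f := f) (C := C ^ 2 / c)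
    (add_mem (add_mem (mul_mem hfst hroot) (Subalgebra.smul_mem _ (pow_mem hfst 2) _))
      (Subalgebra.smul_mem _ (pow_mem hroot 2) _)) hθ₀.le hθ (fun p ↦ ⟨?_, ?_⟩) fun p k hk ↦ ?_
  · rw [hf, Fin.val_zero, pow_zero, one_mul]
    by_cases hp : z p = 0
    · simpa [hp, hz₀ p hp, sheetQuad_zero] using hθ₀
    · exact abs_arg_lt_of_sectorGap_pos hθ₀.le ((hpos p hp).trans_le (hsheets p).1)
  · rw [hf, Fin.val_zero, pow_zero, one_mul]
    calc ‖ζ p‖ ^ 2 ≤ (C * ‖z p‖) ^ 2 := by gcongr; exact hC p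
      _ = C ^ 2 / c * (c * ‖z p‖ ^ 2) := by field_simp
      _ ≤ C ^ 2 / c * ‖sheetQuad α β (z p) (ζ p)‖ := by
        gcongr
        exact (hsheets p).1.trans (sectorGap_le_norm θ _)
  · rw [hf]
    by_cases hp : z p = 0
    · exact Or.inl (by rw [hp, hz₀ p hp, mul_zero, sheetQuad_zero])
    · exact Or.inr (lt_abs_arg_of_sectorGap_neg hθ.le
        (((hsheets p).2 k hk).trans_lt (neg_lt_zero.2 (hpos p hp))))

theorem polyConvex2_of_sectorGap_sheetQuad {K : Set (ℂ × ℂ)} [CompactSpace K]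
    (hK : Set.InjOn Prod.fst K) {ρ : ℝ} (hKρ : ∀ p ∈ K, ‖p.1‖ < ρ) (hω : IsPrimitiveRoot ω n)
    {ζ : ℂ → ℂ} (hζ : ContinuousOn ζ (closedBall 0 ρ)) (P : MvPolynomial (Fin 2) ℂ)
    (hP : ∀ p ∈ K, ζ p.1 ^ n = MvPolynomial.eval (fun i ↦ if i = 0 then p.1 else p.2) P)
    (hC : ∀ z ∈ closedBall 0 ρ, ‖ζ z‖ ≤ C * ‖z‖)
    (hθ₀ : 0 < θ) (hθ : θ < Real.pi) (hc : 0 < c)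
    (hsheets : ∀ z ∈ closedBall 0 ρ, c * ‖z‖ ^ 2 ≤ sectorGap θ (sheetQuad α β z (ζ z)) ∧
      ∀ k : Fin n, k ≠ 0 →
        sectorGap θ (sheetQuad α β z (ω ^ (k : ℕ) * ζ z)) ≤ -(c * ‖z‖ ^ 2)) {m : ℝ} (hm : 0 < m)
    (hmono : ∀ a ∈ closedBall 0 ρ, ∀ b ∈ closedBall 0 ρ,
      m * ‖a - b‖ ^ 2 ≤ ((a - b) * ((ζ a - a) - (ζ b - b))).re) : PolyConvex2 K := by
  have hball (p : K) : p.1.1 ∈ closedBall (0 : ℂ) ρ := mem_closedBall_zero_iff.2 (hKρ p p.2).le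
  have hA := isClosed_uniformPolyAlgebra (K := K)
  let z : C(K, ℂ) := ⟨fun p ↦ p.1.1, by fun_prop⟩
  let ζK : C(K, ℂ) := ⟨fun p ↦ ζ p.1.1, hζ.comp_continuous (by fun_prop) hball⟩
  have hz : polyRestrict K (MvPolynomial.X 0) = z := ContinuousMap.ext fun p ↦ by
    rw [polyRestrict_apply, MvPolynomial.eval_X]
    exact if_pos rfl
  have hpow : polyRestrict K P = ζK ^ n := ContinuousMap.ext fun p ↦ by
    rw [polyRestrict_apply]
    exact (hP p p.2).symm
  have hzA : z ∈ uniformPolyAlgebra K := hz ▸ polyRestrict_mem_uniformPolyAlgebra _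
  have hζA : ζK ∈ uniformPolyAlgebra K :=
    mem_of_sectorGap_sheetQuad hA hω hzA (hpow ▸ polyRestrict_mem_uniformPolyAlgebra P)
      (fun p ↦ hC _ (hball p)) hθ₀ hθ hc fun p ↦ hsheets _ (hball p)
  have hstar : star z ∈ uniformPolyAlgebra K :=
    star_mem_of_stronglyMonotone hA hzA (sub_mem hζA hzA) (G := fun a ↦ ζ a - a)
      (fun p ↦ rfl) (fun p ↦ hKρ p p.2) (hζ.sub continuousOn_id) hm hmono
  exact polyConvex2_of_uniformPolyAlgebra_eq_top
    (eq_top_of_star_mem_of_injective hA hzA hstar fun p q hpq ↦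
      Subtype.ext (hK p.2 q.2 hpq))

end RootRecovery

section LocalEstimates

open Asymptotics Filter Topology Metric

variable {ζ : ℂ → ℂ} {l : ℂ →L[ℝ] ℂ}

theorem sheetQuad_sub_isLittleO (α β : ℝ) (κ : ℂ) (hζ : HasFDerivAt ζ l 0) (hζ₀ : ζ 0 = 0) :
    (fun z ↦ sheetQuad α β z (κ * ζ z) - sheetQuad α β z (κ * l z)) =o[𝓝 0] fun z ↦ ‖z‖ ^ 2 := by
  have hsub : (fun z ↦ ζ z - l z) =o[𝓝 0] fun z ↦ ‖z‖ := by
    simpa [hζ₀] using hζ.isLittleO.norm_right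
  have hO : (fun z ↦ κ * z + β * κ ^ 2 * (ζ z + l z)) =O[𝓝 0] fun z ↦ ‖z‖ := by
    have hl : (fun z ↦ l z) =O[𝓝 0] fun z ↦ ‖z‖ := (l.isBigO_id _).norm_right
    have hζO : ζ =O[𝓝 0] fun z ↦ ‖z‖ := by simpa [hζ₀] using hζ.isBigO_sub.norm_right
    exact ((isBigO_refl _ _).norm_right.const_mul_left κ).add ((hζO.add hl).const_mul_left _)
  refine (hsub.mul_isBigO hO).congr (fun z ↦ ?_) fun z ↦ (pow_two ‖z‖).symm
  rw [sheetQuad, sheetQuad]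
  ring

theorem eventually_abs_sectorGap_sub_le (α β θ : ℝ) (κ : ℂ) (hζ : HasFDerivAt ζ l 0)
    (hζ₀ : ζ 0 = 0) {ε : ℝ} (hε : 0 < ε) :
    ∀ᶠ z in 𝓝 0, |sectorGap θ (sheetQuad α β z (κ * ζ z)) -
      sectorGap θ (sheetQuad α β z (κ * l z))| ≤ ε * ‖z‖ ^ 2 := by
  filter_upwards [(sheetQuad_sub_isLittleO α β κ hζ hζ₀).bound (half_pos hε)] with z hz
  rw [norm_pow, norm_norm] at hz
  linarith [abs_sectorGap_sub_le θ (sheetQuad α β z (κ * ζ z)) (sheetQuad α β z (κ * l z))]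

theorem exists_mem_nhds_mul_norm_sub_sq_le_re {G : ℂ → ℂ} {a₀ : ℂ} {c m : ℝ}
    (hG : HasStrictFDerivAt G l a₀) (hl : ∀ v, c * ‖v‖ ^ 2 ≤ (v * l v).re) (hm : m < c) :
    ∃ s ∈ 𝓝 a₀, ∀ a ∈ s, ∀ b ∈ s, m * ‖a - b‖ ^ 2 ≤ ((a - b) * (G a - G b)).re := by
  refine eventually_prod_self_iff.1 ?_
  rw [← nhds_prod_eq]
  filter_upwards [hG.isLittleO.bound (sub_pos.2 hm)] with ⟨a, b⟩ hab
  have hre : -((c - m) * ‖a - b‖ ^ 2) ≤ ((a - b) * (G a - G b - l (a - b))).re := by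
    refine neg_le_of_abs_le ((abs_re_le_norm _).trans ?_)
    rw [norm_mul, pow_two, mul_left_comm]
    gcongr
  rw [mul_sub, sub_re] at hre
  linarith [hl (a - b)]

theorem eventually_sectorGap_sheetQuad {α β θ c : ℝ} {n : ℕ} [NeZero n] {ω : ℂ}
    (hζ : HasFDerivAt ζ l 0) (hζ₀ : ζ 0 = 0) (hc : 0 < c)
    (hl : ∀ z, c * ‖z‖ ^ 2 ≤ sectorGap θ (sheetQuad α β z (l z)) ∧ ∀ k : Fin n, k ≠ 0 →
      sectorGap θ (sheetQuad α β z (ω ^ (k : ℕ) * l z)) ≤ -(c * ‖z‖ ^ 2)) :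
    ∀ᶠ z in 𝓝 0, c / 2 * ‖z‖ ^ 2 ≤ sectorGap θ (sheetQuad α β z (ζ z)) ∧ ∀ k : Fin n, k ≠ 0 →
      sectorGap θ (sheetQuad α β z (ω ^ (k : ℕ) * ζ z)) ≤ -(c / 2 * ‖z‖ ^ 2) := by
  have hclose (k : Fin n) :=
    eventually_abs_sectorGap_sub_le α β θ (ω ^ (k : ℕ)) hζ hζ₀ (half_pos hc)
  filter_upwards [eventually_all.2 hclose] with z hz
  refine ⟨?_, fun k hk ↦ ?_⟩
  · have h₀ := hz 0
    rw [Fin.val_zero, pow_zero, one_mul, one_mul] at h₀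
    linarith [(hl z).1, (abs_le.1 h₀).1]
  · linarith [(hl z).2 k hk, (abs_le.1 (hz k)).2]

end LocalEstimates

section Surface

open Asymptotics Filter Topology Metric

variable {t r : ℝ} {U : Set ℂ} {F : ℂ → ℂ}

/-- The function `p_t(z, z̄) + F(z)`, whose graph over `U` is `M_t`. -/
noncomputable def surfaceFun (t : ℝ) (F : ℂ → ℂ) (z : ℂ) : ℂ :=
  z ^ 2 * conj z + t * z * conj z ^ 2 + (t ^ 2 / 3) * conj z ^ 3 + F z

/-- The real-linear map `z ↦ z + t z̄`, which is a cube root of `z³ + 3t p_t(z, z̄)`. -/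
noncomputable def leadingRoot (t : ℝ) : ℂ →L[ℝ] ℂ :=
  ContinuousLinearMap.id ℝ ℂ + t • (conjCLE : ℂ →L[ℝ] ℂ)

theorem leadingRoot_apply (t : ℝ) (z : ℂ) : leadingRoot t z = z + t * conj z := by
  simp [leadingRoot]

theorem antilipschitzWith_leadingRoot (ht : 1 < t) :
    AntilipschitzWith (Real.toNNReal (t - 1)⁻¹) (leadingRoot t) := by
  refine AddMonoidHomClass.antilipschitz_of_bound _ fun z ↦ ?_
  have hsub : t * ‖z‖ - ‖z‖ ≤ ‖leadingRoot t z‖ := by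
    rw [leadingRoot_apply, add_comm]
    simpa [abs_of_pos (one_pos.trans ht)] using norm_sub_le_norm_add (t * conj z) z
  rw [Real.coe_toNNReal _ (inv_nonneg.2 (sub_nonneg.2 ht.le)), ← div_eq_inv_mul,
    le_div_iff₀ (sub_pos.2 ht)]
  linarith

theorem le_re_mul_leadingRoot_sub (t : ℝ) (v : ℂ) :
    t * ‖v‖ ^ 2 ≤ (v * (leadingRoot t - ContinuousLinearMap.id ℝ ℂ) v).re := by
  have hv : v * (leadingRoot t - ContinuousLinearMap.id ℝ ℂ) v = (t * ‖v‖ ^ 2 : ℝ) := by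
    rw [sub_apply, leadingRoot_apply, ContinuousLinearMap.id_apply, add_sub_cancel_left,
      mul_left_comm, mul_conj, normSq_eq_norm_sq, ofReal_mul]
  rw [hv, ofReal_re]

theorem leadingRoot_pow_three_add (t : ℝ) (F : ℂ → ℂ) (z : ℂ) :
    leadingRoot t z ^ 3 + 3 * t * F z = z ^ 3 + 3 * t * surfaceFun t F z := by
  rw [leadingRoot_apply, surfaceFun]
  ring

theorem Mset_eq_graphOn (t : ℝ) (U : Set ℂ) (F : ℂ → ℂ) :
    Mset t U F = U.graphOn (surfaceFun t F) :=
  Set.ext fun _ ↦ exists_congr fun _ ↦ and_congr_right fun _ ↦ eq_comm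

theorem norm_fst_le_of_mem_eClosedBall (hr : 0 ≤ r) {p : ℂ × ℂ} (hp : p ∈ eClosedBall r) :
    ‖p.1‖ ≤ r :=
  le_of_sq_le_sq ((le_add_of_nonneg_right (sq_nonneg _)).trans hp) hr

theorem isCompact_graphOn_inter_eClosedBall {f : ℂ → ℂ} (hr : 0 ≤ r) (hU : closedBall 0 r ⊆ U)
    (hf : ContinuousOn f (closedBall 0 r)) : IsCompact (U.graphOn f ∩ eClosedBall r) := by
  have hclosed : IsClosed (closedBall 0 r ∩ (fun z ↦ ‖z‖ ^ 2 + ‖f z‖ ^ 2) ⁻¹' Set.Iic (r ^ 2)) :=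
    ((continuous_norm.pow 2).continuousOn.add (hf.norm.pow 2)).preimage_isClosed_of_isClosed
      isClosed_closedBall isClosed_Iic
  have himage : U.graphOn f ∩ eClosedBall r =
      (closedBall 0 r ∩ (fun z ↦ ‖z‖ ^ 2 + ‖f z‖ ^ 2) ⁻¹' Set.Iic (r ^ 2)).graphOn f := by
    ext p
    constructor
    · rintro ⟨⟨z, -, rfl⟩, hz⟩
      exact ⟨z, ⟨mem_closedBall_zero_iff.2 (norm_fst_le_of_mem_eClosedBall hr hz), hz⟩, rfl⟩
    · rintro ⟨z, ⟨hz, hz'⟩, rfl⟩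
      exact ⟨⟨z, hU hz, rfl⟩, hz'⟩
  rw [himage]
  exact ((isCompact_closedBall 0 r).of_isClosed_subset hclosed
    Set.inter_subset_left).image_of_continuousOn
      (continuousOn_id.prodMk (hf.mono Set.inter_subset_left))

theorem exists_root_surfaceFun (ht : 1 < t) (hF₀ : F 0 = 0)
    (hF : ∀ᶠ z in 𝓝 0, DifferentiableAt ℝ F z) (hF' : fderiv ℝ F =o[𝓝 0] fun z ↦ ‖z‖ ^ 2) :
    ∃ ζ : ℂ → ℂ, ζ 0 = 0 ∧ HasStrictFDerivAt ζ (leadingRoot t) 0 ∧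
      ∀ z, ζ z ^ 3 = z ^ 3 + 3 * t * surfaceFun t F z := by
  simp_rw [← leadingRoot_pow_three_add]
  refine exists_root_hasStrictFDerivAt (h := fun z ↦ 3 * t * F z) (n := 2)
    (antilipschitzWith_leadingRoot ht) (hF.mono fun z hz ↦ hz.const_mul _) (by simp [hF₀]) ?_
  have hderiv : fderiv ℝ (fun z ↦ 3 * t * F z) =ᶠ[𝓝 0] fun z ↦ (3 * t : ℂ) • fderiv ℝ F z :=
    hF.mono fun z hz ↦ fderiv_const_mul hz _
  exact hderiv.trans_isLittleO (hF'.const_smul_left (3 * t : ℂ))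

theorem continuousOn_surfaceFun {s : Set ℂ} (hF : ContinuousOn F s) :
    ContinuousOn (surfaceFun t F) s := by
  unfold surfaceFun
  fun_prop

end Surface

open Filter Topology Asymptotics Metric in
theorem stmt_10_general {t : ℝ} (ht : √(15 - √33) / (2 * √2) < t) {U : Set ℂ} (hU : U ∈ 𝓝 0)
    {F : ℂ → ℂ} (hF₀ : F 0 = 0) (hF : ∀ᶠ z in 𝓝 0, DifferentiableAt ℝ F z)
    (hF' : fderiv ℝ F =o[𝓝 0] fun z ↦ ‖z‖ ^ 2) :
    ∃ r > (0 : ℝ), PolyConvex2 (Mset t U F ∩ eClosedBall r) := by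
  have ht₁ := (one_lt_and_sq_lt_or_quartic_neg ht).1
  have ht₀ := one_pos.trans ht₁
  obtain ⟨θ, hθ, α, β, c, hc, hsheets⟩ := exists_sectorGap_sheetQuad ht
  obtain ⟨ζ, hζ₀, hζ, hpow⟩ := exists_root_surfaceFun ht₁ hF₀ hF hF'
  simp only [← leadingRoot_apply] at hsheets
  obtain ⟨L, s, hs, hLip⟩ := hζ.exists_lipschitzOnWith
  obtain ⟨s', hs', hmono⟩ := exists_mem_nhds_mul_norm_sub_sq_le_re
    (hζ.sub (hasStrictFDerivAt_id 0)) (le_re_mul_leadingRoot_sub t) (half_lt_self ht₀)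
  obtain ⟨ρ, hρ, hball⟩ := nhds_basis_closedBall.eventually_iff.1 <|
    (eventually_sectorGap_sheetQuad hζ.hasFDerivAt hζ₀ hc hsheets).and <|
      (eventually_mem_set.2 hs).and <| (eventually_mem_set.2 hs').and <| hF.and hU
  have hsub : closedBall (0 : ℂ) (ρ / 2) ⊆ closedBall 0 ρ :=
    closedBall_subset_closedBall (half_le_self hρ.le)
  have hK := isCompact_graphOn_inter_eClosedBall (half_pos hρ).le
    (fun z hz ↦ (hball (hsub hz)).2.2.2.2) <| continuousOn_surfaceFun (t := t)
      fun z hz ↦ (hball (hsub hz)).2.2.2.1.continuousAt.continuousWithinAt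
  have := isCompact_iff_compactSpace.1 hK
  refine ⟨ρ / 2, half_pos hρ, ?_⟩
  rw [Mset_eq_graphOn]
  refine polyConvex2_of_sectorGap_sheetQuad (C := L)
    (Set.fst_injOn_graph.mono Set.inter_subset_left)
    (fun p hp ↦ (norm_fst_le_of_mem_eClosedBall (half_pos hρ).le hp.2).trans_lt (half_lt_self hρ))
    isPrimitiveRoot_cubeRootOfUnity (hLip.continuousOn.mono fun z hz ↦ (hball hz).2.1)
    (MvPolynomial.X 0 ^ 3 + MvPolynomial.C (3 * t : ℂ) * MvPolynomial.X 1) ?_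
    (fun z hz ↦ ?_) hθ.1 (hθ.2.trans (half_lt_self Real.pi_pos)) (half_pos hc)
    (fun z hz ↦ (hball hz).1) (half_pos ht₀)
    fun a ha b hb ↦ hmono a (hball ha).2.2.1 b (hball hb).2.2.1
  · rintro _ ⟨⟨z, -, rfl⟩, -⟩
    simp [hpow]
  · simpa [hζ₀] using hLip.norm_sub_le (hball hz).2.1 (mem_of_mem_nhds hs)

/-- for `t > √(15 − √33)/(2√2)` and any `C^∞`-smooth `F` on a neighbourhood
`U` of `0` whose derivatives of all orders `≤ 3` vanish at `0` (so `F(z) = o(|z|³)`),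
the surface `M_t` is locally polynomially convex at the origin. -/
theorem stmt_10 (t : ℝ) (ht : Real.sqrt (15 - Real.sqrt 33) / (2 * Real.sqrt 2) < t)
    (U : Set ℂ) (hU : IsOpen U) (h0U : (0 : ℂ) ∈ U) (F : ℂ → ℂ)
    (hF : ContDiffOn ℝ (⊤ : ℕ∞) F U)
    (hders : ∀ k : ℕ, k ≤ 3 → iteratedFDerivWithin ℝ k F U 0 = 0) :
    ∃ r > (0 : ℝ), PolyConvex2 (Mset t U F ∩ eClosedBall r) := by
  have hF_at : ContDiffAt ℝ 3 F 0 := (hF.contDiffAt (hU.mem_nhds h0U)).of_le ENat.LEInfty.out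
  simp only [iteratedFDerivWithin_of_isOpen _ hU h0U] at hders
  exact stmt_10_general ht (hU.mem_nhds h0U)
    (eq_zero_of_iteratedFDeriv_zero_eq_zero (hders 0 (by norm_num)))
    ((hF_at.eventually (by simp)).mono fun z hz ↦ hz.differentiableAt (by simp))
    (by simpa only [sub_zero] using fderiv_isLittleO_pow_of_iteratedFDeriv_eq_zero hF_at hders)
end
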